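/- Let n ≥ 2 and let lambda = (lambda_1 > ... > lambda_n > 0) be a strict partition (a regular dominant weight of type C_n). Then in the ring Z[t][x_1^{±1},...,x_n^{±1}] the following identity holds: the sum over all admissible pairs (w,T) in A(lambda) of t^{(l(w)+l(wT)-|T|)/2} (1-t)^{|T|} x^{w(mu(T))} equals the sum over all fillings sigma in F(lambda) of t^{N(sigma)} (1-t)^{des(sigma)} x^{ct(sigma)}, where x^{(c_1,...,c_n)} := x_1^{c_1}...x_n^{c_n}. (The left-hand side is Ram's version of Schwer's formula for the type C_n Hall-Littlewood polynomial P_lambda(x;t), so this is the tableau formula P_lambda(x;t) = Sum_{sigma in F(lambda)} t^{N(sigma)} (1-t)^{des(sigma)} x^{ct(sigma)}.) -/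

import Mathlib

/-!
The theorem compresses a sum over chains of signed permutations to a sum over fillings by columns.

**Removing the affine reflections.**  Put `ω_k = ε_1 + ⋯ + ε_k`, so that `λ` is the sum of the
weights `ω_k` of its columns.  The level of a root `β` of the block `Γ(k)` in the chain is
`⟨ν, β^∨⟩` plus a contribution of the block, where `ν` is the sum of the weights `ω` of the preceding
blocks; in the first half `Γ'_2 ⋯ Γ'_k` of the block this contribution is `1 = ⟨ω_k/2, β^∨⟩`, and in
the second half `Γ_1(k) ⋯ Γ_k(k)` it is `⟨ω_k, β^∨⟩`.  After conjugation by the corresponding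
monomials the affine reflections become linear, and the left-hand side is an iterated sum over
decreasing chains with a factor `x^{w ω_k / 2}` in front of each half block (`block_step`,
`Dh_eq_EE`).  These factors depend only on the first `k` entries of the window, and they are the
contributions of the columns `C'_{i,2}` and `C_{i,1}` to `x^{ct(σ)}`.

**The end of the chain.**  The second half of the last block `Γ(n)` is
`(1,-1), (1,-2), (2,-2), (1,-3), …, (n,-n)`.  Summation over one of its reflections removes one pair
from `ℓ_-`, so the sum of `t^ℓ` over this part is `t^{ℓ_+}` (`Dn_phi`).  This accounts for the summand
`ℓ_+(C_1)` of `N(σ)` and for the missing columns of `C^1`.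

**Compression.**  The operator `Dn` sums over the chains that start at a given window; its adjoint
`Up` sums over the chains that end at a given window (`Dn_Up`).  Apply `Up` for one segment `Γ'_j` or
`Γ_j(k)` to the indicator function of the windows whose first `k` entries form a column `D`.  The
value at a window `v` depends only on the column `C` formed by the first `k` entries of `v`: it is
`t^{N(D,C)} (1-t)^{des(D,C)}` if `D`, `C` satisfy the conditions on adjacent columns of a filling, and
`0` otherwise (`lump_P`, `lump_U`).  For a reflection `(r,-j)` this rests on the length formula
`len_negSwap`; for the reflections `(j,-(k+1)), …, (j,-n), (j,-j), (j,n), …, (j,k+1)` it rests on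
telescoping sums over the intermediate entries in position `j` (`Up_L3`, `Up_L2`, `Up_L1`).  Going
through the segments from left to right, the heights being weakly increasing, one replaces the sum
over windows by a sum over lists of columns (`compress_total`).  Such lists with nonzero weight are
exactly the fillings in `F(λ)` (`mem_FSet`, `sum_cols_eq`).
-/

open scoped BigOperators

namespace HL

/-! ### The order `≺` on nonzero integers in `[-n,n]`:
`1 ≺ 2 ≺ ... ≺ n ≺ -n ≺ -(n-1) ≺ ... ≺ -1`. -/

def slt (a b : ℤ) : Prop :=
  (0 < a ∧ b < 0) ∨ (0 < a ∧ 0 < b ∧ a < b) ∨ (a < 0 ∧ b < 0 ∧ a < b)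

instance slt.dec (a b : ℤ) : Decidable (slt a b) := by unfold slt; infer_instance

def sle (a b : ℤ) : Prop := slt a b ∨ a = b

instance sle.dec (a b : ℤ) : Decidable (sle a b) := by unfold sle; infer_instance

/-! ### Signed permutations (windows), reflections acting on the right -/

/-- The right action of a reflection on a window (or column), with 1-based
positions.  The reflection `(i, j)` with `j > 0` transposes positions `i` and
`j`; the reflection `(i, -j)` (i.e. `(i,\bar\jmath)`) with `i ≠ j` transposes
positions `i, j` and negates both entries; `(i, -i)` negates position `i`. -/
def applyRefl (l : List ℤ) (t : ℕ × ℤ) : List ℤ :=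
  if 0 < t.2 then
    (l.set (t.1 - 1) (l.getD (t.2.toNat - 1) 0)).set (t.2.toNat - 1) (l.getD (t.1 - 1) 0)
  else
    if t.1 = (-t.2).toNat then l.set (t.1 - 1) (-(l.getD (t.1 - 1) 0))
    else (l.set (t.1 - 1) (-(l.getD ((-t.2).toNat - 1) 0))).set ((-t.2).toNat - 1)
          (-(l.getD (t.1 - 1) 0))

def applyAll (w : List ℤ) (T : List (ℕ × ℤ)) : List ℤ := T.foldl applyRefl w

/-- The word `w[i,j] = w(i) w(i+1) ... w(j)`, 1-based and inclusive. -/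
def word (l : List ℤ) (i j : ℕ) : List ℤ := (l.drop (i - 1)).take (j + 1 - i)

/-- `N_{ab}(u)` = number of letters `c` of the word `u` with `a ≺ c ≺ b`. -/
def Nab (a b : ℤ) (u : List ℤ) : ℕ :=
  (u.filter (fun c => decide (slt a c ∧ slt c b))).length

/-- `ℓ₊(w) = #{(k,l) : k < l, w(k) ≻ w(l)}`. -/
def lplus (l : List ℤ) : ℕ :=
  (((Finset.range l.length) ×ˢ (Finset.range l.length)).filter
    (fun p => p.1 < p.2 ∧ slt (l.getD p.2 0) (l.getD p.1 0))).card

/-- `ℓ₋(w) = #{(k,l) : k ≤ l, w(k) ≻ -w(l)}`. -/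
def lminus (l : List ℤ) : ℕ :=
  (((Finset.range l.length) ×ˢ (Finset.range l.length)).filter
    (fun p => p.1 ≤ p.2 ∧ slt (-(l.getD p.2 0)) (l.getD p.1 0))).card

/-- The Coxeter length of a signed permutation given by its window. -/
def len (l : List ℤ) : ℕ := lplus l + lminus l

/-- The (finite) set of windows of all signed permutations in `B_n`. -/
def allWindows (n : ℕ) : Finset (List ℤ) :=
  Finset.image (fun w : Equiv.Perm (Fin n) × (Fin n → Bool) =>
    (List.finRange n).map (fun i =>
      if w.2 i then -(((w.1 i : ℕ) : ℤ) + 1) else ((w.1 i : ℕ) : ℤ) + 1)) Finset.univ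

/-- `w`-admissibility of a sequence of reflections: a strictly decreasing
chain in Bruhat order (recorded via the length function). -/
def decChain : List ℤ → List (ℕ × ℤ) → Bool
  | _, [] => true
  | w, t :: ts => (decide (len (applyRefl w t) < len w)) && decChain (applyRefl w t) ts

/-- Increasing-admissibility: a strictly increasing chain. -/
def incChain : List ℤ → List (ℕ × ℤ) → Bool
  | _, [] => true
  | w, t :: ts => (decide (len w < len (applyRefl w t))) && incChain (applyRefl w t) ts

/-- The subsequence of a chain `Γ` selected by a set `J` of (0-based) positions. -/
def selChain (Γ : List (ℕ × ℤ)) (J : Finset ℕ) : List (ℕ × ℤ) :=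
  (J.sort (· ≤ ·)).map (fun j => Γ.getD j (0, 0))

/-! ### The `λ`-chain of type `C_n` -/

/-- `Γ'_j = ((1,-j),(2,-j),...,(j-1,-j))`. -/
def gammaPrime (j : ℕ) : List (ℕ × ℤ) := (List.range (j - 1)).map (fun r => (r + 1, -(j : ℤ)))

/-- `Γ_j(k) = ((1,-j),...,(j-1,-j),(j,-(k+1)),...,(j,-n),(j,-j),(j,n),...,(j,k+1))`. -/
def gammaJK (n j k : ℕ) : List (ℕ × ℤ) :=
  gammaPrime j
    ++ (List.range (n - k)).map (fun r => (j, -((k + 1 + r : ℕ) : ℤ)))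
    ++ [(j, -(j : ℤ))]
    ++ (List.range (n - k)).map (fun r => (j, ((n - r : ℕ) : ℤ)))

/-- `Γ(k) = Γ'_2 ⋯ Γ'_k Γ_1(k) ⋯ Γ_k(k)` (type `C_n`). -/
def gammaChain (n k : ℕ) : List (ℕ × ℤ) :=
  ((List.range (k - 1)).map (fun r => gammaPrime (r + 2))).flatten
    ++ ((List.range k).map (fun r => gammaJK n (r + 1) k)).flatten

/-- `λ'_i = #{j : λ_j ≥ i}`, the conjugate partition. -/
def conj (n : ℕ) (lam : Fin n → ℕ) (i : ℕ) : ℕ :=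
  (Finset.univ.filter (fun j : Fin n => i ≤ lam j)).card

/-- `λ_1`, the largest part. -/
def lamOne (n : ℕ) (lam : Fin n → ℕ) : ℕ := Finset.univ.sup lam

/-- The fixed `λ`-chain `Γ = Γ^{λ_1} Γ^{λ_1-1} ⋯ Γ^1` with `Γ^i = Γ(λ'_i)`. -/
def lambdaChain (n : ℕ) (lam : Fin n → ℕ) : List (ℕ × ℤ) :=
  ((List.range (lamOne n lam)).map
    (fun r => gammaChain n (conj n lam (lamOne n lam - r)))).flatten

/-- The set `A(λ)` of admissible pairs `(w, J)`. -/
def ASet (n : ℕ) (lam : Fin n → ℕ) : Set (List ℤ × Finset ℕ) :=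
  {p | p.1 ∈ allWindows n ∧ p.2 ⊆ Finset.range (lambdaChain n lam).length ∧
    decChain p.1 (selChain (lambdaChain n lam) p.2) = true}

/-! ### Roots, coroots, affine reflections, and the weight `μ(T)` -/

/-- The root of type `C_n` corresponding to a symbol: `(i,j) ↦ ε_i - ε_j`,
`(i,-j) ↦ ε_i + ε_j` for `i < j`, and `(i,-i) ↦ 2ε_i`. -/
def rootVec (n : ℕ) (β : ℕ × ℤ) : Fin n → ℤ := fun r =>
  (if ((r : ℕ) + 1 : ℤ) = (β.1 : ℤ) then 1 else 0) +
  (if 0 < β.2 then (if ((r : ℕ) + 1 : ℤ) = β.2 then -1 else 0)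
   else (if ((r : ℕ) + 1 : ℤ) = -β.2 then 1 else 0))

/-- The coroot (type `C_n`): `(2ε_i)^∨ = ε_i`, the long rootss are unchanged. -/
def corootVec (n : ℕ) (β : ℕ × ℤ) : Fin n → ℤ :=
  if β.2 = -(β.1 : ℤ) then (fun r => if ((r : ℕ) + 1 : ℤ) = (β.1 : ℤ) then 1 else 0)
  else rootVec n β

/-- Standard inner product on `ℤ^n`. -/
def ip (n : ℕ) (u v : Fin n → ℤ) : ℤ := ∑ r, u r * v r

/-- The affine reflection in the hyperplane `{v : ⟨v, β^∨⟩ = c}`. -/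
def affRefl (n : ℕ) (β : ℕ × ℤ) (c : ℤ) (v : Fin n → ℤ) : Fin n → ℤ :=
  fun r => v r - (ip n v (corootVec n β) - c) * rootVec n β r

/-- `l_k = #{j ≤ k : β_j = β_k}` (here `k` is 0-based). -/
def lCount (Γ : List (ℕ × ℤ)) (k : ℕ) : ℕ := (Γ.take (k + 1)).count (Γ.getD k (0, 0))

/-- `μ(J) = \hat r_{j_1} ⋯ \hat r_{j_s}(λ)` for `J = {j_1 < ... < j_s}`. -/
def muJ (n : ℕ) (Γ : List (ℕ × ℤ)) (lamVec : Fin n → ℤ) (J : Finset ℕ) : Fin n → ℤ :=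
  (J.sort (· ≤ ·)).foldr (fun j v => affRefl n (Γ.getD j (0, 0)) ((lCount Γ j : ℕ) : ℤ) v) lamVec

/-- The linear action of a signed permutation (given by its window) on `ℤ^n`:
`w(ε_i) = ε_{w(i)}` with `ε_{-i} = -ε_i`. -/
def wAct (n : ℕ) (w : List ℤ) (v : Fin n → ℤ) : Fin n → ℤ := fun r =>
  ∑ i : Fin n, ((if w.getD i 0 = ((r : ℕ) + 1 : ℤ) then v i else 0) +
    (if w.getD i 0 = -(((r : ℕ) + 1 : ℤ)) then -(v i) else 0))

def lamVec (n : ℕ) (lam : Fin n → ℕ) : Fin n → ℤ := fun i => (lam i : ℤ)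

/-! ### Fillings of the doubled shape `\hat λ` -/

/-- A filling of the doubled shape, recorded by its primed columns `C'_{i,k}`
(`Cp i k`) and unprimed columns `C_{i,j}` (`Cu i j`). -/
structure Filling where
  Cp : ℕ → ℕ → List ℤ
  Cu : ℕ → ℕ → List ℤ

def validP (n : ℕ) (lam : Fin n → ℕ) (i k : ℕ) : Prop :=
  1 ≤ i ∧ i ≤ lamOne n lam ∧ 2 ≤ k ∧ k ≤ conj n lam i

def validU (n : ℕ) (lam : Fin n → ℕ) (i j : ℕ) : Prop :=
  1 ≤ i ∧ i ≤ lamOne n lam ∧ 1 ≤ j ∧ j ≤ conj n lam i ∧ (i = 1 → j = 1)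

instance validP.dec (n : ℕ) (lam : Fin n → ℕ) (i k : ℕ) : Decidable (validP n lam i k) := by
  unfold validP; infer_instance

instance validU.dec (n : ℕ) (lam : Fin n → ℕ) (i j : ℕ) : Decidable (validU n lam i j) := by
  unfold validU; infer_instance

/-- The right neighbour `C'_{i,k+1}` of `C'_{i,k}`, with the convention
`C'_{i,λ'_i+1} = C_{i,1}`. -/
def CpNxt (n : ℕ) (lam : Fin n → ℕ) (F : Filling) (i k : ℕ) : List ℤ :=
  if k < conj n lam i then F.Cp i (k + 1) else F.Cu i 1

/-- The right neighbour `C_{i,j+1}` of `C_{i,j}`, with the conventions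
`C_{i,λ'_i+1} = C'_{i-1,2}` (if `λ'_{i-1} > 1`) and `C_{i,λ'_i+1} = C_{i-1,1}`
(if `λ'_{i-1} = 1`). -/
def CuNxt (n : ℕ) (lam : Fin n → ℕ) (F : Filling) (i j : ℕ) : List ℤ :=
  if j < conj n lam i then F.Cu i (j + 1)
  else if 2 ≤ conj n lam (i - 1) then F.Cp (i - 1) 2 else F.Cu (i - 1) 1

/-- No two entries `a, b` of a column with `a = ±b`. -/
def colDistinct (c : List ℤ) : Prop :=
  ∀ p q : ℕ, p < q → q < c.length →
    c.getD p 0 ≠ c.getD q 0 ∧ c.getD p 0 ≠ -(c.getD q 0)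

/-- `R = (r_1 < r_2 < ... < r_p)` with `1 ≤ r_t < j ≤ d`. -/
def sortedR (R : List ℕ) (j d : ℕ) : Prop :=
  List.Chain' (· < ·) R ∧ (∀ r ∈ R, 1 ≤ r ∧ r < j) ∧ 1 ≤ j ∧ j ≤ d

/-- `D (r_1,-j) (r_2,-j) ⋯ (r_p,-j)`. -/
def cycleApply (D : List ℤ) (R : List ℕ) (j : ℕ) : List ℤ :=
  R.foldl (fun E r => applyRefl E (r, -(j : ℤ))) D

/-- The relation between `C_{i,j+1}[1,λ'_i] = E` and `C_{i,j} = D` in a filling: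
`E` differs from `D' = D(r_1,-j)⋯(r_p,-j)` only in position `j`,
`E(j) ∉ {±D'(r) : r ≠ j}` and `E(j) ⪯ D'(j)`. -/
def unprimedTrans (D E : List ℤ) (R : List ℕ) (j d : ℕ) : Prop :=
  (∀ r, 1 ≤ r → r ≤ d → r ≠ j →
    E.getD (r - 1) 0 = (cycleApply D R j).getD (r - 1) 0) ∧
  (∀ r, 1 ≤ r → r ≤ d → r ≠ j →
    E.getD (j - 1) 0 ≠ (cycleApply D R j).getD (r - 1) 0 ∧
    E.getD (j - 1) 0 ≠ -((cycleApply D R j).getD (r - 1) 0)) ∧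
  sle (E.getD (j - 1) 0) ((cycleApply D R j).getD (j - 1) 0)

/-- The set `F(λ)` of fillings of the doubled shape `\hat λ`. -/
def FSet (n : ℕ) (lam : Fin n → ℕ) : Set Filling :=
  {F |
    -- shape
    (∀ i k, (validP n lam i k → (F.Cp i k).length = conj n lam i) ∧
      (¬ validP n lam i k → F.Cp i k = [])) ∧
    (∀ i j, (validU n lam i j → (F.Cu i j).length = conj n lam i) ∧
      (¬ validU n lam i j → F.Cu i j = [])) ∧
    -- entries lie in `{±1, ..., ±n}`
    (∀ i k, validP n lam i k → ∀ a ∈ F.Cp i k, 1 ≤ a.natAbs ∧ a.natAbs ≤ n) ∧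
    (∀ i j, validU n lam i j → ∀ a ∈ F.Cu i j, 1 ≤ a.natAbs ∧ a.natAbs ≤ n) ∧
    -- (1) rows weakly decrease from left to right
    (∀ i k, validP n lam i k → ∀ r, 1 ≤ r → r ≤ conj n lam i →
      sle ((CpNxt n lam F i k).getD (r - 1) 0) ((F.Cp i k).getD (r - 1) 0)) ∧
    (∀ i j, 2 ≤ i → validU n lam i j → ∀ r, 1 ≤ r → r ≤ conj n lam i →
      sle ((CuNxt n lam F i j).getD (r - 1) 0) ((F.Cu i j).getD (r - 1) 0)) ∧
    -- (2) no column contains `a, b` with `a = ±b`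
    (∀ i k, validP n lam i k → colDistinct (F.Cp i k)) ∧
    (∀ i j, validU n lam i j → colDistinct (F.Cu i j)) ∧
    -- (3) primed transitions: `C'_{i,k+1} = C'_{i,k}(r_1,-k)⋯(r_p,-k)`
    (∀ i k, validP n lam i k → ∃ R : List ℕ, sortedR R k (conj n lam i) ∧
      CpNxt n lam F i k = cycleApply (F.Cp i k) R k) ∧
    -- (3) unprimed transitions
    (∀ i j, 2 ≤ i → validU n lam i j → ∃ R : List ℕ, sortedR R j (conj n lam i) ∧
      unprimedTrans (F.Cu i j) ((CuNxt n lam F i j).take (conj n lam i)) R j (conj n lam i))}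

/-! ### The filling map `f` -/

/-- Offset in `Γ` of the beginning of block `Γ^i` (the blocks are listed for
`i = λ_1` down to `1`). -/
def offsetBlock (n : ℕ) (lam : Fin n → ℕ) (i : ℕ) : ℕ :=
  ∑ r ∈ Finset.Ico (i + 1) (lamOne n lam + 1), (gammaChain n (conj n lam r)).length

/-- Offset in `Γ` of the beginning of the factor `Γ'_{i,k}`.-/
def offsetP (n : ℕ) (lam : Fin n → ℕ) (i k : ℕ) : ℕ :=
  offsetBlock n lam i + ∑ j ∈ Finset.Ico 2 k, (gammaPrime j).length

/-- Offset in `Γ` of the beginning of the factor `Γ_{i,j}`.-/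
def offsetU (n : ℕ) (lam : Fin n → ℕ) (i j : ℕ) : ℕ :=
  offsetBlock n lam i + (∑ k ∈ Finset.Ico 2 (conj n lam i + 1), (gammaPrime k).length)
    + ∑ j' ∈ Finset.Ico 1 j, (gammaJK n j' (conj n lam i)).length

/-- `π = w ⋅ (all selected reflections at positions < off)`. -/
def piW (n : ℕ) (lam : Fin n → ℕ) (w : List ℤ) (J : Finset ℕ) (off : ℕ) : List ℤ :=
  applyAll w (selChain (lambdaChain n lam) (J.filter (fun x => x < off)))

/-- The filling map `f`, sending an (admissible) pair `(w, J)` to a filling of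
the doubled shape `\hat λ`. -/
def fMap (n : ℕ) (lam : Fin n → ℕ) (w : List ℤ) (J : Finset ℕ) : Filling where
  Cp := fun i k => if validP n lam i k
    then (piW n lam w J (offsetP n lam i k)).take (conj n lam i) else []
  Cu := fun i j => if validU n lam i j
    then (piW n lam w J (offsetU n lam i j)).take (conj n lam i) else []

/-! ### Content of a filling -/

/-- The columns `\bar{C}^i = C'_{i,2} C_{i,1}` (left to right, `i = λ_1, ..., 1`)
of the compressed filling `\barσ` of shape `2λ`; by the conventions,
`C'_{i,2} = C_{i,1}` when `λ'_i = 1`. -/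
def compCols (n : ℕ) (lam : Fin n → ℕ) (F : Filling) : List (List ℤ) :=
  ((List.range (lamOne n lam)).map (fun t =>
    [(if 2 ≤ conj n lam (lamOne n lam - t) then F.Cp (lamOne n lam - t) 2
      else F.Cu (lamOne n lam - t) 1), F.Cu (lamOne n lam - t) 1])).flatten

/-- The content of a list of columns: the `i`-th coordinate is half the
difference between the numbers of occurrences of `i` and of `-i`. -/
def ctCols (n : ℕ) (cols : List (List ℤ)) : Fin n → ℚ := fun r =>
  ((cols.flatten.count (((r : ℕ) + 1 : ℕ) : ℤ) : ℚ) -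
    (cols.flatten.count (-(((r : ℕ) + 1 : ℕ) : ℤ)) : ℚ)) / 2

/-- The content `ct(σ)` of a filling `σ` of `\hatλ`. -/
def ctQ (n : ℕ) (lam : Fin n → ℕ) (F : Filling) : Fin n → ℚ :=
  ctCols n (compCols n lam F)

/-! ### The statistics `N(D,C)` and `des(D,C)` -/

/-- `σ_{ab} = 1` if `a` and `b` are both negative, else `0`. -/
def sigmaAB (a b : ℤ) : ℕ := if a < 0 ∧ b < 0 then 1 else 0

def allEntries (n : ℕ) : List ℤ :=
  (List.range n).map (fun r => ((r + 1 : ℕ) : ℤ)) ++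
    (List.range n).map (fun r => -((r + 1 : ℕ) : ℤ))

/-- Case 1: `N(D, D(r,-j)) = N_{\bar b, a}(D[r+1,j-1]) +
#{c : \bar b ≺ c ≺ a, c ∉ ±D[1,j]} + σ_{ab}` where `a = D(r)`, `b = D(j)`. -/
def N1 (n : ℕ) (D : List ℤ) (r j : ℕ) : ℕ :=
  Nab (-(D.getD (j - 1) 0)) (D.getD (r - 1) 0) (word D (r + 1) (j - 1)) +
  ((allEntries n).filter (fun c => decide (slt (-(D.getD (j - 1) 0)) c ∧
    slt c (D.getD (r - 1) 0) ∧ c ∉ D.take j ∧ c ∉ (D.take j).map (fun x => -x)))).length +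
  sigmaAB (D.getD (r - 1) 0) (D.getD (j - 1) 0)

/-- Case 2: `N(D, D(r_1,-j)⋯(r_p,-j)) = ∑ N(D_{t-1}, D_t)`. -/
def cycleN (n : ℕ) : List ℤ → List ℕ → ℕ → ℕ
  | _, [], _ => 0
  | D, r :: rs, j => N1 n D r j + cycleN n (applyRefl D (r, -(j : ℤ))) rs j

/-- The possible values `(N(D,C), des(D,C))` arising from the case-by-case
definition of the statistics (cases 0, 2, 3; case 1 is case 2 with `p = 1`).
If `C` is one box taller than `D`, `C` is replaced by `C[1,d]`. -/
def NdesCand (n : ℕ) (D C : List ℤ) : Set (ℕ × ℕ) :=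
  {x |
    (C.take D.length = D ∧ x = (0, 0)) ∨
    (∃ j R, sortedR R j D.length ∧ R ≠ [] ∧ C.take D.length = cycleApply D R j ∧
      x = (cycleN n D R j, R.length)) ∨
    (∃ j R, sortedR R j D.length ∧
      (∀ r, 1 ≤ r → r ≤ D.length → r ≠ j →
        (C.take D.length).getD (r - 1) 0 = (cycleApply D R j).getD (r - 1) 0) ∧
      (∀ r, 1 ≤ r → r ≤ D.length → r ≠ j →
        (C.take D.length).getD (j - 1) 0 ≠ (cycleApply D R j).getD (r - 1) 0 ∧
        (C.take D.length).getD (j - 1) 0 ≠ -((cycleApply D R j).getD (r - 1) 0)) ∧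
      slt ((C.take D.length).getD (j - 1) 0) ((cycleApply D R j).getD (j - 1) 0) ∧
      x = (cycleN n D R j +
        Nab ((C.take D.length).getD (j - 1) 0) ((cycleApply D R j).getD (j - 1) 0)
          (word D (j + 1) D.length), R.length + 1))}

noncomputable def Nstat (n : ℕ) (D C : List ℤ) : ℕ :=
  sInf {v | ∃ d, (v, d) ∈ NdesCand n D C}

noncomputable def desStat (n : ℕ) (D C : List ℤ) : ℕ :=
  sInf {d | ∃ v, (v, d) ∈ NdesCand n D C}

/-- All columns of a filling of `\hatλ`, listed from left to right. -/
def colList (n : ℕ) (lam : Fin n → ℕ) (F : Filling) : List (List ℤ) :=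
  ((List.range (lamOne n lam)).map (fun t =>
    ((List.range (conj n lam (lamOne n lam - t) - 1)).map
      (fun s => F.Cp (lamOne n lam - t) (s + 2))) ++
    (if lamOne n lam - t = 1 then [F.Cu 1 1]
     else (List.range (conj n lam (lamOne n lam - t))).map
      (fun s => F.Cu (lamOne n lam - t) (s + 1))))).flatten

/-- Sum of a binary statistic over adjacent pairs of a list. -/
def adjSumN (f : List ℤ → List ℤ → ℕ) : List (List ℤ) → ℕ
  | a :: b :: rest => f a b + adjSumN f (b :: rest)
  | _ => 0

/-- `N(σ) = ∑_{i=1}^{m-1} N(C_{i+1}, C_i) + ℓ₊(C_1)`. -/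
noncomputable def Nsigma (n : ℕ) (lam : Fin n → ℕ) (F : Filling) : ℕ :=
  adjSumN (Nstat n) (colList n lam F) + lplus ((colList n lam F).getLastD [])

/-- `des(σ) = ∑_{i=1}^{m-1} des(C_{i+1}, C_i)`. -/
noncomputable def desSigma (n : ℕ) (lam : Fin n → ℕ) (F : Filling) : ℕ :=
  adjSumN (desStat n) (colList n lam F)

/-! ### Statistics on fillings of the plain shape `λ` (for Proposition 2.2) -/

/-- The descent statistic of a filling of the Young diagram of `λ`, whose
columns are listed from left to right. -/
def desTau (cols : List (List ℤ)) : ℕ :=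
  adjSumN (fun L R => ((Finset.range L.length).filter
    (fun r => slt (R.getD r 0) (L.getD r 0))).card) cols

/-- The complementary inversion statistic `cinv = n(λ) - inv` of a filling of
the Young diagram of `λ` (columns listed from left to right, `C_k` being the
`k`-th column from the right). -/
def cinvTau (cols : List (List ℤ)) : ℕ :=
  ∑ q ∈ Finset.range cols.length,
    (((Finset.range (cols.getD q []).length) ×ˢ (Finset.range (cols.getD q []).length)).filter
      (fun pp => pp.1 < pp.2 ∧
        (((1 ≤ q ∧ pp.2 < (cols.getD (q - 1) []).length) ∧
            slt ((cols.getD q []).getD pp.2 0) ((cols.getD q []).getD pp.1 0) ∧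
            slt ((cols.getD q []).getD pp.1 0) ((cols.getD (q - 1) []).getD pp.2 0)) ∨
          (¬ (1 ≤ q ∧ pp.2 < (cols.getD (q - 1) []).length) ∧
            slt ((cols.getD q []).getD pp.2 0) ((cols.getD q []).getD pp.1 0))))).card

/-! ### Chains for the root systems `C_n` and `B_n` and the conditions (R1), (R2) -/

def isPosRootC (n : ℕ) (β : ℕ × ℤ) : Prop :=
  (1 ≤ β.1 ∧ (β.1 : ℤ) < β.2 ∧ β.2 ≤ (n : ℤ)) ∨
  (1 ≤ β.1 ∧ 0 < -β.2 ∧ (β.1 : ℤ) ≤ -β.2 ∧ -β.2 ≤ (n : ℤ))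

/-- Positive roots of `B_n` use the same symbols; `(i,-i)` encodes `ε_i`. -/
def isPosRootB (n : ℕ) (β : ℕ × ℤ) : Prop := isPosRootC n β

/-- The root of type `B_n` of a symbol: as in type `C` except `(i,-i) ↦ ε_i`. -/
def rootVecB (n : ℕ) (β : ℕ × ℤ) : Fin n → ℤ :=
  if β.2 = -(β.1 : ℤ) then (fun r => if ((r : ℕ) + 1 : ℤ) = (β.1 : ℤ) then 1 else 0)
  else rootVec n β

/-- The coroot of type `B_n`: `ε_i^∨ = 2ε_i`, long roots unchanged. -/
def corootVecB (n : ℕ) (β : ℕ × ℤ) : Fin n → ℤ :=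
  if β.2 = -(β.1 : ℤ) then (fun r => if ((r : ℕ) + 1 : ℤ) = (β.1 : ℤ) then 2 else 0)
  else rootVec n β

/-- `ω_k` in type `C_n`. -/
def omegaC (n k : ℕ) : Fin n → ℤ := fun r => if (r : ℕ) + 1 ≤ k then 1 else 0

/-- `ω_k` in type `B_n` (`ω_n` is half the sum of the `ε_i`). -/
def omegaB (n k : ℕ) : Fin n → ℚ :=
  if k = n then (fun _ => 1/2) else (fun r => if (r : ℕ) + 1 ≤ k then 1 else 0)

/-- type `B`: `Γ'_j = ((1,-j),...,(j-1,-j),(j))`. -/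
def gammaPrimeB (j : ℕ) : List (ℕ × ℤ) := gammaPrime j ++ [(j, -(j : ℤ))]

/-- type `B`: `Γ(k) = Γ'_1 ⋯ Γ'_k Γ_1(k) ⋯ Γ_k(k)` for `k < n`, and
`Γ(n) = Γ'_1 ⋯ Γ'_n`. -/
def gammaChainB (n k : ℕ) : List (ℕ × ℤ) :=
  ((List.range k).map (fun r => gammaPrimeB (r + 1))).flatten
    ++ (if k = n then [] else ((List.range k).map (fun r => gammaJK n (r + 1) k)).flatten)

/-- `(R2)`: the subsequence of all occurrences of `α, β, γ` is a concatenation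
of consecutive pairs `(γ, α)` or `(γ, β)`. -/
def altPairs (g a b : ℕ × ℤ) : List (ℕ × ℤ) → Prop
  | [] => True
  | [_] => False
  | x :: y :: rest => x = g ∧ (y = a ∨ y = b) ∧ altPairs g a b rest

/-! ### Real vector space versions (for hyperplanes) -/

def ipR (n : ℕ) (u v : Fin n → ℝ) : ℝ := ∑ r, u r * v r

def affReflR (n : ℕ) (β : ℕ × ℤ) (c : ℝ) (v : Fin n → ℝ) : Fin n → ℝ :=
  fun r => v r - (ipR n v (fun s => ((corootVec n β s : ℤ) : ℝ)) - c) *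
    ((rootVec n β r : ℤ) : ℝ)

def wActR (n : ℕ) (w : List ℤ) (v : Fin n → ℝ) : Fin n → ℝ := fun r =>
  ∑ i : Fin n, ((if w.getD i 0 = ((r : ℕ) + 1 : ℤ) then v i else 0) +
    (if w.getD i 0 = -(((r : ℕ) + 1 : ℤ)) then -(v i) else 0))

/-- `γ^∨ = (2/⟨γ,γ⟩) γ`. -/
noncomputable def corootOfR (n : ℕ) (v : Fin n → ℝ) : Fin n → ℝ :=
  fun r => (2 / ipR n v v) * v r

/-- The part of the compressed filling of shape `2λ` consisting of the columns
numbered `2λ_1, 2λ_1 - 1, ..., q` (`\barσ[q]`); column `2i` is `C'_{i,2}` and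
column `2i-1` is `C_{i,1}`. -/
def compColsGe (n : ℕ) (lam : Fin n → ℕ) (F : Filling) (q : ℕ) : List (List ℤ) :=
  ((List.range (lamOne n lam)).map (fun t =>
    (if q ≤ 2 * (lamOne n lam - t) then
      [(if 2 ≤ conj n lam (lamOne n lam - t) then F.Cp (lamOne n lam - t) 2
        else F.Cu (lamOne n lam - t) 1)] else []) ++
    (if q ≤ 2 * (lamOne n lam - t) - 1 then [F.Cu (lamOne n lam - t) 1] else []))).flatten

/-! ### The chains `Δ` and `Φ` of Section 6 -/

/-- `Δ = ((1,p+1),...,(1,n),(1,-1),(1,-n),(1,-(n-1)),...,(1,-(p+1)))`. -/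
def deltaChain (n p : ℕ) : List (ℕ × ℤ) :=
  (List.range (n - p)).map (fun r => (1, ((p + 1 + r : ℕ) : ℤ)))
    ++ [(1, (-1 : ℤ))]
    ++ (List.range (n - p)).map (fun r => (1, -((n - r : ℕ) : ℤ)))

/-- The suffix `Δ_{\bar s}` of `Δ` beginning with `(1,-s)`. -/
def deltaSuffixNeg (p s : ℕ) : List (ℕ × ℤ) :=
  (List.range (s - p)).map (fun r => (1, -((s - r : ℕ) : ℤ)))

/-- The suffix `Δ_{\bar 1}` of `Δ` beginning with `(1,-1)`. -/
def deltaSuffixBar1 (n p : ℕ) : List (ℕ × ℤ) :=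
  [(1, (-1 : ℤ))] ++ (List.range (n - p)).map (fun r => (1, -((n - r : ℕ) : ℤ)))

/-- The suffix `Δ_s` of `Δ` beginning with `(1,s)` (for `p < s ≤ n`). -/
def deltaSuffixPos (n p s : ℕ) : List (ℕ × ℤ) :=
  (List.range (n + 1 - s)).map (fun r => (1, ((s + r : ℕ) : ℤ)))
    ++ [(1, (-1 : ℤ))]
    ++ (List.range (n - p)).map (fun r => (1, -((n - r : ℕ) : ℤ)))

/-- `Φ = ((1,-1),(1,-2),(2,-2),...,(1,-n),...,(n-1,-n),(n,-n))`. -/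
def phiChain (n : ℕ) : List (ℕ × ℤ) :=
  ((List.range n).map (fun jm =>
    (List.range (jm + 1)).map (fun im => (im + 1, -((jm + 1 : ℕ) : ℤ))))).flatten

/-- The suffix `Φ_{ij}` of `Φ` beginning with `(i,-j)`. -/
def phiSuffix (n i j : ℕ) : List (ℕ × ℤ) := (phiChain n).drop ((j - 1) * j / 2 + (i - 1))

/-- `ℓ^{ij}_-(w) = #{(k,l) : k ≤ l, (k,-l)` strictly precedes `(i,-j)` in `Φ`,
`w(k) ≻ -w(l)}`. -/
def lminusBefore (w : List ℤ) (i j : ℕ) : ℕ :=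
  (((Finset.range w.length) ×ˢ (Finset.range w.length)).filter
    (fun p => p.1 ≤ p.2 ∧ (p.2 + 1 < j ∨ (p.2 + 1 = j ∧ p.1 + 1 < i)) ∧
      slt (-(w.getD p.2 0)) (w.getD p.1 0))).card

/-! ### The order `≺`, columns and length -/

/-- `a ∈ {±1, …, ±n}`. -/
def Ent (n : ℕ) (a : ℤ) : Prop := 1 ≤ a.natAbs ∧ a.natAbs ≤ n

/-- The odd order embedding of `({±1, …, ±n}, ≺)` into `(ℤ, <)`. -/
def ky (n : ℕ) (a : ℤ) : ℤ := if 0 < a then a - (n + 1) else a + (n + 1)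

lemma Ent.neg {n : ℕ} {a : ℤ} (h : Ent n a) : Ent n (-a) := by
  unfold Ent at *; simpa using h

lemma slt_iff {n : ℕ} {a b : ℤ} (ha : Ent n a) (hb : Ent n b) : slt a b ↔ ky n a < ky n b := by
  unfold slt ky Ent at *
  split_ifs <;> omega

lemma ky_neg {n : ℕ} {a : ℤ} (ha : Ent n a) : ky n (-a) = -ky n a := by
  unfold ky Ent at *
  split_ifs <;> omega

lemma ky_ne_zero {n : ℕ} {a : ℤ} (ha : Ent n a) : ky n a ≠ 0 := by
  unfold ky Ent at *
  split_ifs <;> omega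

lemma ky_inj {n : ℕ} {a b : ℤ} (ha : Ent n a) (hb : Ent n b) : ky n a = ky n b ↔ a = b := by
  unfold ky Ent at *
  split_ifs <;> omega

lemma neg_iff_ky {n : ℕ} {a : ℤ} (ha : Ent n a) : a < 0 ↔ 0 < ky n a := by
  unfold ky Ent at *
  split_ifs <;> omega

/-- A column of height `k`: entries in `{±1, …, ±n}` with distinct absolute values.  The columns of
height `n` are the windows of the signed permutations in `B_n`. -/
structure IsCol (n k : ℕ) (c : List ℤ) : Prop where
  len : c.length = k
  ent : ∀ p, p < k → Ent n (c.getD p 0)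
  dist : ∀ p q, p < k → q < k → p ≠ q → c.getD p 0 ≠ c.getD q 0 ∧ c.getD p 0 ≠ -(c.getD q 0)

/-- The indicator function of `a ≺ b`. -/
def sI (a b : ℤ) : ℤ := if slt a b then 1 else 0

/-- The indicator function of `a ≺ c ≺ b`. -/
def bI (a b c : ℤ) : ℕ := if slt a c ∧ slt c b then 1 else 0

lemma sI_ky {n : ℕ} {a b : ℤ} (ha : Ent n a) (hb : Ent n b) :
    sI a b = if ky n a < ky n b then 1 else 0 := by
  unfold sI; simp only [slt_iff ha hb]

lemma bI_ky {n : ℕ} {a b c : ℤ} (ha : Ent n a) (hb : Ent n b) (hc : Ent n c) :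
    bI a b c = if ky n a < ky n c ∧ ky n c < ky n b then 1 else 0 := by
  unfold bI; simp only [slt_iff ha hc, slt_iff hc hb]

lemma lplus_sum (w : List ℤ) : (lplus w : ℤ) =
    ∑ q ∈ Finset.range w.length, ∑ p ∈ Finset.range q, sI (w.getD q 0) (w.getD p 0) := by
  unfold lplus
  rw [Finset.card_filter, Finset.sum_product_right]
  push_cast
  refine Finset.sum_congr rfl fun q hq => ?_
  rw [← Finset.sum_subset (s₁ := Finset.range q) (s₂ := Finset.range w.length)]
  · refine Finset.sum_congr rfl fun p hp => ?_
    have := Finset.mem_range.1 hp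
    simp [sI, this]
  · intro x; simp only [Finset.mem_range] at *; omega
  · intro x _ hx
    simp only [Finset.mem_range] at hx
    simp [hx]

lemma lminus_sum (w : List ℤ) : (lminus w : ℤ) =
    ∑ q ∈ Finset.range w.length, ∑ p ∈ Finset.range q, sI (-(w.getD q 0)) (w.getD p 0) +
    ∑ q ∈ Finset.range w.length, sI (-(w.getD q 0)) (w.getD q 0) := by
  unfold lminus
  rw [Finset.card_filter, Finset.sum_product_right, ← Finset.sum_add_distrib]
  push_cast
  refine Finset.sum_congr rfl fun q hq => ?_
  rw [← Finset.sum_range_succ (fun p => sI (-(w.getD q 0)) (w.getD p 0)) q,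
    ← Finset.sum_subset (s₁ := Finset.range (q + 1)) (s₂ := Finset.range w.length)]
  · refine Finset.sum_congr rfl fun p hp => ?_
    have : p ≤ q := by have := Finset.mem_range.1 hp; omega
    simp [sI, this]
  · intro x; simp only [Finset.mem_range] at *; omega
  · intro x _ hx
    simp only [Finset.mem_range] at hx
    have : ¬ x ≤ q := by omega
    simp [this]

lemma len_sum (w : List ℤ) : (len w : ℤ) =
    ∑ q ∈ Finset.range w.length, ∑ p ∈ Finset.range q,
      (sI (w.getD q 0) (w.getD p 0) + sI (-(w.getD q 0)) (w.getD p 0)) +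
    ∑ q ∈ Finset.range w.length, sI (-(w.getD q 0)) (w.getD q 0) := by
  simp only [Finset.sum_add_distrib]
  unfold len
  push_cast
  rw [lplus_sum, lminus_sum]
  ring

/-- A sum over pairs `p < q` whose terms vanish unless the index `j` occurs. -/
lemma pair_sum_one (L j : ℕ) (hj : j < L) (d : ℕ → ℕ → ℤ)
    (h0 : ∀ p q, p < q → p ≠ j → q ≠ j → d p q = 0) :
    ∑ q ∈ Finset.range L, ∑ p ∈ Finset.range q, d p q =
      ∑ m ∈ (Finset.range L).erase j, (if m < j then d m j else d j m) := by
  have h1 : ∀ q ∈ Finset.range L, ∑ p ∈ Finset.range q, d p q =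
      if q = j then ∑ p ∈ Finset.range j, d p j else if j < q then d j q else 0 := by
    intro q _
    split_ifs with h h'
    · rw [h]
    · rw [Finset.sum_eq_single j]
      · intro b hb hbj; exact h0 _ _ (Finset.mem_range.1 hb) hbj h
      · intro hh; simp at hh; omega
    · refine Finset.sum_eq_zero fun p hp => h0 _ _ (Finset.mem_range.1 hp) ?_ h
      have := Finset.mem_range.1 hp; omega
  rw [Finset.sum_congr rfl h1, ← Finset.add_sum_erase _ _ (Finset.mem_range.2 hj)]
  have h2 : ∑ p ∈ Finset.range j, d p j =
      ∑ m ∈ (Finset.range L).erase j, if m < j then d m j else 0 := by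
    rw [← Finset.sum_filter]
    refine Finset.sum_congr ?_ fun _ _ => rfl
    ext x; simp; omega
  rw [if_pos rfl, h2, ← Finset.sum_add_distrib]
  refine Finset.sum_congr rfl fun m hm => ?_
  have := Finset.ne_of_mem_erase hm
  split_ifs <;> omega

/-- A sum over pairs `p < q` whose terms vanish unless one of the indices `r < j` occurs. -/
lemma pair_sum_two (L r j : ℕ) (hr : r < j) (hj : j < L) (d : ℕ → ℕ → ℤ)
    (h0 : ∀ p q, p < q → p ≠ r → q ≠ r → p ≠ j → q ≠ j → d p q = 0) :
    ∑ q ∈ Finset.range L, ∑ p ∈ Finset.range q, d p q =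
      d r j + ∑ m ∈ ((Finset.range L).erase j).erase r,
        ((if m < r then d m r else d r m) + (if m < j then d m j else d j m)) := by
  have e : ∀ p q, d p q = (if p = r ∨ q = r then d p q else 0) +
      (if p = r ∨ q = r then 0 else d p q) := by
    intro p q; split_ifs <;> simp
  rw [Finset.sum_congr rfl fun q _ => Finset.sum_congr rfl fun p _ => e p q]
  simp only [Finset.sum_add_distrib]
  rw [pair_sum_one L r (by omega) (fun p q => if p = r ∨ q = r then d p q else 0),
    pair_sum_one L j hj (fun p q => if p = r ∨ q = r then 0 else d p q)]
  · rw [← Finset.add_sum_erase ((Finset.range L).erase r) _ (a := j) (by simp; omega),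
      ← Finset.add_sum_erase ((Finset.range L).erase j) _ (a := r) (by simp; omega),
      Finset.erase_right_comm (a := r) (b := j)]
    rw [if_neg (by omega), if_pos hr, if_pos (by simp), if_pos (by simp)]
    rw [zero_add, add_assoc]
    congr 2
    · refine Finset.sum_congr rfl fun m hm => ?_
      simp
    · refine Finset.sum_congr rfl fun m hm => ?_
      have := Finset.ne_of_mem_erase hm
      have h3 : ¬ (m = r ∨ j = r) := by omega
      have h4 : ¬ (j = r ∨ m = r) := by omega
      simp only [h3, h4, if_false]
  · intro p q hpq h1 h2
    split_ifs with h
    · rfl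
    · exact h0 _ _ hpq (by tauto) (by tauto) h1 h2
  · intro p q hpq h1 h2
    simp [h1, h2]

/-! ### Reflections on windows -/

lemma list_ext_getD {l l' : List ℤ} (hl : l.length = l'.length)
    (h : ∀ p, p < l.length → l.getD p 0 = l'.getD p 0) : l = l' := by
  refine List.ext_getElem hl fun p h1 h2 => ?_
  have := h p h1
  rwa [List.getD_eq_getElem _ _ h1, List.getD_eq_getElem _ _ h2] at this

lemma getD_set (l : List ℤ) (i p : ℕ) (a : ℤ) (hi : i < l.length) :
    (l.set i a).getD p 0 = if p = i then a else l.getD p 0 := by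
  simp only [List.getD_eq_getElem?_getD, List.getElem?_set]
  by_cases h : p = i
  · subst h; simp [hi]
  · simp [h, Ne.symm h]

lemma length_applyRefl (w : List ℤ) (t : ℕ × ℤ) : (applyRefl w t).length = w.length := by
  unfold applyRefl; split_ifs <;> simp

lemma getD_negSwap (w : List ℤ) (r j p : ℕ) (hr : r < w.length) (hj : j < w.length) (h : r ≠ j) :
    (applyRefl w (r + 1, -((j + 1 : ℕ) : ℤ))).getD p 0 =
      if p = j then -(w.getD r 0) else if p = r then -(w.getD j 0) else w.getD p 0 := by
  unfold applyRefl
  rw [if_neg (by dsimp only; omega), if_neg (by dsimp only; omega)]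
  have e : ((-(-((j + 1 : ℕ) : ℤ))).toNat - 1) = j := by omega
  simp only [e, Nat.add_sub_cancel]
  rw [getD_set _ _ _ _ (by simpa using hj), getD_set _ _ _ _ hr]

lemma getD_swap (w : List ℤ) (r j p : ℕ) (hr : r < w.length) (hj : j < w.length) :
    (applyRefl w (r + 1, ((j + 1 : ℕ) : ℤ))).getD p 0 =
      if p = j then w.getD r 0 else if p = r then w.getD j 0 else w.getD p 0 := by
  unfold applyRefl
  rw [if_pos (by dsimp only; omega)]
  have e : ((((j + 1 : ℕ) : ℤ)).toNat - 1) = j := by omega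
  simp only [e, Nat.add_sub_cancel]
  rw [getD_set _ _ _ _ (by simpa using hj), getD_set _ _ _ _ hr]

lemma getD_negOne (w : List ℤ) (j p : ℕ) (hj : j < w.length) :
    (applyRefl w (j + 1, -((j + 1 : ℕ) : ℤ))).getD p 0 =
      if p = j then -(w.getD j 0) else w.getD p 0 := by
  unfold applyRefl
  rw [if_neg (by dsimp only; omega), if_pos (by dsimp only; omega)]
  simp only [Nat.add_sub_cancel]
  rw [getD_set _ _ _ _ hj]

/-- `β` is one of the reflections `(i,j)`, `(i,-j)`, `(i,-i)` with `1 ≤ i < j ≤ n`. -/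
def PosRefl (n : ℕ) (β : ℕ × ℤ) : Prop :=
  (∃ r j, r < j ∧ j < n ∧ β = (r + 1, -((j + 1 : ℕ) : ℤ))) ∨
  (∃ r j, r < j ∧ j < n ∧ β = (r + 1, ((j + 1 : ℕ) : ℤ))) ∨
  (∃ j, j < n ∧ β = (j + 1, -((j + 1 : ℕ) : ℤ)))

lemma IsCol.negSwap {n k : ℕ} {w : List ℤ} (h : IsCol n k w) {r j : ℕ} (hr : r < k) (hj : j < k)
    (hrj : r ≠ j) : IsCol n k (applyRefl w (r + 1, -((j + 1 : ℕ) : ℤ))) := by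
  have hl := h.len
  refine ⟨by rw [length_applyRefl, h.len], fun p hp => ?_, fun p q hp hq hpq => ?_⟩
  · rw [getD_negSwap _ _ _ _ (by omega) (by omega) hrj]
    split_ifs
    · exact (h.ent _ hr).neg
    · exact (h.ent _ hj).neg
    · exact h.ent _ hp
  · simp only [getD_negSwap w r j _ (by omega) (by omega) hrj]
    have a1 := h.dist p q hp hq hpq
    have a2 := h.dist p r hp hr
    have a3 := h.dist p j hp hj
    have a4 := h.dist q r hq hr
    have a5 := h.dist q j hq hj
    have a6 := h.dist r j hr hj hrj
    split_ifs <;> (try subst_vars) <;> omega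

lemma IsCol.swap {n k : ℕ} {w : List ℤ} (h : IsCol n k w) {r j : ℕ} (hr : r < k) (hj : j < k)
    (hrj : r ≠ j) : IsCol n k (applyRefl w (r + 1, ((j + 1 : ℕ) : ℤ))) := by
  have hl := h.len
  refine ⟨by rw [length_applyRefl, h.len], fun p hp => ?_, fun p q hp hq hpq => ?_⟩
  · rw [getD_swap _ _ _ _ (by omega) (by omega)]
    split_ifs
    · exact (h.ent _ hr)
    · exact (h.ent _ hj)
    · exact h.ent _ hp
  · simp only [getD_swap w r j _ (by omega) (by omega)]
    have a1 := h.dist p q hp hq hpq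
    have a2 := h.dist p r hp hr
    have a3 := h.dist p j hp hj
    have a4 := h.dist q r hq hr
    have a5 := h.dist q j hq hj
    have a6 := h.dist r j hr hj hrj
    split_ifs <;> (try subst_vars) <;> omega

lemma IsCol.negOne {n k : ℕ} {w : List ℤ} (h : IsCol n k w) {j : ℕ} (hj : j < k) :
    IsCol n k (applyRefl w (j + 1, -((j + 1 : ℕ) : ℤ))) := by
  have hl := h.len
  refine ⟨by rw [length_applyRefl, h.len], fun p hp => ?_, fun p q hp hq hpq => ?_⟩
  · rw [getD_negOne _ _ _ (by omega)]
    split_ifs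
    · exact (h.ent _ hj).neg
    · exact h.ent _ hp
  · simp only [getD_negOne w j _ (show j < w.length by omega)]
    have a1 := h.dist p q hp hq hpq
    have a3 := h.dist p j hp hj
    have a5 := h.dist q j hq hj
    split_ifs <;> (try subst_vars) <;> omega

lemma IsCol.applyRefl {n : ℕ} {w : List ℤ} (h : IsCol n n w) {β : ℕ × ℤ} (hβ : PosRefl n β) :
    IsCol n n (applyRefl w β) := by
  rcases hβ with ⟨r, j, h1, h2, rfl⟩ | ⟨r, j, h1, h2, rfl⟩ | ⟨j, h1, rfl⟩
  · exact h.negSwap (by omega) h2 (by omega)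
  · exact h.swap (by omega) h2 (by omega)
  · exact h.negOne h1

lemma applyRefl_invol {n : ℕ} {w : List ℤ} (h : w.length = n) {β : ℕ × ℤ} (hβ : PosRefl n β) :
    HL.applyRefl (HL.applyRefl w β) β = w := by
  refine list_ext_getD (by simp only [length_applyRefl]) fun p hp => ?_
  simp only [length_applyRefl] at hp
  have hl := length_applyRefl w β
  rcases hβ with ⟨r, j, h1, h2, rfl⟩ | ⟨r, j, h1, h2, rfl⟩ | ⟨j, h1, rfl⟩
  · have e := fun p => getD_negSwap w r j p (by omega) (by omega) (by omega)
    generalize HL.applyRefl w (r + 1, -((j + 1 : ℕ) : ℤ)) = w' at *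
    rw [getD_negSwap w' r j p (by omega) (by omega) (by omega)]
    simp only [e]
    split_ifs <;> (try subst_vars) <;> omega
  · have e := fun p => getD_swap w r j p (by omega) (by omega)
    generalize HL.applyRefl w (r + 1, ((j + 1 : ℕ) : ℤ)) = w' at *
    rw [getD_swap w' r j p (by omega) (by omega)]
    simp only [e]
    split_ifs <;> (try subst_vars) <;> omega
  · have e := fun p => getD_negOne w j p (by omega)
    generalize HL.applyRefl w (j + 1, -((j + 1 : ℕ) : ℤ)) = w' at *
    rw [getD_negOne w' j p (by omega)]
    simp only [e]
    split_ifs <;> (try subst_vars) <;> omega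

/-! ### Length differences -/

/-- A statistic on windows of length `L` that is a sum of contributions of pairs of positions and of
single positions. -/
def St (L : ℕ) (F : ℕ → ℕ → ℤ → ℤ → ℤ) (G : ℕ → ℤ → ℤ) (w : List ℤ) : ℤ :=
  ∑ q ∈ Finset.range L, ∑ p ∈ Finset.range q, F p q (w.getD p 0) (w.getD q 0) +
  ∑ q ∈ Finset.range L, G q (w.getD q 0)

lemma len_eq_St {n : ℕ} {w : List ℤ} (h : w.length = n) :
    (len w : ℤ) = St n (fun _ _ a b => sI b a + sI (-b) a) (fun _ a => sI (-a) a) w := by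
  rw [len_sum, h]; rfl

/-- The change of an `St`-statistic when two windows differ only in the positions `r` and `j`. -/
lemma St_diff_two {L r j : ℕ} (hr : r < j) (hj : j < L) (F : ℕ → ℕ → ℤ → ℤ → ℤ)
    (G : ℕ → ℤ → ℤ) (w w' : List ℤ)
    (hw : ∀ p, p ≠ r → p ≠ j → w'.getD p 0 = w.getD p 0) :
    St L F G w - St L F G w' =
      F r j (w.getD r 0) (w.getD j 0) - F r j (w'.getD r 0) (w'.getD j 0) +
      (G r (w.getD r 0) - G r (w'.getD r 0)) + (G j (w.getD j 0) - G j (w'.getD j 0)) +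
      ∑ m ∈ ((Finset.range L).erase j).erase r,
        ((if m < r then F m r (w.getD m 0) (w.getD r 0) - F m r (w.getD m 0) (w'.getD r 0)
          else F r m (w.getD r 0) (w.getD m 0) - F r m (w'.getD r 0) (w.getD m 0)) +
         (if m < j then F m j (w.getD m 0) (w.getD j 0) - F m j (w.getD m 0) (w'.getD j 0)
          else F j m (w.getD j 0) (w.getD m 0) - F j m (w'.getD j 0) (w.getD m 0))) := by
  have key := pair_sum_two L r j hr hj
    (fun p q => F p q (w.getD p 0) (w.getD q 0) - F p q (w'.getD p 0) (w'.getD q 0))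
    (by intro p q _ h1 h2 h3 h4; simp only [hw p h1 h3, hw q h2 h4, sub_self])
  have hG : ∑ q ∈ Finset.range L, (G q (w.getD q 0) - G q (w'.getD q 0)) =
      (G r (w.getD r 0) - G r (w'.getD r 0)) + (G j (w.getD j 0) - G j (w'.getD j 0)) := by
    rw [← Finset.add_sum_erase (Finset.range L) _ (a := j) (by simp; omega),
      ← Finset.add_sum_erase ((Finset.range L).erase j) _ (a := r) (by simp; omega),
      Finset.sum_eq_zero]
    · ring
    · intro x hx
      simp only [Finset.mem_erase] at hx
      rw [hw x hx.1 hx.2.1, sub_self]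
  have hM : ∑ m ∈ ((Finset.range L).erase j).erase r,
        ((if m < r then F m r (w.getD m 0) (w.getD r 0) - F m r (w'.getD m 0) (w'.getD r 0)
          else F r m (w.getD r 0) (w.getD m 0) - F r m (w'.getD r 0) (w'.getD m 0)) +
         (if m < j then F m j (w.getD m 0) (w.getD j 0) - F m j (w'.getD m 0) (w'.getD j 0)
          else F j m (w.getD j 0) (w.getD m 0) - F j m (w'.getD j 0) (w'.getD m 0))) =
      ∑ m ∈ ((Finset.range L).erase j).erase r,
        ((if m < r then F m r (w.getD m 0) (w.getD r 0) - F m r (w.getD m 0) (w'.getD r 0)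
          else F r m (w.getD r 0) (w.getD m 0) - F r m (w'.getD r 0) (w.getD m 0)) +
         (if m < j then F m j (w.getD m 0) (w.getD j 0) - F m j (w.getD m 0) (w'.getD j 0)
          else F j m (w.getD j 0) (w.getD m 0) - F j m (w'.getD j 0) (w.getD m 0))) := by
    refine Finset.sum_congr rfl fun x hx => ?_
    simp only [Finset.mem_erase] at hx
    rw [hw x hx.1 hx.2.1]
  beta_reduce at key
  rw [hM] at key
  simp only [Finset.sum_sub_distrib] at key hG
  unfold St
  linarith

/-- The change of an `St`-statistic when two windows differ only in the position `j`. -/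
lemma St_diff_one {L j : ℕ} (hj : j < L) (F : ℕ → ℕ → ℤ → ℤ → ℤ)
    (G : ℕ → ℤ → ℤ) (w w' : List ℤ)
    (hw : ∀ p, p ≠ j → w'.getD p 0 = w.getD p 0) :
    St L F G w - St L F G w' =
      (G j (w.getD j 0) - G j (w'.getD j 0)) +
      ∑ m ∈ (Finset.range L).erase j,
         (if m < j then F m j (w.getD m 0) (w.getD j 0) - F m j (w.getD m 0) (w'.getD j 0)
          else F j m (w.getD j 0) (w.getD m 0) - F j m (w'.getD j 0) (w.getD m 0)) := by
  have key := pair_sum_one L j hj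
    (fun p q => F p q (w.getD p 0) (w.getD q 0) - F p q (w'.getD p 0) (w'.getD q 0))
    (by intro p q _ h1 h2; simp only [hw p h1, hw q h2, sub_self])
  have hG : ∑ q ∈ Finset.range L, (G q (w.getD q 0) - G q (w'.getD q 0)) =
      (G j (w.getD j 0) - G j (w'.getD j 0)) := by
    rw [Finset.sum_eq_single j]
    · intro b _ hb; rw [hw b hb, sub_self]
    · intro h; simp at h; omega
  have hM : ∑ m ∈ (Finset.range L).erase j,
         (if m < j then F m j (w.getD m 0) (w.getD j 0) - F m j (w'.getD m 0) (w'.getD j 0)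
          else F j m (w.getD j 0) (w.getD m 0) - F j m (w'.getD j 0) (w'.getD m 0)) =
      ∑ m ∈ (Finset.range L).erase j,
         (if m < j then F m j (w.getD m 0) (w.getD j 0) - F m j (w.getD m 0) (w'.getD j 0)
          else F j m (w.getD j 0) (w.getD m 0) - F j m (w'.getD j 0) (w.getD m 0)) := by
    refine Finset.sum_congr rfl fun x hx => ?_
    simp only [Finset.mem_erase] at hx
    rw [hw x hx.1]
  beta_reduce at key
  rw [hM] at key
  simp only [Finset.sum_sub_distrib] at key hG
  unfold St
  linarith

/-- Half of (length difference minus one) for `w ↦ w(r,-j)`, up to the term `σ_{ab}`. -/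
def costNeg (n : ℕ) (w : List ℤ) (r j : ℕ) (x y : ℤ) : ℕ :=
  ∑ m ∈ Finset.Ioo r j, bI x y (w.getD m 0) +
    ∑ m ∈ Finset.Ico (j + 1) n, (bI x y (w.getD m 0) + bI x y (-(w.getD m 0)))

lemma ne_ky {n : ℕ} {a b : ℤ} (ha : Ent n a) (hb : Ent n b) (h : a ≠ b ∧ a ≠ -b) :
    ky n a ≠ ky n b ∧ ky n a ≠ -ky n b := by
  rw [← ky_neg hb, ne_eq, ne_eq, ky_inj ha hb, ky_inj ha hb.neg]; exact h

lemma pt_negSwap_mid {n : ℕ} {a b c : ℤ} (ha : Ent n a) (hb : Ent n b) (hc : Ent n c)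
    (hs : slt (-b) a) (hca : c ≠ a ∧ c ≠ -a) (hcb : c ≠ b ∧ c ≠ -b) :
    sI c a + sI (-c) a - (sI c (-b) + sI (-c) (-b)) +
      (sI b c + sI (-b) c - (sI (-a) c + sI (- -a) c)) = 2 * (bI (-b) a c : ℤ) := by
  rw [slt_iff hb.neg ha, ky_neg hb] at hs
  have h1 := ne_ky hc ha hca
  have h2 := ne_ky hc hb hcb
  simp only [neg_neg, sI_ky ha hc, sI_ky ha.neg hc, sI_ky hb hc, sI_ky hb.neg hc, sI_ky hc ha,
    sI_ky hc.neg ha, sI_ky hc hb.neg, sI_ky hc.neg hb.neg, bI_ky hb.neg ha hc, ky_neg ha, ky_neg hb,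
    ky_neg hc]
  generalize ky n a = A at *
  generalize ky n b = B at *
  generalize ky n c = C at *
  clear ha hb hc hca hcb
  push_cast
  split_ifs <;> omega

lemma pt_negSwap_hi {n : ℕ} {a b c : ℤ} (ha : Ent n a) (hb : Ent n b) (hc : Ent n c)
    (hs : slt (-b) a) (hca : c ≠ a ∧ c ≠ -a) (hcb : c ≠ b ∧ c ≠ -b) :
    sI c a + sI (-c) a - (sI c (-b) + sI (-c) (-b)) +
      (sI c b + sI (-c) b - (sI c (-a) + sI (-c) (-a))) =
      2 * (bI (-b) a c + bI (-b) a (-c) : ℤ) := by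
  rw [slt_iff hb.neg ha, ky_neg hb] at hs
  have h1 := ne_ky hc ha hca
  have h2 := ne_ky hc hb hcb
  simp only [sI_ky hc ha, sI_ky hc.neg ha, sI_ky hc hb.neg, sI_ky hc.neg hb.neg, sI_ky hc hb,
    sI_ky hc.neg hb, sI_ky hc ha.neg, sI_ky hc.neg ha.neg, bI_ky hb.neg ha hc,
    bI_ky hb.neg ha hc.neg, ky_neg ha, ky_neg hb, ky_neg hc]
  generalize ky n a = A at *
  generalize ky n b = B at *
  generalize ky n c = C at *
  clear ha hb hc hca hcb
  push_cast
  split_ifs <;> omega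

lemma pt_negSwap_zero {n : ℕ} {a b : ℤ} (ha : Ent n a) (hb : Ent n b)
    (hs : slt (-b) a) (hab : a ≠ b ∧ a ≠ -b) :
    sI b a + sI (-b) a - (sI (-a) (-b) + sI (- -a) (-b)) + (sI (-a) a - sI (- -b) (-b)) +
      (sI (-b) b - sI (- -a) (-a)) = 1 + 2 * (sigmaAB a b : ℤ) := by
  rw [slt_iff hb.neg ha, ky_neg hb] at hs
  have h1 := ne_ky ha hb hab
  have h3 := ky_ne_zero ha
  have h4 := ky_ne_zero hb
  unfold sigmaAB
  simp only [neg_iff_ky ha, neg_iff_ky hb]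
  simp only [neg_neg, sI_ky hb ha, sI_ky hb.neg ha, sI_ky ha.neg hb.neg, sI_ky ha hb.neg,
    sI_ky ha.neg ha, sI_ky hb hb.neg, sI_ky hb.neg hb, sI_ky ha ha.neg, ky_neg ha, ky_neg hb]
  generalize ky n a = A at *
  generalize ky n b = B at *
  clear ha hb hab
  push_cast
  split_ifs <;> omega

lemma pt_swap_mid {n : ℕ} {a b c : ℤ} (ha : Ent n a) (hb : Ent n b) (hc : Ent n c)
    (hs : slt b a) (hca : c ≠ a ∧ c ≠ -a) (hcb : c ≠ b ∧ c ≠ -b) :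
    sI c a + sI (-c) a - (sI c b + sI (-c) b) +
      (sI b c + sI (-b) c - (sI a c + sI (-a) c)) = 2 * (bI b a c : ℤ) := by
  rw [slt_iff hb ha] at hs
  have h1 := ne_ky hc ha hca
  have h2 := ne_ky hc hb hcb
  simp only [sI_ky ha hc, sI_ky ha.neg hc, sI_ky hb hc, sI_ky hb.neg hc, sI_ky hc ha,
    sI_ky hc.neg ha, sI_ky hc hb, sI_ky hc.neg hb, bI_ky hb ha hc, ky_neg ha, ky_neg hb, ky_neg hc]
  generalize ky n a = A at *
  generalize ky n b = B at *
  generalize ky n c = C at *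
  clear ha hb hc hca hcb
  push_cast
  split_ifs <;> omega

lemma pt_swap_zero {n : ℕ} {a b : ℤ} (ha : Ent n a) (hb : Ent n b) (hs : slt b a) :
    sI b a + sI (-b) a - (sI a b + sI (-a) b) + (sI (-a) a - sI (-b) b) +
      (sI (-b) b - sI (-a) a) = 1 := by
  rw [slt_iff hb ha] at hs
  simp only [sI_ky hb ha, sI_ky hb.neg ha, sI_ky ha hb, sI_ky ha.neg hb,
    sI_ky ha.neg ha, sI_ky hb.neg hb, ky_neg ha, ky_neg hb]
  generalize ky n a = A at *
  generalize ky n b = B at *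
  clear ha hb
  split_ifs <;> omega

lemma pt_negOne_hi {n : ℕ} {b c : ℤ} (hb : Ent n b) (hc : Ent n c)
    (hs : slt (-b) b) (hcb : c ≠ b ∧ c ≠ -b) :
    sI c b + sI (-c) b - (sI c (-b) + sI (-c) (-b)) = 2 * (bI (-b) b c : ℤ) := by
  rw [slt_iff hb.neg hb, ky_neg hb] at hs
  have h2 := ne_ky hc hb hcb
  simp only [sI_ky hc hb.neg, sI_ky hc.neg hb.neg, sI_ky hc hb, sI_ky hc.neg hb,
    bI_ky hb.neg hb hc, ky_neg hb, ky_neg hc]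
  generalize ky n b = B at *
  generalize ky n c = C at *
  clear hb hc hcb
  push_cast
  split_ifs <;> omega

lemma pt_negOne_zero {n : ℕ} {b : ℤ} (hb : Ent n b) (hs : slt (-b) b) :
    sI (-b) b - sI (- -b) (-b) = 1 := by
  rw [slt_iff hb.neg hb, ky_neg hb] at hs
  simp only [neg_neg, sI_ky hb.neg hb, sI_ky hb hb.neg, ky_neg hb]
  generalize ky n b = B at *
  clear hb
  split_ifs <;> omega

lemma sum_split_three (n r j : ℕ) (hr : r < j) (hj : j < n) (f g : ℕ → ℤ) :
    ∑ m ∈ ((Finset.range n).erase j).erase r,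
      (if m < r then 0 else if m < j then f m else g m) =
    ∑ m ∈ Finset.Ioo r j, f m + ∑ m ∈ Finset.Ico (j + 1) n, g m := by
  have e1 : Finset.Ioo r j = (((Finset.range n).erase j).erase r).filter
      (fun m => r < m ∧ m < j) := by ext x; simp; omega
  have e2 : Finset.Ico (j + 1) n = (((Finset.range n).erase j).erase r).filter
      (fun m => j < m) := by ext x; simp; omega
  rw [e1, e2, Finset.sum_filter, Finset.sum_filter, ← Finset.sum_add_distrib]
  refine Finset.sum_congr rfl fun m hm => ?_
  simp only [Finset.mem_erase] at hm
  split_ifs <;> omega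

lemma sum_split_two (n j : ℕ) (g : ℕ → ℤ) :
    ∑ m ∈ (Finset.range n).erase j, (if m < j then 0 else g m) =
    ∑ m ∈ Finset.Ico (j + 1) n, g m := by
  have e2 : Finset.Ico (j + 1) n = ((Finset.range n).erase j).filter
      (fun m => j < m) := by ext x; simp; omega
  rw [e2, Finset.sum_filter]
  refine Finset.sum_congr rfl fun m hm => ?_
  simp only [Finset.mem_erase] at hm
  split_ifs <;> omega

/-- For a reflection `(r,-j)` that decreases length, the difference of lengths is `1 + 2 * N`, where `N` is
the number that the statistic `N(D,C)` attaches to this reflection (see `N1_eq`). -/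
lemma len_negSwap {n : ℕ} {w : List ℤ} (h : IsCol n n w) {r j : ℕ} (hr : r < j) (hj : j < n)
    (hs : slt (-(w.getD j 0)) (w.getD r 0)) :
    len w = len (applyRefl w (r + 1, -((j + 1 : ℕ) : ℤ))) + 1 +
      2 * (costNeg n w r j (-(w.getD j 0)) (w.getD r 0) + sigmaAB (w.getD r 0) (w.getD j 0)) := by
  have hl := h.len
  have h' := h.negSwap (r := r) (j := j) (by omega) hj (by omega)
  have hg := fun p => getD_negSwap w r j p (by omega) (by omega) (by omega)
  generalize applyRefl w (r + 1, -((j + 1 : ℕ) : ℤ)) = w' at *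
  have key := St_diff_two hr hj (fun _ _ a b => sI b a + sI (-b) a) (fun _ a => sI (-a) a) w w'
    (fun p h1 h2 => by rw [hg p, if_neg h2, if_neg h1])
  rw [← len_eq_St h.len, ← len_eq_St h'.len] at key
  have er : w'.getD r 0 = -(w.getD j 0) := by rw [hg r, if_neg (by omega), if_pos rfl]
  have ej : w'.getD j 0 = -(w.getD r 0) := by rw [hg j, if_pos rfl]
  simp only [er, ej] at key
  have ha := h.ent r (by omega)
  have hb := h.ent j hj
  rw [pt_negSwap_zero ha hb hs (h.dist r j (by omega) hj (by omega))] at key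
  rw [Finset.sum_congr rfl (g := fun m => if m < r then (0 : ℤ) else if m < j then
      2 * (bI (-(w.getD j 0)) (w.getD r 0) (w.getD m 0) : ℤ) else
      2 * (bI (-(w.getD j 0)) (w.getD r 0) (w.getD m 0) +
        bI (-(w.getD j 0)) (w.getD r 0) (-(w.getD m 0)) : ℤ)),
    sum_split_three n r j hr hj, ← Finset.mul_sum, ← Finset.mul_sum] at key
  · unfold costNeg
    zify
    linarith
  · intro m hm
    simp only [Finset.mem_erase, Finset.mem_range] at hm
    have hc := h.ent m hm.2.2
    have hca := h.dist m r hm.2.2 (by omega) hm.1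
    have hcb := h.dist m j hm.2.2 (by omega) hm.2.1
    by_cases h1 : m < r
    · have h2 : m < j := by omega
      simp only [if_pos h1, if_pos h2, neg_neg]; ring
    · by_cases h2 : m < j
      · simp only [if_neg h1, if_pos h2]
        exact pt_negSwap_mid ha hb hc hs hca hcb
      · simp only [if_neg h1, if_neg h2]
        exact pt_negSwap_hi ha hb hc hs hca hcb

lemma len_swap {n : ℕ} {w : List ℤ} (h : IsCol n n w) {r j : ℕ} (hr : r < j) (hj : j < n)
    (hs : slt (w.getD j 0) (w.getD r 0)) :
    len w = len (applyRefl w (r + 1, ((j + 1 : ℕ) : ℤ))) + 1 +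
      2 * (∑ m ∈ Finset.Ioo r j, bI (w.getD j 0) (w.getD r 0) (w.getD m 0)) := by
  have hl := h.len
  have h' := h.swap (r := r) (j := j) (by omega) hj (by omega)
  have hg := fun p => getD_swap w r j p (by omega) (by omega)
  generalize applyRefl w (r + 1, ((j + 1 : ℕ) : ℤ)) = w' at *
  have key := St_diff_two hr hj (fun _ _ a b => sI b a + sI (-b) a) (fun _ a => sI (-a) a) w w'
    (fun p h1 h2 => by rw [hg p, if_neg h2, if_neg h1])
  rw [← len_eq_St h.len, ← len_eq_St h'.len] at key
  have er : w'.getD r 0 = (w.getD j 0) := by rw [hg r, if_neg (by omega), if_pos rfl]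
  have ej : w'.getD j 0 = (w.getD r 0) := by rw [hg j, if_pos rfl]
  simp only [er, ej] at key
  have ha := h.ent r (by omega)
  have hb := h.ent j hj
  rw [pt_swap_zero ha hb hs] at key
  rw [Finset.sum_congr rfl (g := fun m => if m < r then (0 : ℤ) else if m < j then
      2 * (bI (w.getD j 0) (w.getD r 0) (w.getD m 0) : ℤ) else 0),
    sum_split_three n r j hr hj, ← Finset.mul_sum, Finset.sum_const_zero] at key
  · zify
    linarith
  · intro m hm
    simp only [Finset.mem_erase, Finset.mem_range] at hm
    have hc := h.ent m hm.2.2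
    have hca := h.dist m r hm.2.2 (by omega) hm.1
    have hcb := h.dist m j hm.2.2 (by omega) hm.2.1
    by_cases h1 : m < r
    · have h2 : m < j := by omega
      simp only [if_pos h1, if_pos h2]; ring
    · by_cases h2 : m < j
      · simp only [if_neg h1, if_pos h2]
        exact pt_swap_mid ha hb hc hs hca hcb
      · simp only [if_neg h1, if_neg h2]; ring

lemma len_negOne {n : ℕ} {w : List ℤ} (h : IsCol n n w) {j : ℕ} (hj : j < n)
    (hs : slt (-(w.getD j 0)) (w.getD j 0)) :
    len w = len (applyRefl w (j + 1, -((j + 1 : ℕ) : ℤ))) + 1 +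
      2 * (∑ m ∈ Finset.Ico (j + 1) n, bI (-(w.getD j 0)) (w.getD j 0) (w.getD m 0)) := by
  have hl := h.len
  have h' := h.negOne (j := j) hj
  have hg := fun p => getD_negOne w j p (by omega)
  generalize applyRefl w (j + 1, -((j + 1 : ℕ) : ℤ)) = w' at *
  have key := St_diff_one hj (fun _ _ a b => sI b a + sI (-b) a) (fun _ a => sI (-a) a) w w'
    (fun p h1 => by rw [hg p, if_neg h1])
  rw [← len_eq_St h.len, ← len_eq_St h'.len] at key
  have ej : w'.getD j 0 = -(w.getD j 0) := by rw [hg j, if_pos rfl]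
  simp only [ej] at key
  have hb := h.ent j hj
  rw [pt_negOne_zero hb hs] at key
  rw [Finset.sum_congr rfl (g := fun m => if m < j then (0 : ℤ) else
      2 * (bI (-(w.getD j 0)) (w.getD j 0) (w.getD m 0) : ℤ)),
    sum_split_two n j, ← Finset.mul_sum] at key
  · zify
    linarith
  · intro m hm
    simp only [Finset.mem_erase, Finset.mem_range] at hm
    have hc := h.ent m hm.2
    have hcb := h.dist m j hm.2 (by omega) hm.1
    by_cases h1 : m < j
    · simp only [if_pos h1, neg_neg]; ring
    · simp only [if_neg h1]
      exact pt_negOne_hi hb hc hs hcb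

/-! ### The transfer operators of a sequence of reflections -/

lemma mem_allWindows {n : ℕ} {w : List ℤ} : w ∈ allWindows n ↔ IsCol n n w := by
  unfold allWindows
  simp only [Finset.mem_image, Finset.mem_univ, true_and, Prod.exists]
  constructor
  · rintro ⟨σ, ε, rfl⟩
    have hget : ∀ p (hp : p < n), ((List.finRange n).map (fun i : Fin n =>
        if ε i then -(((σ i : ℕ) : ℤ) + 1) else ((σ i : ℕ) : ℤ) + 1)).getD p 0 =
        if ε ⟨p, hp⟩ then -(((σ ⟨p, hp⟩ : ℕ) : ℤ) + 1) else ((σ ⟨p, hp⟩ : ℕ) : ℤ) + 1 := by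
      intro p hp
      rw [List.getD_eq_getElem _ _ (by simpa using hp)]
      simp
    refine ⟨by simp, fun p hp => ?_, fun p q hp hq hpq => ?_⟩
    · rw [hget p hp]
      have := (σ ⟨p, hp⟩).2
      unfold Ent
      split_ifs <;> omega
    · rw [hget p hp, hget q hq]
      have : (σ ⟨p, hp⟩ : ℕ) ≠ (σ ⟨q, hq⟩ : ℕ) := by
        intro h
        have := σ.injective (Fin.ext h)
        simp at this; exact hpq this
      split_ifs <;> omega
  · intro h
    have hlt : ∀ i : Fin n, (w.getD i 0).natAbs - 1 < n := fun i => by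
      have := h.ent i i.2; unfold Ent at this; omega
    have hinj : Function.Injective (fun i : Fin n => (⟨_, hlt i⟩ : Fin n)) := by
      intro i j hij
      by_contra hne
      have h1 := h.dist i j i.2 j.2 (fun hh => hne (Fin.ext hh))
      have h2 := h.ent i i.2
      have h3 := h.ent j j.2
      unfold Ent at h2 h3
      simp only [Fin.mk.injEq] at hij
      omega
    refine ⟨Equiv.ofBijective _ (Finite.injective_iff_bijective.1 hinj),
      fun i => decide (w.getD i 0 < 0), ?_⟩
    refine list_ext_getD (by simp [h.len]) fun p hp => ?_
    have hp' : p < n := by simpa using hp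
    rw [List.getD_eq_getElem _ _ hp]
    have := h.ent p hp'
    unfold Ent at this
    simp only [List.getElem_map, List.getElem_finRange, Equiv.ofBijective_apply, Fin.cast_mk,
      decide_eq_true_eq]
    split_ifs <;> omega

section Operators
variable {A : Type*} [CommRing A] (t : A)

/-- The contribution of a reflection read from its larger to its smaller endpoint. -/
def dn (β : ℕ × ℤ) (g : List ℤ → A) (w : List ℤ) : A :=
  g w + if len (applyRefl w β) < len w then
    t ^ ((len w - len (applyRefl w β) - 1) / 2) * (1 - t) * g (applyRefl w β) else 0

/-- The contribution of a reflection read from its smaller to its larger endpoint. -/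
def up (β : ℕ × ℤ) (h : List ℤ → A) (v : List ℤ) : A :=
  h v + if len v < len (applyRefl v β) then
    t ^ ((len (applyRefl v β) - len v - 1) / 2) * (1 - t) * h (applyRefl v β) else 0

/-- Sum of `g` at the end points of the decreasing chains in `Γ` that start at `w`, weighted by
`t^{(ℓ(w)-ℓ(wT)-|T|)/2}(1-t)^{|T|}`. -/
def Dn (Γ : List (ℕ × ℤ)) (g : List ℤ → A) : List ℤ → A := Γ.foldr (dn t) g

/-- Sum of `h` at the starting points of the decreasing chains in `Γ` that end at `v`, with the same
weights as in `Dn`. -/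
def Up (Γ : List (ℕ × ℤ)) (h : List ℤ → A) : List ℤ → A := Γ.foldl (fun h β => up t β h) h

lemma Dn_nil (g : List ℤ → A) : Dn t [] g = g := rfl
lemma Dn_cons (β) (Γ) (g : List ℤ → A) : Dn t (β :: Γ) g = dn t β (Dn t Γ g) := rfl
lemma Dn_append (Γ₁ Γ₂) (g : List ℤ → A) : Dn t (Γ₁ ++ Γ₂) g = Dn t Γ₁ (Dn t Γ₂ g) := by
  simp [Dn]
lemma Up_nil (g : List ℤ → A) : Up t [] g = g := rfl
lemma Up_append (Γ₁ Γ₂) (g : List ℤ → A) : Up t (Γ₁ ++ Γ₂) g = Up t Γ₂ (Up t Γ₁ g) := by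
  simp [Up]
lemma Up_snoc (Γ β) (g : List ℤ → A) : Up t (Γ ++ [β]) g = up t β (Up t Γ g) := by
  simp [Up]
lemma Up_cons (β Γ) (g : List ℤ → A) : Up t (β :: Γ) g = Up t Γ (up t β g) := by
  simp [Up]

lemma up_congr {n : ℕ} {β : ℕ × ℤ} (hβ : PosRefl n β) {g g' : List ℤ → A}
    (h : ∀ v, IsCol n n v → g v = g' v) {v : List ℤ} (hv : IsCol n n v) :
    up t β g v = up t β g' v := by
  unfold up; rw [h v hv, h _ (hv.applyRefl hβ)]

lemma Up_congr {n : ℕ} : ∀ {Γ : List (ℕ × ℤ)} (_ : ∀ β ∈ Γ, PosRefl n β) {g g' : List ℤ → A}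
    (_ : ∀ v, IsCol n n v → g v = g' v) {v : List ℤ} (_ : IsCol n n v),
    Up t Γ g v = Up t Γ g' v
  | [], _, _, _, h, v, hv => h v hv
  | β :: Γ, hΓ, g, g', h, v, hv => by
    rw [Up_cons, Up_cons]
    exact Up_congr (fun b hb => hΓ b (List.mem_cons_of_mem _ hb))
      (fun v hv => up_congr t (hΓ β List.mem_cons_self) h hv) hv

lemma dn_congr {n : ℕ} {β : ℕ × ℤ} (hβ : PosRefl n β) {g g' : List ℤ → A}
    (h : ∀ v, IsCol n n v → g v = g' v) {v : List ℤ} (hv : IsCol n n v) :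
    dn t β g v = dn t β g' v := by
  unfold dn; rw [h v hv, h _ (hv.applyRefl hβ)]

lemma Dn_congr {n : ℕ} : ∀ {Γ : List (ℕ × ℤ)} (_ : ∀ β ∈ Γ, PosRefl n β) {g g' : List ℤ → A}
    (_ : ∀ v, IsCol n n v → g v = g' v) {v : List ℤ} (_ : IsCol n n v),
    Dn t Γ g v = Dn t Γ g' v
  | [], _, _, _, h, v, hv => h v hv
  | β :: Γ, hΓ, g, g', h, v, hv => by
    rw [Dn_cons, Dn_cons]
    exact dn_congr t (hΓ β List.mem_cons_self)
      (fun v hv => Dn_congr (fun b hb => hΓ b (List.mem_cons_of_mem _ hb)) h hv) hv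

lemma up_sum {ι : Type*} (s : Finset ι) (β) (c : ι → A) (g : ι → List ℤ → A) (v) :
    up t β (fun u => ∑ i ∈ s, c i * g i u) v = ∑ i ∈ s, c i * up t β (g i) v := by
  unfold up
  simp only [mul_add, Finset.sum_add_distrib]
  congr 1
  split_ifs
  · rw [Finset.mul_sum]
    exact Finset.sum_congr rfl fun _ _ => by ring
  · simp

lemma Up_sum {ι : Type*} (s : Finset ι) (c : ι → A) : ∀ (Γ) (g : ι → List ℤ → A) (v),
    Up t Γ (fun u => ∑ i ∈ s, c i * g i u) v = ∑ i ∈ s, c i * Up t Γ (g i) v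
  | [], _, _ => rfl
  | β :: Γ, g, v => by
    simp only [Up_cons]
    rw [← Up_sum s c Γ]
    congr 1
    funext u
    exact up_sum t s β c g u

lemma dn_up {n : ℕ} {β : ℕ × ℤ} (hβ : PosRefl n β) (h g : List ℤ → A) :
    ∑ u ∈ allWindows n, h u * dn t β g u = ∑ v ∈ allWindows n, up t β h v * g v := by
  unfold dn up
  simp only [mul_add, add_mul, Finset.sum_add_distrib]
  congr 1
  refine Finset.sum_bij' (fun u _ => applyRefl u β) (fun u _ => applyRefl u β) ?_ ?_ ?_ ?_ ?_
  · intro u hu; rw [mem_allWindows] at *; exact hu.applyRefl hβ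
  · intro u hu; rw [mem_allWindows] at *; exact hu.applyRefl hβ
  · intro u hu; rw [mem_allWindows] at *; exact applyRefl_invol hu.len hβ
  · intro u hu; rw [mem_allWindows] at *; exact applyRefl_invol hu.len hβ
  · intro u hu
    rw [mem_allWindows] at hu
    rw [applyRefl_invol hu.len hβ]
    split_ifs <;> ring

/-- `Dn` and `Up` are adjoint. -/
lemma Dn_Up {n : ℕ} : ∀ {Γ : List (ℕ × ℤ)} (_ : ∀ β ∈ Γ, PosRefl n β) (h g : List ℤ → A),
    ∑ u ∈ allWindows n, h u * Dn t Γ g u = ∑ v ∈ allWindows n, Up t Γ h v * g v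
  | [], _, _, _ => rfl
  | β :: Γ, hΓ, h, g => by
    rw [Dn_cons, Up_cons, dn_up t (hΓ β List.mem_cons_self),
      Dn_Up (fun b hb => hΓ b (List.mem_cons_of_mem _ hb))]

end Operators

/-! ### The individual reflections -/

lemma sigmaAB_comm (a b : ℤ) : sigmaAB a b = sigmaAB b a := by
  unfold sigmaAB; simp only [and_comm]

lemma not_slt {n : ℕ} {a b : ℤ} (ha : Ent n a) (hb : Ent n b) (h : a ≠ b) (hs : ¬ slt a b) :
    slt b a := by
  rw [slt_iff ha hb] at hs
  rw [slt_iff hb ha]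
  have := (ky_inj ha hb).not.2 h
  omega

lemma not_slt_of {n : ℕ} {a b : ℤ} (ha : Ent n a) (hb : Ent n b) (hs : slt a b) : ¬ slt b a := by
  rw [slt_iff ha hb] at hs
  rw [slt_iff hb ha]
  omega

lemma costNeg_congr {n : ℕ} {w w' : List ℤ} {r j : ℕ} {x y : ℤ}
    (h : ∀ p, p ≠ r → p ≠ j → w'.getD p 0 = w.getD p 0) (hr : r < j) :
    costNeg n w' r j x y = costNeg n w r j x y := by
  unfold costNeg
  congr 1
  · refine Finset.sum_congr rfl fun m hm => ?_
    simp only [Finset.mem_Ioo] at hm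
    rw [h m (by omega) (by omega)]
  · refine Finset.sum_congr rfl fun m hm => ?_
    simp only [Finset.mem_Ico] at hm
    rw [h m (by omega) (by omega)]

lemma len_negSwap_up {n : ℕ} {v : List ℤ} (h : IsCol n n v) {r j : ℕ} (hr : r < j) (hj : j < n)
    (hs : slt (v.getD r 0) (-(v.getD j 0))) :
    len (applyRefl v (r + 1, -((j + 1 : ℕ) : ℤ))) = len v + 1 +
      2 * (costNeg n v r j (v.getD r 0) (-(v.getD j 0)) +
        sigmaAB (-(v.getD r 0)) (-(v.getD j 0))) := by
  have hl := h.len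
  have h' := h.negSwap (r := r) (j := j) (by omega) hj (by omega)
  have hg := fun p => getD_negSwap v r j p (by omega) (by omega) (by omega)
  have hi := applyRefl_invol hl (β := (r + 1, -((j + 1 : ℕ) : ℤ))) (Or.inl ⟨r, j, hr, hj, rfl⟩)
  generalize applyRefl v (r + 1, -((j + 1 : ℕ) : ℤ)) = v' at *
  have er : v'.getD r 0 = -(v.getD j 0) := by rw [hg r, if_neg (by omega), if_pos rfl]
  have ej : v'.getD j 0 = -(v.getD r 0) := by rw [hg j, if_pos rfl]
  have key := len_negSwap h' hr hj (by rw [er, ej, neg_neg]; exact hs)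
  rw [hi, er, ej, neg_neg, sigmaAB_comm, costNeg_congr (w := v) _ hr] at key
  · exact key
  · intro p h1 h2; rw [hg p, if_neg h2, if_neg h1]

lemma len_swap_up {n : ℕ} {v : List ℤ} (h : IsCol n n v) {r j : ℕ} (hr : r < j) (hj : j < n)
    (hs : slt (v.getD r 0) (v.getD j 0)) :
    len (applyRefl v (r + 1, ((j + 1 : ℕ) : ℤ))) = len v + 1 +
      2 * (∑ m ∈ Finset.Ioo r j, bI (v.getD r 0) (v.getD j 0) (v.getD m 0)) := by
  have hl := h.len
  have h' := h.swap (r := r) (j := j) (by omega) hj (by omega)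
  have hg := fun p => getD_swap v r j p (by omega) (by omega)
  have hi := applyRefl_invol hl (β := (r + 1, ((j + 1 : ℕ) : ℤ)))
    (Or.inr (Or.inl ⟨r, j, hr, hj, rfl⟩))
  generalize applyRefl v (r + 1, ((j + 1 : ℕ) : ℤ)) = v' at *
  have er : v'.getD r 0 = v.getD j 0 := by rw [hg r, if_neg (by omega), if_pos rfl]
  have ej : v'.getD j 0 = v.getD r 0 := by rw [hg j, if_pos rfl]
  have key := len_swap h' hr hj (by rw [er, ej]; exact hs)
  rw [hi, er, ej] at key
  rw [key]
  congr 2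
  refine Finset.sum_congr rfl fun m hm => ?_
  simp only [Finset.mem_Ioo] at hm
  rw [hg m, if_neg (by omega), if_neg (by omega)]

lemma len_negOne_up {n : ℕ} {v : List ℤ} (h : IsCol n n v) {j : ℕ} (hj : j < n)
    (hs : slt (v.getD j 0) (-(v.getD j 0))) :
    len (applyRefl v (j + 1, -((j + 1 : ℕ) : ℤ))) = len v + 1 +
      2 * (∑ m ∈ Finset.Ico (j + 1) n, bI (v.getD j 0) (-(v.getD j 0)) (v.getD m 0)) := by
  have hl := h.len
  have h' := h.negOne (j := j) hj
  have hg := fun p => getD_negOne v j p (by omega)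
  have hi := applyRefl_invol hl (β := (j + 1, -((j + 1 : ℕ) : ℤ))) (Or.inr (Or.inr ⟨j, hj, rfl⟩))
  generalize applyRefl v (j + 1, -((j + 1 : ℕ) : ℤ)) = v' at *
  have ej : v'.getD j 0 = -(v.getD j 0) := by rw [hg j, if_pos rfl]
  have key := len_negOne h' hj (by rw [ej, neg_neg]; exact hs)
  rw [hi, ej, neg_neg] at key
  rw [key]
  congr 2
  refine Finset.sum_congr rfl fun m hm => ?_
  simp only [Finset.mem_Ico] at hm
  rw [hg m, if_neg (by omega)]

/-- Every reflection changes the parity of the length. -/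
lemma len_applyRefl_odd {n : ℕ} {w : List ℤ} (h : IsCol n n w) {β : ℕ × ℤ} (hβ : PosRefl n β) :
    ∃ c, len w = len (applyRefl w β) + 1 + 2 * c ∨ len (applyRefl w β) = len w + 1 + 2 * c := by
  rcases hβ with ⟨r, j, h1, h2, rfl⟩ | ⟨r, j, h1, h2, rfl⟩ | ⟨j, h1, rfl⟩
  · by_cases hs : slt (-(w.getD j 0)) (w.getD r 0)
    · exact ⟨_, Or.inl (len_negSwap h h1 h2 hs)⟩
    · have := not_slt (h.ent j h2).neg (h.ent r (by omega))
        (h.dist r j (by omega) h2 (by omega)).2.symm hs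
      exact ⟨_, Or.inr (len_negSwap_up h h1 h2 this)⟩
  · by_cases hs : slt (w.getD j 0) (w.getD r 0)
    · exact ⟨_, Or.inl (len_swap h h1 h2 hs)⟩
    · have := not_slt (h.ent j h2) (h.ent r (by omega))
        (h.dist r j (by omega) h2 (by omega)).1.symm hs
      exact ⟨_, Or.inr (len_swap_up h h1 h2 this)⟩
  · by_cases hs : slt (-(w.getD j 0)) (w.getD j 0)
    · exact ⟨_, Or.inl (len_negOne h h1 hs)⟩
    · have := not_slt (h.ent j h1).neg (h.ent j h1)
        (by have := h.ent j h1; unfold Ent at this; omega) hs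
      exact ⟨_, Or.inr (len_negOne_up h h1 this)⟩

section Steps
variable {A : Type*} [CommRing A] (t : A)

lemma up_negSwap {n : ℕ} {v : List ℤ} (h : IsCol n n v) {r j : ℕ} (hr : r < j) (hj : j < n)
    (g : List ℤ → A) : up t (r + 1, -((j + 1 : ℕ) : ℤ)) g v =
      g v + if slt (v.getD r 0) (-(v.getD j 0)) then
        t ^ (costNeg n v r j (v.getD r 0) (-(v.getD j 0)) +
          sigmaAB (-(v.getD r 0)) (-(v.getD j 0))) * (1 - t) *
          g (applyRefl v (r + 1, -((j + 1 : ℕ) : ℤ))) else 0 := by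
  unfold up
  split_ifs with h1 h2 h2
  · congr 4
    have := len_negSwap_up h hr hj h2
    omega
  · exfalso
    have := len_negSwap h hr hj (not_slt (h.ent r (by omega)) (h.ent j hj).neg
      (h.dist r j (by omega) hj (by omega)).2 h2)
    omega
  · exfalso
    have := len_negSwap_up h hr hj h2
    omega
  · rfl

lemma up_swap {n : ℕ} {v : List ℤ} (h : IsCol n n v) {r j : ℕ} (hr : r < j) (hj : j < n)
    (g : List ℤ → A) : up t (r + 1, ((j + 1 : ℕ) : ℤ)) g v =
      g v + if slt (v.getD r 0) (v.getD j 0) then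
        t ^ (∑ m ∈ Finset.Ioo r j, bI (v.getD r 0) (v.getD j 0) (v.getD m 0)) * (1 - t) *
          g (applyRefl v (r + 1, ((j + 1 : ℕ) : ℤ))) else 0 := by
  unfold up
  split_ifs with h1 h2 h2
  · congr 4
    have := len_swap_up h hr hj h2
    omega
  · exfalso
    have := len_swap h hr hj (not_slt (h.ent r (by omega)) (h.ent j hj)
      (h.dist r j (by omega) hj (by omega)).1 h2)
    omega
  · exfalso
    have := len_swap_up h hr hj h2
    omega
  · rfl

lemma up_negOne {n : ℕ} {v : List ℤ} (h : IsCol n n v) {j : ℕ} (hj : j < n)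
    (g : List ℤ → A) : up t (j + 1, -((j + 1 : ℕ) : ℤ)) g v =
      g v + if slt (v.getD j 0) (-(v.getD j 0)) then
        t ^ (∑ m ∈ Finset.Ico (j + 1) n, bI (v.getD j 0) (-(v.getD j 0)) (v.getD m 0)) * (1 - t) *
          g (applyRefl v (j + 1, -((j + 1 : ℕ) : ℤ))) else 0 := by
  unfold up
  split_ifs with h1 h2 h2
  · congr 4
    have := len_negOne_up h hj h2
    omega
  · exfalso
    have := len_negOne h hj (not_slt (h.ent j hj) (h.ent j hj).neg
      (by have := h.ent j hj; unfold Ent at this; omega) h2)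
    omega
  · exfalso
    have := len_negOne_up h hj h2
    omega
  · rfl

end Steps

/-! ### Reflections moving a single position of the column -/

lemma bI_split {n : ℕ} {a y b x : ℤ} (ha : Ent n a) (hy : Ent n y) (hb : Ent n b) (hx : Ent n x)
    (h1 : slt a y) (h2 : slt y b) (hxy : x ≠ y) : bI a b x = bI a y x + bI y b x := by
  rw [slt_iff ha hy] at h1
  rw [slt_iff hy hb] at h2
  rw [ne_eq, ← ky_inj hx hy] at hxy
  rw [bI_ky ha hb hx, bI_ky ha hy hx, bI_ky hy hb hx]
  split_ifs <;> omega

lemma bI_special {n : ℕ} {c y b : ℤ} (hc : Ent n c) (hy : Ent n y) (hb : Ent n b)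
    (h1 : slt c y) (h2 : slt y b) (h3 : y ≠ -b) (h4 : c ≠ -y) (h5 : c ≠ -b) :
    bI y b (-c) + bI y b c + bI c b (-b) = bI c b (-y) + bI y b (-b) := by
  rw [slt_iff hc hy] at h1
  rw [slt_iff hy hb] at h2
  rw [ne_eq, ← ky_inj hy hb.neg] at h3
  rw [ne_eq, ← ky_inj hc hy.neg] at h4
  rw [ne_eq, ← ky_inj hc hb.neg] at h5
  rw [bI_ky hy hb hc.neg, bI_ky hy hb hc, bI_ky hc hb hb.neg, bI_ky hc hb hy.neg,
    bI_ky hy hb hb.neg]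
  rw [ky_neg hb] at *
  rw [ky_neg hy] at *
  rw [ky_neg hc] at *
  generalize ky n b = B at *
  generalize ky n c = C at *
  generalize ky n y = Y at *
  clear hb hc hy
  split_ifs <;> omega

/-- `1` if `c > 0 > b`, else `0`. -/
def sg (c b : ℤ) : ℕ := sigmaAB (-c) b

lemma sg_ky {n : ℕ} {c b : ℤ} (hc : Ent n c) (hb : Ent n b) :
    sg c b = if ky n c < 0 ∧ 0 < ky n b then 1 else 0 := by
  unfold sg sigmaAB
  simp only [neg_iff_ky hc.neg, neg_iff_ky hb, ky_neg hc, Left.neg_pos_iff]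

lemma slt_trans {n : ℕ} {a y b : ℤ} (ha : Ent n a) (hy : Ent n y) (hb : Ent n b)
    (h1 : slt a y) (h2 : slt y b) : slt a b := by
  rw [slt_iff ha hy] at h1
  rw [slt_iff hy hb] at h2
  rw [slt_iff ha hb]; omega

lemma slt_irrefl (a : ℤ) : ¬ slt a a := by unfold slt; omega

/-- Every letter occurs in a window up to sign. -/
lemma IsCol.exists_entry {n : ℕ} {v : List ℤ} (h : IsCol n n v) {b : ℤ} (hb : Ent n b) :
    ∃ m, m < n ∧ (b = v.getD m 0 ∨ b = -(v.getD m 0)) := by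
  have hw := mem_allWindows.2 h
  unfold allWindows at hw
  simp only [Finset.mem_image, Finset.mem_univ, true_and, Prod.exists] at hw
  obtain ⟨σ, ε, rfl⟩ := hw
  unfold Ent at hb
  refine ⟨σ.symm ⟨b.natAbs - 1, by omega⟩, Fin.isLt _, ?_⟩
  rw [List.getD_eq_getElem _ _ (by simp)]
  simp only [List.getElem_map, List.getElem_finRange, Fin.cast_mk, Fin.eta, Equiv.apply_symm_apply]
  split_ifs <;> omega

section Delta
variable {A : Type*} [CommRing A] (t : A)

/-- Indicator function of the windows with entry `b` in (0-based) position `j`. -/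
def gAt (j : ℕ) (b : ℤ) : List ℤ → A := fun u => if u.getD j 0 = b then 1 else 0

/-- The reflections `(j+1,-(k+1)), …, (j+1,-i)`. -/
def L3 (j k i : ℕ) : List (ℕ × ℤ) :=
  (List.range (i - k)).map (fun r => (j + 1, -((k + 1 + r : ℕ) : ℤ)))

lemma L3_succ {j k i : ℕ} (h : k ≤ i) :
    L3 j k (i + 1) = L3 j k i ++ [(j + 1, -((i + 1 : ℕ) : ℤ))] := by
  unfold L3
  rw [show i + 1 - k = (i - k) + 1 by omega, List.range_succ, List.map_append]
  simp only [List.map_cons, List.map_nil]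
  rw [show k + 1 + (i - k) = i + 1 by omega]

/-- The exponent of the partial sums over `L3`, before subtraction of `[c ≺ -b ≺ b]`. -/
def S3 (n j i : ℕ) (v : List ℤ) (c b : ℤ) : ℕ :=
  ∑ m ∈ Finset.Ico (j + 1) n, (bI c b (v.getD m 0) + if i ≤ m then bI c b (-(v.getD m 0)) else 0) +
    sg c b

lemma S3_ge {n j i k q : ℕ} {v : List ℤ} {c b : ℤ} (hjk : j < k) (hq : k ≤ q) (hqi : q < n)
    (hb : b = -(v.getD q 0)) : bI c b (-b) ≤ S3 n j i v c b := by
  unfold S3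
  have h1 := Finset.single_le_sum (s := Finset.Ico (j + 1) n)
    (f := fun m => bI c b (v.getD m 0) + if i ≤ m then bI c b (-(v.getD m 0)) else 0)
    (fun _ _ => Nat.zero_le _) (a := q) (by simp; omega)
  beta_reduce at h1
  have h2 : -b = v.getD q 0 := by rw [hb, neg_neg]
  rw [h2]
  omega

lemma S3_succ {n j k i : ℕ} {v : List ℤ} {c b : ℤ} (hjk : j < k) (hki : k ≤ i) (hi : i < n) :
    S3 n j i v c b = S3 n j (i + 1) v c b + bI c b (-(v.getD i 0)) := by
  unfold S3
  have hmem : i ∈ Finset.Ico (j + 1) n := by simp; omega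
  rw [← Finset.add_sum_erase _ _ hmem,
    ← Finset.add_sum_erase _ (fun m => bI c b (v.getD m 0) +
      if i + 1 ≤ m then bI c b (-(v.getD m 0)) else 0) hmem]
  rw [if_pos le_rfl, if_neg (by omega), Finset.sum_congr rfl
    (g := fun m => bI c b (v.getD m 0) + if i + 1 ≤ m then bI c b (-(v.getD m 0)) else 0)]
  · ring
  · intro m hm
    have := Finset.ne_of_mem_erase hm
    congr 1
    simp only [show (i ≤ m) ↔ (i + 1 ≤ m) by omega]

/-- Additivity of the exponents when `(j,-i)` is applied. -/
lemma S3_step {n j k i q : ℕ} {v v' : List ℤ} {b : ℤ} (hv : IsCol n n v) (hjk : j < k)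
    (hki : k ≤ i) (hi : i < n) (hb : Ent n b)
    (hv' : ∀ p, v'.getD p 0 = if p = i then -(v.getD j 0) else if p = j then -(v.getD i 0) else
      v.getD p 0)
    (h1 : slt (v.getD j 0) (-(v.getD i 0))) (h2 : slt (-(v.getD i 0)) b)
    (hkq : k ≤ q) (hqi : q < i) (hbq : b = -(v.getD q 0)) :
    costNeg n v j i (v.getD j 0) (-(v.getD i 0)) + sg (v.getD j 0) (-(v.getD i 0)) +
      S3 n j i v' (-(v.getD i 0)) b + bI (v.getD j 0) b (-b) =
    S3 n j (i + 1) v (v.getD j 0) b + bI (-(v.getD i 0)) b (-b) := by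
  have hc := hv.ent j (by omega)
  have hy := (hv.ent i hi).neg
  have hsg : sg (v.getD j 0) (-(v.getD i 0)) + sg (-(v.getD i 0)) b = sg (v.getD j 0) b := by
    rw [slt_iff hc hy] at h1
    rw [slt_iff hy hb] at h2
    rw [sg_ky hc hy, sg_ky hy hb, sg_ky hc hb]
    have := ky_ne_zero hy
    split_ifs <;> omega
  have hsp := bI_special hc hy hb h1 h2
    (by rw [hbq]; have := hv.dist i q hi (by omega) (by omega); omega)
    (by have := hv.dist j i (by omega) hi (by omega); omega)
    (by rw [hbq]; have := hv.dist j q (by omega) (by omega) (by omega); omega)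
  have hmem : i ∈ Finset.Ico (j + 1) n := by simp; omega
  have hcost : costNeg n v j i (v.getD j 0) (-(v.getD i 0)) =
      ∑ m ∈ (Finset.Ico (j + 1) n).erase i, (bI (v.getD j 0) (-(v.getD i 0)) (v.getD m 0) +
        if i + 1 ≤ m then bI (v.getD j 0) (-(v.getD i 0)) (-(v.getD m 0)) else 0) := by
    unfold costNeg
    have e1 : Finset.Ioo j i = ((Finset.Ico (j + 1) n).erase i).filter (fun m => m < i) := by
      ext x; simp; omega
    have e2 : Finset.Ico (i + 1) n = ((Finset.Ico (j + 1) n).erase i).filter (fun m => i < m) := by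
      ext x; simp; omega
    rw [e1, e2, Finset.sum_filter, Finset.sum_filter, ← Finset.sum_add_distrib]
    refine Finset.sum_congr rfl fun m hm => ?_
    have := Finset.ne_of_mem_erase hm
    split_ifs <;> omega
  unfold S3
  rw [hcost, ← Finset.add_sum_erase _ _ hmem,
    ← Finset.add_sum_erase _ (fun m => bI (v.getD j 0) b (v.getD m 0) +
      if i + 1 ≤ m then bI (v.getD j 0) b (-(v.getD m 0)) else 0) hmem]
  have hii : v'.getD i 0 = -(v.getD j 0) := by rw [hv', if_pos rfl]
  rw [hii, if_pos le_rfl, if_neg (by omega), neg_neg]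
  rw [neg_neg] at hsp
  have hsum : ∑ m ∈ (Finset.Ico (j + 1) n).erase i, (bI (v.getD j 0) b (v.getD m 0) +
        if i + 1 ≤ m then bI (v.getD j 0) b (-(v.getD m 0)) else 0) =
      ∑ m ∈ (Finset.Ico (j + 1) n).erase i, (bI (v.getD j 0) (-(v.getD i 0)) (v.getD m 0) +
        if i + 1 ≤ m then bI (v.getD j 0) (-(v.getD i 0)) (-(v.getD m 0)) else 0) +
      ∑ m ∈ (Finset.Ico (j + 1) n).erase i, (bI (-(v.getD i 0)) b (v'.getD m 0) +
        if i ≤ m then bI (-(v.getD i 0)) b (-(v'.getD m 0)) else 0) := by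
    rw [← Finset.sum_add_distrib]
    refine Finset.sum_congr rfl fun m hm => ?_
    simp only [Finset.mem_erase, Finset.mem_Ico] at hm
    have hm2 := hv.ent m (by omega)
    have hd := hv.dist m i (by omega) hi hm.1
    have hvm : v'.getD m 0 = v.getD m 0 := by rw [hv' m, if_neg hm.1, if_neg (by omega)]
    rw [hvm]
    rw [bI_split hc hy hb hm2 h1 h2 hd.2,
      bI_split hc hy hb hm2.neg h1 h2 (fun h => hd.1 (by simpa using h))]
    simp only [show (i ≤ m) ↔ (i + 1 ≤ m) by omega]
    split_ifs <;> omega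
  omega

/-- The sum over the chains in `L3 j k i` that end at `v` and start at a window with entry `b` in
position `j`. -/
lemma Up_L3 {n j k : ℕ} (hjk : j < k) {b : ℤ} (hb : Ent n b) :
    ∀ i, k ≤ i → i ≤ n → ∀ v, IsCol n n v →
      (b = v.getD j 0 → Up t (L3 j k i) (gAt j b) v = 1) ∧
      (slt (v.getD j 0) b → (∃ q, k ≤ q ∧ q < i ∧ b = -(v.getD q 0)) →
        Up t (L3 j k i) (gAt j b) v =
          (1 - t) * t ^ (S3 n j i v (v.getD j 0) b - bI (v.getD j 0) b (-b))) ∧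
      (b ≠ v.getD j 0 → ¬ (slt (v.getD j 0) b ∧ ∃ q, k ≤ q ∧ q < i ∧ b = -(v.getD q 0)) →
        Up t (L3 j k i) (gAt j b) v = 0) := by
  intro i hi
  induction i, hi using Nat.le_induction with
  | base =>
    intro _ v hv
    have : Up t (L3 j k k) (gAt j b) v = gAt j b v := by simp [L3, Up_nil]
    rw [this]
    unfold gAt
    refine ⟨fun h => if_pos h.symm, fun _ ⟨q, h1, h2, _⟩ => by omega, fun h _ => if_neg h.symm⟩
  | succ i hki ih =>
    intro hin v hv
    have ih := ih (by omega)
    rw [L3_succ hki, Up_snoc, up_negSwap t hv (by omega : j < i) (by omega)]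
    have hvl := hv.len
    have hv2 := hv.negSwap (r := j) (j := i) (by omega) (by omega) (by omega)
    have hg := fun p => getD_negSwap v j i p (by omega) (by omega) (by omega)
    obtain ⟨a1, a2, a3⟩ := ih v hv
    obtain ⟨c1, c2, c3⟩ := ih _ hv2
    have hgj : (applyRefl v (j + 1, -((i + 1 : ℕ) : ℤ))).getD j 0 = -(v.getD i 0) := by
      rw [hg, if_neg (by omega), if_pos rfl]
    have hgq : ∀ q, k ≤ q → q < i →
        (applyRefl v (j + 1, -((i + 1 : ℕ) : ℤ))).getD q 0 = v.getD q 0 := by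
      intro q h1 h2; rw [hg, if_neg (by omega), if_neg (by omega)]
    rw [hgj] at c1 c2 c3
    have hc := hv.ent j (by omega)
    have hy := (hv.ent i (by omega)).neg
    have hdji := hv.dist j i (by omega) (by omega) (by omega)
    refine ⟨fun hbc => ?_, fun hs ⟨q, h1, h2, h3⟩ => ?_, fun hbc hne => ?_⟩
    · rw [a1 hbc]
      split_ifs with hs
      · rw [c3 (by rw [hbc]; exact hdji.2)
          (fun hh => not_slt_of hc hy hs (by rw [← hbc]; exact hh.1))]
        ring
      · ring
    · have hbc : b ≠ v.getD j 0 := fun h => by rw [h] at hs; exact slt_irrefl _ hs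
      by_cases hqi : q = i
      · subst hqi
        rw [a3 hbc, if_pos (by rw [← h3]; exact hs), c1 h3, ← h3]
        · have hkey : S3 n j (q + 1) v (v.getD j 0) b = costNeg n v j q (v.getD j 0) b +
              sg (v.getD j 0) b + bI (v.getD j 0) b (-b) := by
            unfold S3 costNeg
            have e1 : Finset.Ioo j q = ((Finset.Ico (j + 1) n).erase q).filter
                (fun m => m < q) := by ext x; simp; omega
            have e2 : Finset.Ico (q + 1) n = ((Finset.Ico (j + 1) n).erase q).filter
                (fun m => q < m) := by ext x; simp; omega
            rw [e1, e2, Finset.sum_filter, Finset.sum_filter, ← Finset.sum_add_distrib,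
              ← Finset.add_sum_erase (Finset.Ico (j + 1) n) _ (a := q) (by simp; omega),
              if_neg (by omega), show v.getD q 0 = -b by omega]
            rw [Finset.sum_congr rfl (g := fun m => (if m < q then bI (v.getD j 0) b (v.getD m 0)
              else 0) + if q < m then bI (v.getD j 0) b (v.getD m 0) +
                bI (v.getD j 0) b (-(v.getD m 0)) else 0)]
            · ring
            · intro m hm
              have := Finset.ne_of_mem_erase hm
              split_ifs <;> omega
          rw [hkey, Nat.add_sub_cancel]
          unfold sg
          ring
        · rintro ⟨-, q', h4, h5, h6⟩
          have := hv.dist q q' (by omega) (by omega) (by omega)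
          omega
      · have hq' : q < i := by omega
        rw [a2 hs ⟨q, h1, hq', h3⟩]
        have hS := S3_succ (v := v) (c := v.getD j 0) (b := b) hjk hki (by omega : i < n)
        have hge := S3_ge (b := b) (i := i + 1) (c := v.getD j 0) hjk h1 (by omega : q < n) h3
        have hby : b ≠ -(v.getD i 0) := by
          have := hv.dist q i (by omega) (by omega) hqi; omega
        by_cases hy1 : slt (v.getD j 0) (-(v.getD i 0))
        · rw [if_pos hy1]
          by_cases hy2 : slt (-(v.getD i 0)) b
          · rw [c2 hy2 ⟨q, h1, hq', by rw [hgq q h1 hq']; exact h3⟩]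
            have hst := S3_step hv hjk hki (by omega) hb hg hy1 hy2 h1 hq' h3
            have hge' := S3_ge (b := b) (i := i) (c := -(v.getD i 0))
              (v := applyRefl v (j + 1, -((i + 1 : ℕ) : ℤ))) hjk h1 (by omega : q < n)
              (by rw [hgq q h1 hq']; exact h3)
            have hone : bI (v.getD j 0) b (-(v.getD i 0)) = 1 := by
              unfold bI; rw [if_pos ⟨hy1, hy2⟩]
            unfold sg at hst
            generalize S3 n j i (applyRefl v (j + 1, -((i + 1 : ℕ) : ℤ))) (-(v.getD i 0)) b = x1 at *
            generalize costNeg n v j i (v.getD j 0) (-(v.getD i 0)) +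
              sigmaAB (-(v.getD j 0)) (-(v.getD i 0)) = x2 at *
            have e1 : S3 n j i v (v.getD j 0) b - bI (v.getD j 0) b (-b) =
              S3 n j (i + 1) v (v.getD j 0) b - bI (v.getD j 0) b (-b) + 1 := by omega
            have e2 : S3 n j (i + 1) v (v.getD j 0) b - bI (v.getD j 0) b (-b) =
              x2 + (x1 - bI (-(v.getD i 0)) b (-b)) := by omega
            rw [e1, e2, pow_add, pow_add]
            ring
          · rw [c3 hby (fun h => hy2 h.1)]
            have : bI (v.getD j 0) b (-(v.getD i 0)) = 0 := by
              unfold bI; rw [if_neg (fun h => hy2 h.2)]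
            rw [hS, this]
            ring
        · rw [if_neg hy1]
          have : bI (v.getD j 0) b (-(v.getD i 0)) = 0 := by
            unfold bI; rw [if_neg (fun h => hy1 h.1)]
          rw [hS, this]
          ring
    · rw [a3 hbc (fun ⟨h, q, h1, h2, h3⟩ => hne ⟨h, q, h1, by omega, h3⟩)]
      split_ifs with hs
      · rw [c3 (fun h => hne ⟨by rw [h]; exact hs, i, hki, by omega, h⟩)]
        · ring
        · rintro ⟨h, q, h1, h2, h3⟩
          rw [hgq q h1 h2] at h3
          exact hne ⟨slt_trans hc hy hb hs h, q, h1, by omega, h3⟩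
      · ring

/-- The reflections `(j+1,-(k+1)), …, (j+1,-n), (j+1,-(j+1))`. -/
def L2 (n j k : ℕ) : List (ℕ × ℤ) := L3 j k n ++ [(j + 1, -((j + 1 : ℕ) : ℤ))]

lemma S3_top {n j : ℕ} {v : List ℤ} {c b : ℤ} :
    S3 n j n v c b = ∑ m ∈ Finset.Ico (j + 1) n, bI c b (v.getD m 0) + sg c b := by
  unfold S3
  congr 1
  refine Finset.sum_congr rfl fun m hm => ?_
  simp only [Finset.mem_Ico] at hm
  rw [if_neg (by omega), add_zero]

/-- The analogue of `Up_L3` for the sequence `L2`: the correction terms in the exponent disappear. -/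
lemma Up_L2 {n j k : ℕ} (hjk : j < k) (hkn : k ≤ n) {b : ℤ} (hb : Ent n b) (v : List ℤ)
    (hv : IsCol n n v) :
      (b = v.getD j 0 → Up t (L2 n j k) (gAt j b) v = 1) ∧
      (slt (v.getD j 0) b → (b = -(v.getD j 0) ∨ ∃ q, k ≤ q ∧ q < n ∧ b = -(v.getD q 0)) →
        Up t (L2 n j k) (gAt j b) v =
          (1 - t) * t ^ (∑ m ∈ Finset.Ico (j + 1) n, bI (v.getD j 0) b (v.getD m 0))) ∧
      (b ≠ v.getD j 0 → ¬ (slt (v.getD j 0) b ∧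
        (b = -(v.getD j 0) ∨ ∃ q, k ≤ q ∧ q < n ∧ b = -(v.getD q 0))) →
        Up t (L2 n j k) (gAt j b) v = 0) := by
  unfold L2
  rw [Up_snoc, up_negOne t hv (by omega)]
  have hvl := hv.len
  have hv2 := hv.negOne (j := j) (by omega)
  have hg := fun p => getD_negOne v j p (by omega)
  obtain ⟨a1, a2, a3⟩ := Up_L3 t hjk hb n hkn le_rfl v hv
  obtain ⟨c1, c2, c3⟩ := Up_L3 t hjk hb n hkn le_rfl _ hv2
  generalize applyRefl v (j + 1, -((j + 1 : ℕ) : ℤ)) = v' at *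
  have hgj : v'.getD j 0 = -(v.getD j 0) := by rw [hg, if_pos rfl]
  have hgq : ∀ q, q ≠ j → v'.getD q 0 = v.getD q 0 := by
    intro q h1; rw [hg, if_neg h1]
  rw [hgj] at c1 c2 c3
  rw [S3_top] at a2 c2
  have hc := hv.ent j (by omega)
  have hc0 : v.getD j 0 ≠ -(v.getD j 0) := by unfold Ent at hc; omega
  refine ⟨fun hbc => ?_, fun hs hor => ?_, fun hbc hne => ?_⟩
  · rw [a1 hbc]
    split_ifs with hs
    · rw [c3 (by rw [hbc]; exact hc0)
        (fun hh => not_slt_of hc hc.neg hs (by have := hh.1; rwa [hbc] at this))]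
      ring
    · ring
  · have hbc : b ≠ v.getD j 0 := fun h => by rw [h] at hs; exact slt_irrefl _ hs
    rcases hor with h | ⟨q, h1, h2, h3⟩
    · rw [a3 hbc, if_pos (by rw [← h]; exact hs), c1 h, ← h]
      · ring
      · rintro ⟨-, q', h4, h5, h6⟩
        have := hv.dist j q' (by omega) (by omega) (by omega)
        omega
    · rw [a2 hs ⟨q, h1, h2, h3⟩]
      have hbm : b ≠ -(v.getD j 0) := by
        have := hv.dist q j (by omega) (by omega) (by omega); omega
      -- all comparisons between `±b` and `±c` are decided by the integers `ky b`, `ky c`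
      have k1 := (slt_iff hc hb).1 hs
      have k2 : sg (v.getD j 0) b = _ := sg_ky hc hb
      have k3 : bI (v.getD j 0) b (-b) = _ := bI_ky hc hb hb.neg
      have k4 := ky_ne_zero hb
      have k4' := ky_ne_zero hc
      have k5 := ne_ky hb hc ⟨hbc, hbm⟩
      have k6 := ky_neg hc
      have k7 := ky_neg hb
      by_cases hy1 : slt (v.getD j 0) (-(v.getD j 0))
      · rw [if_pos hy1]
        have k8 := (slt_iff hc hc.neg).1 hy1
        by_cases hy2 : slt (-(v.getD j 0)) b
        · have k9 := (slt_iff hc.neg hb).1 hy2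
          rw [c2 hy2 ⟨q, h1, h2, by rw [hgq q (by omega)]; exact h3⟩]
          have k10 : sg (-(v.getD j 0)) b = _ := sg_ky hc.neg hb
          have k11 : bI (-(v.getD j 0)) b (-b) = _ := bI_ky hc.neg hb hb.neg
          rw [if_pos (by omega)] at k2
          rw [if_neg (by omega)] at k3 k10 k11
          rw [k2, k3, k10, k11]
          have : ∑ m ∈ Finset.Ico (j + 1) n, bI (v.getD j 0) b (v.getD m 0) =
              ∑ m ∈ Finset.Ico (j + 1) n, bI (v.getD j 0) (-(v.getD j 0)) (v.getD m 0) +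
              ∑ m ∈ Finset.Ico (j + 1) n, bI (-(v.getD j 0)) b (v'.getD m 0) := by
            rw [← Finset.sum_add_distrib]
            refine Finset.sum_congr rfl fun m hm => ?_
            simp only [Finset.mem_Ico] at hm
            rw [hgq m (by omega)]
            exact bI_split hc hc.neg hb (hv.ent m (by omega)) hy1 hy2
              (hv.dist m j (by omega) (by omega) (by omega)).2
          rw [this]
          simp only [add_zero, Nat.sub_zero, pow_add]
          ring
        · rw [c3 hbm (fun h => hy2 h.1)]
          have k9 := mt (slt_iff hc.neg hb).2 hy2
          have : sg (v.getD j 0) b = bI (v.getD j 0) b (-b) := by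
            rw [k2, k3]; split_ifs <;> omega
          rw [this, Nat.add_sub_cancel]
          ring
      · rw [if_neg hy1]
        have k8 := mt (slt_iff hc hc.neg).2 hy1
        have : sg (v.getD j 0) b = bI (v.getD j 0) b (-b) := by
          rw [k2, k3]; split_ifs <;> omega
        rw [this, Nat.add_sub_cancel]
        ring
  · rw [a3 hbc (fun ⟨h, h'⟩ => hne ⟨h, Or.inr h'⟩)]
    split_ifs with hs
    · rw [c3 (fun h => hne ⟨by rw [h]; exact hs, Or.inl h⟩)]
      · ring
      · rintro ⟨h, q, h1, h2, h3⟩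
        rw [hgq q (by omega)] at h3
        exact hne ⟨slt_trans hc hc.neg hb hs h, Or.inr ⟨q, h1, h2, h3⟩⟩
    · ring

/-- The sequence `L2` followed by the reflections `(j+1,n), …, (j+1,i+1)`. -/
def L1 (n j k i : ℕ) : List (ℕ × ℤ) :=
  L2 n j k ++ (List.range (n - i)).map (fun r => (j + 1, ((n - r : ℕ) : ℤ)))

lemma L1_succ {n j k i : ℕ} (h : i < n) :
    L1 n j k i = L1 n j k (i + 1) ++ [(j + 1, ((i + 1 : ℕ) : ℤ))] := by
  unfold L1
  rw [show n - i = (n - (i + 1)) + 1 by omega, List.range_succ, List.map_append]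
  simp only [List.map_cons, List.map_nil, List.append_assoc]
  rw [show n - (n - (i + 1)) = i + 1 by omega]

/-- The analogue of `Up_L3` for the sequence `L1`.  For `i = k` the condition on the entries of `v`
in positions `k, …, i - 1` is void, so the sum depends on `v` through its first `k` entries only. -/
lemma Up_L1 {n j k : ℕ} (hjk : j < k) {b : ℤ} (hb : Ent n b) :
    ∀ i, k ≤ i → i ≤ n → ∀ v, IsCol n n v →
      (∀ m, m < k → m ≠ j → b ≠ v.getD m 0 ∧ b ≠ -(v.getD m 0)) →
      (b = v.getD j 0 → Up t (L1 n j k i) (gAt j b) v = 1) ∧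
      (slt (v.getD j 0) b → (∀ q, k ≤ q → q < i → b ≠ v.getD q 0) →
        Up t (L1 n j k i) (gAt j b) v =
          (1 - t) * t ^ (∑ m ∈ Finset.Ico (j + 1) i, bI (v.getD j 0) b (v.getD m 0))) ∧
      (b ≠ v.getD j 0 → ¬ (slt (v.getD j 0) b ∧ ∀ q, k ≤ q → q < i → b ≠ v.getD q 0) →
        Up t (L1 n j k i) (gAt j b) v = 0) := by
  intro i hki hin
  induction hin using Nat.decreasingInduction with
  | self =>
    intro v hv hoff
    have : L1 n j k n = L2 n j k := by simp [L1]
    rw [this]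
    obtain ⟨a1, a2, a3⟩ := Up_L2 t hjk hki hb v hv
    refine ⟨a1, fun hs hq => a2 hs ?_, fun hbc hne => a3 hbc ?_⟩
    · obtain ⟨m, hm, hm'⟩ := hv.exists_entry hb
      have hbc : b ≠ v.getD j 0 := fun h => by rw [h] at hs; exact slt_irrefl _ hs
      by_cases hmj : m = j
      · subst hmj; exact Or.inl (hm'.resolve_left hbc)
      · by_cases hmk : m < k
        · have := hoff m hmk hmj; tauto
        · exact Or.inr ⟨m, by omega, hm, hm'.resolve_left (hq m (by omega) hm)⟩
    · rintro ⟨h1, h2⟩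
      refine hne ⟨h1, fun q hq1 hq2 hq3 => ?_⟩
      have hq4 := hv.ent q hq2
      rcases h2 with h2 | ⟨q', h3, h4, h5⟩
      · have := hv.dist q j hq2 (by omega) (by omega); omega
      · by_cases hqq : q = q'
        · subst hqq; unfold Ent at hq4; omega
        · have := hv.dist q q' hq2 h4 hqq; omega
  | of_succ i hin ih =>
    intro v hv hoff
    have ih := ih (by omega)
    rw [L1_succ hin, Up_snoc, up_swap t hv (by omega : j < i) hin]
    have hvl := hv.len
    have hv2 := hv.swap (r := j) (j := i) (by omega) hin (by omega)
    have hg := fun p => getD_swap v j i p (by omega) (by omega)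
    obtain ⟨a1, a2, a3⟩ := ih v hv hoff
    have ih2 := ih _ hv2
    clear ih
    generalize applyRefl v (j + 1, ((i + 1 : ℕ) : ℤ)) = v' at *
    have hgj : v'.getD j 0 = v.getD i 0 := by rw [hg, if_neg (by omega), if_pos rfl]
    have hgi : v'.getD i 0 = v.getD j 0 := by rw [hg, if_pos rfl]
    have hgq : ∀ q, q ≠ j → q ≠ i → v'.getD q 0 = v.getD q 0 := by
      intro q h1 h2; rw [hg, if_neg h2, if_neg h1]
    obtain ⟨c1, c2, c3⟩ := ih2 (fun m h1 h2 => by rw [hgq m h2 (by omega)]; exact hoff m h1 h2)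
    rw [hgj] at c1 c2 c3
    have hc := hv.ent j (by omega)
    have hy := hv.ent i hin
    have hdji := hv.dist j i (by omega) hin (by omega)
    have hsplit : ∀ c, ∑ m ∈ Finset.Ico (j + 1) (i + 1), bI c b (v.getD m 0) =
        ∑ m ∈ Finset.Ico (j + 1) i, bI c b (v.getD m 0) + bI c b (v.getD i 0) :=
      fun c => Finset.sum_Ico_succ_top (by omega) _
    refine ⟨fun hbc => ?_, fun hs hq => ?_, fun hbc hne => ?_⟩
    · rw [a1 hbc]
      split_ifs with hs
      · rw [c3 (by rw [hbc]; exact hdji.1)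
          (fun hh => not_slt_of hc hy hs (by rw [← hbc]; exact hh.1))]
        ring
      · ring
    · have hbc : b ≠ v.getD j 0 := fun h => by rw [h] at hs; exact slt_irrefl _ hs
      by_cases hbi : b = v.getD i 0
      · rw [a3 hbc (fun h => h.2 i hki (by omega) hbi), if_pos (by rw [← hbi]; exact hs), c1 hbi,
          ← hbi]
        have : Finset.Ioo j i = Finset.Ico (j + 1) i := by ext x; simp
        rw [this]
        ring
      · have hq2 : ∀ q, k ≤ q → q < i + 1 → b ≠ v.getD q 0 := by
          intro q h1 h2
          by_cases hqi : q = i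
          · rw [hqi]; exact hbi
          · exact hq q h1 (by omega)
        rw [a2 hs hq2, hsplit]
        by_cases hy1 : slt (v.getD j 0) (v.getD i 0)
        · rw [if_pos hy1]
          by_cases hy2 : slt (v.getD i 0) b
          · rw [c2 hy2 (fun q h1 h2 => by
              by_cases hqi : q = i
              · rw [hqi, hgi]; exact hbc
              · rw [hgq q (by omega) hqi]; exact hq2 q h1 h2)]
            have e1 : bI (v.getD j 0) b (v.getD i 0) = 1 := by unfold bI; rw [if_pos ⟨hy1, hy2⟩]
            have e2 : ∑ m ∈ Finset.Ico (j + 1) i, bI (v.getD j 0) b (v.getD m 0) =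
                ∑ m ∈ Finset.Ioo j i, bI (v.getD j 0) (v.getD i 0) (v.getD m 0) +
                ∑ m ∈ Finset.Ico (j + 1) (i + 1), bI (v.getD i 0) b (v'.getD m 0) := by
              have : Finset.Ioo j i = Finset.Ico (j + 1) i := by ext x; simp
              rw [this, Finset.sum_Ico_succ_top (by omega), hgi]
              have e3 : bI (v.getD i 0) b (v.getD j 0) = 0 := by
                unfold bI; rw [if_neg (fun h => not_slt_of hc hy hy1 h.1)]
              rw [e3, add_zero, ← Finset.sum_add_distrib]
              refine Finset.sum_congr rfl fun m hm => ?_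
              simp only [Finset.mem_Ico] at hm
              rw [hgq m (by omega) (by omega)]
              exact bI_split hc hy hb (hv.ent m (by omega)) hy1 hy2
                (hv.dist m i (by omega) (by omega) (by omega)).1
            rw [e1, e2, pow_add, pow_add]
            ring
          · rw [c3 hbi (fun h => hy2 h.1)]
            have : bI (v.getD j 0) b (v.getD i 0) = 0 := by
              unfold bI; rw [if_neg (fun h => hy2 h.2)]
            rw [this]
            ring
        · rw [if_neg hy1]
          have : bI (v.getD j 0) b (v.getD i 0) = 0 := by
            unfold bI; rw [if_neg (fun h => hy1 h.1)]
          rw [this]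
          ring
    · rw [a3 hbc (fun ⟨h1, h2⟩ => hne ⟨h1, fun q h3 h4 => h2 q h3 (by omega)⟩)]
      split_ifs with hs
      · by_cases hbi : b = v.getD i 0
        · exfalso
          refine hne ⟨by rw [hbi]; exact hs, fun q h1 h2 h3 => ?_⟩
          have := hv.dist i q hin (by omega) (by omega)
          omega
        · rw [c3 hbi]
          · ring
          · rintro ⟨h1, h2⟩
            refine hne ⟨slt_trans hc hy hb hs h1, fun q h3 h4 => ?_⟩
            have := h2 q h3 (by omega)
            rwa [hgq q (by omega) (by omega)] at this
      · ring

end Delta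

/-! ### The final part of the chain -/

section Phi

/-- `(p,q)` precedes `(i,j)` in the order of the sequence
`(0,0), (0,1), (1,1), (0,2), (1,2), (2,2), …`. -/
def before (i j p q : ℕ) : Prop := q < j ∨ (q = j ∧ p < i)

instance (i j p q : ℕ) : Decidable (before i j p q) := by unfold before; infer_instance

/-- `ℓ₊(w)` plus the number of pairs `(p,q)` before `(i,j)` with `w(p) ≻ -w(q)`. -/
def phiSt (n i j : ℕ) (w : List ℤ) : ℤ :=
  St n (fun p q a b => sI b a + if before i j p q then sI (-b) a else 0)
    (fun p a => if before i j p p then sI (-a) a else 0) w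

lemma sI_nonneg (a b : ℤ) : 0 ≤ sI a b := by unfold sI; split_ifs <;> simp

lemma phiSt_nonneg (n i j : ℕ) (w : List ℤ) : 0 ≤ phiSt n i j w := by
  unfold phiSt St
  refine add_nonneg (Finset.sum_nonneg fun q _ => Finset.sum_nonneg fun p _ => ?_)
    (Finset.sum_nonneg fun q _ => ?_)
  · have h1 := sI_nonneg (w.getD q 0) (w.getD p 0)
    have h2 := sI_nonneg (-(w.getD q 0)) (w.getD p 0)
    beta_reduce
    split_ifs <;> omega
  · have h2 := sI_nonneg (-(w.getD q 0)) (w.getD q 0)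
    beta_reduce
    split_ifs <;> omega

lemma phiSt_row (n j : ℕ) (w : List ℤ) : phiSt n (j + 1) j w = phiSt n 0 (j + 1) w := by
  unfold phiSt St
  congr 1
  · refine Finset.sum_congr rfl fun q hq => Finset.sum_congr rfl fun p hp => ?_
    simp only [Finset.mem_range] at hq hp
    have : before (j + 1) j p q ↔ before 0 (j + 1) p q := by unfold before; omega
    simp only [this]
  · refine Finset.sum_congr rfl fun q hq => ?_
    have : before (j + 1) j q q ↔ before 0 (j + 1) q q := by unfold before; omega
    simp only [this]

lemma phiSt_zero {n : ℕ} {w : List ℤ} (h : w.length = n) : phiSt n 0 0 w = lplus w := by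
  rw [lplus_sum, h]
  unfold phiSt St
  simp [before]

lemma phiSt_top {n : ℕ} {w : List ℤ} (h : w.length = n) : phiSt n 0 n w = len w := by
  rw [len_eq_St h]
  unfold phiSt St
  congr 1
  · refine Finset.sum_congr rfl fun q hq => Finset.sum_congr rfl fun p hp => ?_
    simp only [Finset.mem_range] at hq hp
    have : before 0 n p q := by unfold before; omega
    simp only [if_pos this]
  · refine Finset.sum_congr rfl fun q hq => ?_
    simp only [Finset.mem_range] at hq
    have : before 0 n q q := by unfold before; omega
    simp only [if_pos this]

lemma phi_mid {n : ℕ} {a b c : ℤ} (ha : Ent n a) (hb : Ent n b) (hc : Ent n c)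
    (hs : slt (-b) a) (hca : c ≠ a ∧ c ≠ -a) (hcb : c ≠ b ∧ c ≠ -b) :
    sI c a + sI (-c) a - (sI c (-b) + sI (-c) (-b)) +
      (sI b c - sI (-a) c) = (bI (-b) a c : ℤ) := by
  rw [slt_iff hb.neg ha, ky_neg hb] at hs
  have h1 := ne_ky hc ha hca
  have h2 := ne_ky hc hb hcb
  simp only [sI_ky ha.neg hc, sI_ky hb hc, sI_ky hc ha,
    sI_ky hc.neg ha, sI_ky hc hb.neg, sI_ky hc.neg hb.neg, bI_ky hb.neg ha hc, ky_neg ha, ky_neg hb,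
    ky_neg hc]
  generalize ky n a = A at *
  generalize ky n b = B at *
  generalize ky n c = C at *
  clear ha hb hc hca hcb
  push_cast
  split_ifs <;> omega

lemma phi_hi {n : ℕ} {a b c : ℤ} (ha : Ent n a) (hb : Ent n b) (hc : Ent n c)
    (hs : slt (-b) a) (hca : c ≠ a ∧ c ≠ -a) (hcb : c ≠ b ∧ c ≠ -b) :
    sI c a - sI c (-b) + (sI c b - sI c (-a)) = (bI (-b) a c + bI (-b) a (-c) : ℤ) := by
  rw [slt_iff hb.neg ha, ky_neg hb] at hs
  have h1 := ne_ky hc ha hca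
  have h2 := ne_ky hc hb hcb
  simp only [sI_ky hc hb, sI_ky hc ha, sI_ky hc hb.neg, sI_ky hc ha.neg, bI_ky hb.neg ha hc,
    bI_ky hb.neg ha hc.neg, ky_neg ha, ky_neg hb, ky_neg hc]
  generalize ky n a = A at *
  generalize ky n b = B at *
  generalize ky n c = C at *
  clear ha hb hc hca hcb
  push_cast
  split_ifs <;> omega

lemma phi_zero {n : ℕ} {a b : ℤ} (ha : Ent n a) (hb : Ent n b) (hs : slt (-b) a)
    (hab : a ≠ b ∧ a ≠ -b) :
    sI b a - sI (-a) (-b) + (sI (-a) a - sI (- -b) (-b)) = (sigmaAB a b : ℤ) := by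
  rw [slt_iff hb.neg ha, ky_neg hb] at hs
  have h1 := ne_ky ha hb hab
  have h3 := ky_ne_zero ha
  have h4 := ky_ne_zero hb
  unfold sigmaAB
  simp only [neg_iff_ky ha, neg_iff_ky hb]
  simp only [neg_neg, sI_ky hb ha, sI_ky ha.neg hb.neg, sI_ky ha.neg ha, sI_ky hb hb.neg,
    ky_neg ha, ky_neg hb]
  generalize ky n a = A at *
  generalize ky n b = B at *
  clear ha hb hab
  push_cast
  split_ifs <;> omega

lemma phi_one_hi {n : ℕ} {b c : ℤ} (hb : Ent n b) (hc : Ent n c)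
    (hs : slt (-b) b) (hcb : c ≠ b ∧ c ≠ -b) :
    sI c b - sI c (-b) = (bI (-b) b c : ℤ) := by
  rw [slt_iff hb.neg hb, ky_neg hb] at hs
  have h2 := ne_ky hc hb hcb
  simp only [sI_ky hc hb, sI_ky hc hb.neg, bI_ky hb.neg hb hc, ky_neg hb]
  generalize ky n b = B at *
  generalize ky n c = C at *
  clear hb hc hcb
  push_cast
  split_ifs <;> omega

/-- The length difference along `(i,-j)` is twice the difference of `phiSt`, plus one (compare
`len_negSwap`). -/
lemma phiSt_negSwap {n : ℕ} {w : List ℤ} (h : IsCol n n w) {r j : ℕ} (hr : r < j) (hj : j < n)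
    (hs : slt (-(w.getD j 0)) (w.getD r 0)) :
    phiSt n r j w - phiSt n r j (applyRefl w (r + 1, -((j + 1 : ℕ) : ℤ))) =
      (costNeg n w r j (-(w.getD j 0)) (w.getD r 0) + sigmaAB (w.getD r 0) (w.getD j 0) : ℕ) := by
  have hl := h.len
  have h' := h.negSwap (r := r) (j := j) (by omega) hj (by omega)
  have hg := fun p => getD_negSwap w r j p (by omega) (by omega) (by omega)
  generalize applyRefl w (r + 1, -((j + 1 : ℕ) : ℤ)) = w' at *
  unfold phiSt
  rw [St_diff_two hr hj _ _ w w' (fun p h1 h2 => by rw [hg p, if_neg h2, if_neg h1])]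
  have er : w'.getD r 0 = -(w.getD j 0) := by rw [hg r, if_neg (by omega), if_pos rfl]
  have ej : w'.getD j 0 = -(w.getD r 0) := by rw [hg j, if_pos rfl]
  have ha := h.ent r (by omega)
  have hb := h.ent j hj
  have b1 : ¬ before r j r j := by unfold before; omega
  have b2 : before r j r r := by unfold before; omega
  have b3 : ¬ before r j j j := by unfold before; omega
  simp only [er, ej, if_neg b1, if_pos b2, if_neg b3, add_zero]
  rw [sub_zero, add_zero, phi_zero ha hb hs (h.dist r j (by omega) hj (by omega))]
  rw [Finset.sum_congr rfl (g := fun m => if m < r then (0 : ℤ) else if m < j then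
      (bI (-(w.getD j 0)) (w.getD r 0) (w.getD m 0) : ℤ) else
      (bI (-(w.getD j 0)) (w.getD r 0) (w.getD m 0) +
        bI (-(w.getD j 0)) (w.getD r 0) (-(w.getD m 0)) : ℤ)),
    sum_split_three n r j hr hj]
  · unfold costNeg
    push_cast
    ring
  · intro m hm
    simp only [Finset.mem_erase, Finset.mem_range] at hm
    have hc := h.ent m hm.2.2
    have hca := h.dist m r hm.2.2 (by omega) hm.1
    have hcb := h.dist m j hm.2.2 (by omega) hm.2.1
    by_cases h1 : m < r
    · have h2 : m < j := by omega
      have b4 : before r j m r := by unfold before; omega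
      have b5 : before r j m j := by unfold before; omega
      simp only [if_pos h1, if_pos h2, if_pos b4, if_pos b5, neg_neg]; ring
    · by_cases h2 : m < j
      · have b4 : before r j r m := by unfold before; omega
        have b5 : ¬ before r j m j := by unfold before; omega
        simp only [if_neg h1, if_pos h2, if_pos b4, if_neg b5, add_zero]
        exact phi_mid ha hb hc hs hca hcb
      · have b4 : ¬ before r j r m := by unfold before; omega
        have b5 : ¬ before r j j m := by unfold before; omega
        simp only [if_neg h1, if_neg h2, if_neg b4, if_neg b5, add_zero]
        exact phi_hi ha hb hc hs hca hcb

lemma phiSt_negOne {n : ℕ} {w : List ℤ} (h : IsCol n n w) {j : ℕ} (hj : j < n)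
    (hs : slt (-(w.getD j 0)) (w.getD j 0)) :
    phiSt n j j w - phiSt n j j (applyRefl w (j + 1, -((j + 1 : ℕ) : ℤ))) =
      (∑ m ∈ Finset.Ico (j + 1) n, bI (-(w.getD j 0)) (w.getD j 0) (w.getD m 0) : ℕ) := by
  have hl := h.len
  have h' := h.negOne (j := j) hj
  have hg := fun p => getD_negOne w j p (by omega)
  generalize applyRefl w (j + 1, -((j + 1 : ℕ) : ℤ)) = w' at *
  unfold phiSt
  rw [St_diff_one hj _ _ w w' (fun p h1 => by rw [hg p, if_neg h1])]
  have ej : w'.getD j 0 = -(w.getD j 0) := by rw [hg j, if_pos rfl]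
  have hb := h.ent j hj
  have b3 : ¬ before j j j j := by unfold before; omega
  simp only [ej, if_neg b3]
  rw [Finset.sum_congr rfl (g := fun m => if m < j then (0 : ℤ) else
      (bI (-(w.getD j 0)) (w.getD j 0) (w.getD m 0) : ℤ)), sum_split_two n j]
  · push_cast
    ring
  · intro m hm
    simp only [Finset.mem_erase, Finset.mem_range] at hm
    have hc := h.ent m hm.2
    have hcb := h.dist m j hm.2 (by omega) hm.1
    by_cases h2 : m < j
    · have b5 : before j j m j := by unfold before; omega
      simp only [if_pos h2, if_pos b5, neg_neg]; ring
    · have b5 : ¬ before j j j m := by unfold before; omega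
      simp only [if_neg h2, if_neg b5, add_zero]
      exact phi_one_hi hb hc hs hcb

/-- Advancing `(r,j)` by one step adds the contribution of `(r,j)` itself. -/
lemma phiSt_succ {n r j : ℕ} (hr : r ≤ j) (hj : j < n) (w : List ℤ) :
    phiSt n (r + 1) j w = phiSt n r j w + sI (-(w.getD j 0)) (w.getD r 0) := by
  unfold phiSt St
  by_cases hrj : r = j
  · subst hrj
    have hmem : r ∈ Finset.range n := by simp [hj]
    rw [← Finset.sum_erase_add _ (fun q => (fun p a => if before (r + 1) r p p then sI (-a) a else 0)
        q (w.getD q 0)) hmem,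
      ← Finset.sum_erase_add _ (fun q => (fun p a => if before r r p p then sI (-a) a else 0)
        q (w.getD q 0)) hmem]
    have b1 : before (r + 1) r r r := by unfold before; omega
    have b2 : ¬ before r r r r := by unfold before; omega
    simp only [if_pos b1, if_neg b2]
    rw [add_zero, ← add_assoc]
    congr 2
    · refine Finset.sum_congr rfl fun q hq => Finset.sum_congr rfl fun p hp => ?_
      simp only [Finset.mem_range] at hq hp
      have : before (r + 1) r p q ↔ before r r p q := by unfold before; omega
      simp only [this]
    · refine Finset.sum_congr rfl fun q hq => ?_
      simp only [Finset.mem_erase] at hq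
      have : before (r + 1) r q q ↔ before r r q q := by unfold before; omega
      simp only [this]
  · have hd := pair_sum_two n r j (by omega) hj (fun p q =>
      (if before (r + 1) j p q then sI (-(w.getD q 0)) (w.getD p 0) else 0) -
      (if before r j p q then sI (-(w.getD q 0)) (w.getD p 0) else 0)) (by
        intro p q h1 h2 h3 h4 h5
        have : before (r + 1) j p q ↔ before r j p q := by unfold before; omega
        simp [this])
    have b1 : before (r + 1) j r j := by unfold before; omega
    have b2 : ¬ before r j r j := by unfold before; omega
    rw [Finset.sum_eq_zero (s := ((Finset.range n).erase j).erase r), if_pos b1, if_neg b2] at hd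
    · have e : ∀ q ∈ Finset.range n, (if before (r + 1) j q q then
          sI (-(w.getD q 0)) (w.getD q 0) else 0) =
          if before r j q q then sI (-(w.getD q 0)) (w.getD q 0) else 0 := by
        intro q _
        have : before (r + 1) j q q ↔ before r j q q := by unfold before; omega
        simp only [this]
      rw [Finset.sum_congr rfl e]
      simp only [Finset.sum_sub_distrib, Finset.sum_add_distrib] at hd ⊢
      linarith
    · intro m hm
      simp only [Finset.mem_erase, Finset.mem_range] at hm
      have e1 : before (r + 1) j m r ↔ before r j m r := by unfold before; omega
      have e2 : before (r + 1) j r m ↔ before r j r m := by unfold before; omega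
      have e3 : before (r + 1) j m j ↔ before r j m j := by unfold before; omega
      have e4 : before (r + 1) j j m ↔ before r j j m := by unfold before; omega
      simp [e1, e2, e3, e4]

variable {A : Type*} [CommRing A] (t : A)

/-- Summation over a single reflection `(r+1,-(j+1))` removes the pair `(r,j)` from `phiSt`. -/
lemma dn_phi {n r j : ℕ} (hr : r ≤ j) (hj : j < n) {w : List ℤ} (h : IsCol n n w) :
    dn t (r + 1, -((j + 1 : ℕ) : ℤ)) (fun u => t ^ (phiSt n (r + 1) j u).toNat) w =
      t ^ (phiSt n r j w).toNat := by
  have hl := h.len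
  have ha := h.ent r (by omega)
  have hb := h.ent j hj
  unfold dn
  beta_reduce
  have h0 := phiSt_nonneg n r j w
  have h0' := phiSt_nonneg n r j (applyRefl w (r + 1, -((j + 1 : ℕ) : ℤ)))
  have hsw := phiSt_succ hr hj w
  have hsw' := phiSt_succ hr hj (applyRefl w (r + 1, -((j + 1 : ℕ) : ℤ)))
  have hne : w.getD r 0 ≠ -(w.getD j 0) := by
    by_cases hrj : r = j
    · subst hrj; unfold Ent at ha; omega
    · exact (h.dist r j (by omega) hj hrj).2
  have hrr : (applyRefl w (r + 1, -((j + 1 : ℕ) : ℤ))).getD r 0 = -(w.getD j 0) := by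
    by_cases hrj : r = j
    · subst hrj; rw [getD_negOne _ _ _ (by omega), if_pos rfl]
    · rw [getD_negSwap _ _ _ _ (by omega) (by omega) hrj, if_neg hrj, if_pos rfl]
  have hjj : (applyRefl w (r + 1, -((j + 1 : ℕ) : ℤ))).getD j 0 = -(w.getD r 0) := by
    by_cases hrj : r = j
    · subst hrj; rw [getD_negOne _ _ _ (by omega), if_pos rfl]
    · rw [getD_negSwap _ _ _ _ (by omega) (by omega) hrj, if_pos rfl]
  rw [hrr, hjj, neg_neg] at hsw'
  by_cases hs : slt (-(w.getD j 0)) (w.getD r 0)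
  · have key : ∃ c : ℕ, len w = len (applyRefl w (r + 1, -((j + 1 : ℕ) : ℤ))) + 1 + 2 * c ∧
        phiSt n r j w - phiSt n r j (applyRefl w (r + 1, -((j + 1 : ℕ) : ℤ))) = c := by
      by_cases hrj : r = j
      · subst hrj; exact ⟨_, len_negOne h hj hs, phiSt_negOne h hj hs⟩
      · exact ⟨_, len_negSwap h (by omega) hj hs, phiSt_negSwap h (by omega) hj hs⟩
    obtain ⟨c, hc1, hc2⟩ := key
    have s1 : sI (-(w.getD j 0)) (w.getD r 0) = 1 := if_pos hs
    have s2 : sI (w.getD r 0) (-(w.getD j 0)) = 0 := if_neg (not_slt_of hb.neg ha hs)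
    rw [s1] at hsw
    rw [s2] at hsw'
    rw [if_pos (by omega), show (len w - len (applyRefl w (r + 1, -((j + 1 : ℕ) : ℤ))) - 1) / 2 = c
      by omega]
    rw [show (phiSt n (r + 1) j w).toNat = c + (phiSt n r j
        (applyRefl w (r + 1, -((j + 1 : ℕ) : ℤ)))).toNat + 1 by omega,
      show (phiSt n r j w).toNat = c + (phiSt n r j
        (applyRefl w (r + 1, -((j + 1 : ℕ) : ℤ)))).toNat by omega, hsw', add_zero]
    ring
  · have hs' := not_slt hb.neg ha hne.symm hs
    have key : len w < len (applyRefl w (r + 1, -((j + 1 : ℕ) : ℤ))) := by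
      by_cases hrj : r = j
      · subst hrj; rw [len_negOne_up h hj hs']; omega
      · rw [len_negSwap_up h (by omega) hj hs']; omega
    have s1 : sI (-(w.getD j 0)) (w.getD r 0) = 0 := if_neg hs
    rw [if_neg (by omega), hsw, s1, add_zero, add_zero]

/-- The reflections `(1,-(j+1)), …, (i,-(j+1))`. -/
def rowL (j i : ℕ) : List (ℕ × ℤ) := (List.range i).map (fun r => (r + 1, -((j + 1 : ℕ) : ℤ)))

lemma rowL_pos {n j i : ℕ} (hi : i ≤ j + 1) (hj : j < n) : ∀ β ∈ rowL j i, PosRefl n β := by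
  intro β hβ
  simp only [rowL, List.mem_map, List.mem_range] at hβ
  obtain ⟨r, hr, rfl⟩ := hβ
  by_cases h : r = j
  · subst h; exact Or.inr (Or.inr ⟨r, hj, rfl⟩)
  · exact Or.inl ⟨r, j, by omega, hj, rfl⟩

lemma Dn_rowL {n j : ℕ} (hj : j < n) : ∀ i, i ≤ j + 1 → ∀ {w : List ℤ}, IsCol n n w →
    Dn t (rowL j i) (fun u => t ^ (phiSt n i j u).toNat) w = t ^ (phiSt n 0 j w).toNat
  | 0, _, w, _ => rfl
  | i + 1, hi, w, hw => by
    have e : rowL j (i + 1) = rowL j i ++ [(i + 1, -((j + 1 : ℕ) : ℤ))] := by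
      simp [rowL, List.range_succ]
    rw [e, Dn_append, ← Dn_rowL hj i (by omega) hw]
    exact Dn_congr t (rowL_pos (by omega) hj) (fun v hv => dn_phi t (by omega) hj hv) hw

/-- The concatenation of the first `j` rows. -/
def rowsL (j : ℕ) : List (ℕ × ℤ) := (List.range j).flatMap (fun r => rowL r (r + 1))

lemma rowsL_succ (j : ℕ) : rowsL (j + 1) = rowsL j ++ rowL j (j + 1) := by
  simp [rowsL, List.range_succ]

lemma rowsL_pos {n j : ℕ} (hj : j ≤ n) : ∀ β ∈ rowsL j, PosRefl n β := by
  intro β hβ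
  simp only [rowsL, List.mem_flatMap, List.mem_range] at hβ
  obtain ⟨r, hr, h⟩ := hβ
  exact rowL_pos le_rfl (by omega) β h

lemma Dn_rowsL {n : ℕ} : ∀ j, j ≤ n → ∀ {w : List ℤ}, IsCol n n w →
    Dn t (rowsL j) (fun u => t ^ (phiSt n 0 j u).toNat) w = t ^ (phiSt n 0 0 w).toNat
  | 0, _, w, _ => rfl
  | j + 1, hj, w, hw => by
    rw [rowsL_succ, Dn_append, ← Dn_rowsL j (by omega) hw]
    refine Dn_congr t (rowsL_pos (by omega)) (fun v hv => ?_) hw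
    rw [← Dn_rowL t (by omega) (j + 1) le_rfl hv]
    simp only [phiSt_row]

/-- Summing `t^ℓ` over the part `(1,-1), (1,-2), (2,-2), …, (n,-n)` of the chain gives `t^{ℓ₊}`. -/
lemma Dn_phi {n : ℕ} {w : List ℤ} (hw : IsCol n n w) :
    Dn t (rowsL n) (fun u => t ^ len u) w = t ^ lplus w := by
  have h := Dn_rowsL t n le_rfl hw
  rw [phiSt_zero hw.len, Int.toNat_natCast] at h
  rw [← h]
  exact Dn_congr t (rowsL_pos le_rfl) (fun v hv => by rw [phiSt_top hv.len, Int.toNat_natCast]) hw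

end Phi

/-! ### Columns and the reflections `(r,-j)` with both positions in the column -/

lemma getD_take (v : List ℤ) {k p : ℕ} (h : p < k) : (v.take k).getD p 0 = v.getD p 0 := by
  simp [List.getD_eq_getElem?_getD, h]

lemma IsCol.take {n k m : ℕ} {v : List ℤ} (h : IsCol n m v) (hk : k ≤ m) :
    IsCol n k (v.take k) := by
  refine ⟨by simp [h.len, hk], fun p hp => ?_, fun p q hp hq hpq => ?_⟩
  · rw [getD_take v hp]; exact h.ent p (by omega)
  · rw [getD_take v hp, getD_take v hq]; exact h.dist p q (by omega) (by omega) hpq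

lemma take_negSwap {v : List ℤ} {k r j : ℕ} (hr : r < k) (hj : j < k) (hrj : r ≠ j)
    (hk : k ≤ v.length) :
    (applyRefl v (r + 1, -((j + 1 : ℕ) : ℤ))).take k =
      applyRefl (v.take k) (r + 1, -((j + 1 : ℕ) : ℤ)) := by
  have hl : (v.take k).length = k := by simp [hk]
  refine list_ext_getD (by simp [length_applyRefl]) fun p hp => ?_
  have hp : p < k := by simp [length_applyRefl] at hp; omega
  rw [getD_take _ hp, getD_negSwap _ _ _ _ (by omega) (by omega) hrj,
    getD_negSwap _ _ _ _ (by omega) (by omega) hrj, getD_take _ hp, getD_take _ hr, getD_take _ hj]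

lemma negSwap_invol {k r j : ℕ} {v : List ℤ} (hl : v.length = k) (hr : r < j) (hj : j < k) :
    applyRefl (applyRefl v (r + 1, -((j + 1 : ℕ) : ℤ))) (r + 1, -((j + 1 : ℕ) : ℤ)) = v :=
  applyRefl_invol hl (Or.inl ⟨r, j, hr, hj, rfl⟩)

/-- `R` is a strictly increasing list of numbers in `{1, …, i}`. -/
def SR (i : ℕ) (R : List ℕ) : Prop := R.Pairwise (· < ·) ∧ ∀ r ∈ R, 1 ≤ r ∧ r ≤ i

lemma SR_zero {R : List ℕ} (h : SR 0 R) : R = [] := by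
  rcases R with _ | ⟨a, R⟩
  · rfl
  · have := h.2 a List.mem_cons_self; omega

lemma SR_nil (i : ℕ) : SR i [] := ⟨List.Pairwise.nil, by simp⟩

lemma SR.mono {i i' : ℕ} {R : List ℕ} (h : SR i R) (hi : i ≤ i') : SR i' R :=
  ⟨h.1, fun r hr => ⟨(h.2 r hr).1, (h.2 r hr).2.trans hi⟩⟩

lemma SR.snoc {i : ℕ} {R : List ℕ} (h : SR i R) : SR (i + 1) (R ++ [i + 1]) := by
  refine ⟨?_, ?_⟩
  · rw [List.pairwise_append]
    refine ⟨h.1, by simp, fun a ha b hb => ?_⟩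
    have := (h.2 a ha).2
    simp at hb; omega
  · intro r hr
    simp only [List.mem_append, List.mem_singleton] at hr
    rcases hr with hr | hr
    · have := h.2 r hr; omega
    · omega

lemma SR.cases {i : ℕ} {R : List ℕ} (h : SR (i + 1) R) :
    SR i R ∨ ∃ R', R = R' ++ [i + 1] ∧ SR i R' := by
  rcases List.eq_nil_or_concat R with rfl | ⟨R', b, rfl⟩
  · exact Or.inl (SR_nil i)
  · rw [List.concat_eq_append] at h ⊢
    obtain ⟨h1, h2⟩ := h
    rw [List.pairwise_append] at h1
    have hlt : ∀ r ∈ R', 1 ≤ r ∧ r < b := fun r hr =>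
      ⟨(h2 r (by simp [hr])).1, h1.2.2 r hr b (by simp)⟩
    have hb := h2 b (by simp)
    by_cases hbi : b = i + 1
    · subst hbi
      exact Or.inr ⟨R', rfl, h1.1, fun r hr => by have := hlt r hr; omega⟩
    · refine Or.inl ⟨List.pairwise_append.2 h1, fun r hr => ?_⟩
      simp only [List.mem_append, List.mem_singleton] at hr
      rcases hr with hr | hr
      · have := hlt r hr; omega
      · omega

lemma SR.ext {i : ℕ} {R R' : List ℕ} (h : SR i R) (h' : SR i R')
    (hm : ∀ r, r < i → (r + 1 ∈ R ↔ r + 1 ∈ R')) : R = R' := by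
  have hm' : ∀ a, a ∈ R ↔ a ∈ R' := by
    intro a
    constructor
    · intro ha
      have := h.2 a ha
      have e := hm (a - 1) (by omega)
      rw [show a - 1 + 1 = a by omega] at e
      exact e.1 ha
    · intro ha
      have := h'.2 a ha
      have e := hm (a - 1) (by omega)
      rw [show a - 1 + 1 = a by omega] at e
      exact e.2 ha
  have n1 : R.Nodup := h.1.imp (fun h => by omega)
  have n2 : R'.Nodup := h'.1.imp (fun h => by omega)
  exact ((List.perm_ext_iff_of_nodup n1 n2).2 hm').eq_of_pairwise
    (fun a b _ _ h1 h2 => by omega) h.1 h'.1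

lemma sortedR_iff {R : List ℕ} {j k : ℕ} :
    sortedR R (j + 1) k ↔ SR j R ∧ j < k := by
  unfold sortedR SR
  rw [List.Chain', List.isChain_iff_pairwise]
  constructor
  · rintro ⟨h1, h2, h3, h4⟩
    exact ⟨⟨h1, fun r hr => by have := h2 r hr; omega⟩, by omega⟩
  · rintro ⟨⟨h1, h2⟩, h3⟩
    exact ⟨h1, fun r hr => by have := h2 r hr; omega, by omega, by omega⟩

lemma cycleApply_snoc (D : List ℤ) (R : List ℕ) (r j : ℕ) :
    cycleApply D (R ++ [r]) j = applyRefl (cycleApply D R j) (r, -(j : ℤ)) := by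
  simp [cycleApply]

lemma cycleN_snoc (n : ℕ) (r j : ℕ) : ∀ (R : List ℕ) (D : List ℤ),
    cycleN n D (R ++ [r]) j = cycleN n D R j + N1 n (cycleApply D R j) r j
  | [], D => by simp [cycleN, cycleApply]
  | a :: R, D => by
    have e : cycleApply D (a :: R) j = cycleApply (applyRefl D (a, -(j : ℤ))) R j := rfl
    rw [List.cons_append, cycleN, cycleN, cycleN_snoc n r j R, e, add_assoc]

/-- The shape of `D(r_1,-j)⋯(r_p,-j)`: among the rows above `j` exactly the rows `r_1, …, r_p`
change, and one of them receives `-D(j)`. -/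
lemma cyc_facts {n k j : ℕ} {D : List ℤ} (hD : IsCol n k D) (hj : j < k) :
    ∀ i, i ≤ j → ∀ R, SR i R →
      IsCol n k (cycleApply D R (j + 1)) ∧
      (∀ r, i ≤ r → r ≠ j → (cycleApply D R (j + 1)).getD r 0 = D.getD r 0) ∧
      (∀ r, r < j → ((cycleApply D R (j + 1)).getD r 0 ≠ D.getD r 0 ↔ r + 1 ∈ R)) ∧
      (R ≠ [] → ∃ r, r < i ∧ r + 1 ∈ R ∧ (cycleApply D R (j + 1)).getD r 0 = -(D.getD j 0))
  | 0, _, R, hR => by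
    rw [SR_zero hR]
    exact ⟨hD, fun _ _ _ => rfl, fun r _ => by simp [cycleApply], fun h => absurd rfl h⟩
  | i + 1, hi, R, hR => by
    rcases hR.cases with hR' | ⟨R', rfl, hR'⟩
    · obtain ⟨h1, h2, h3, h4⟩ := cyc_facts hD hj i (by omega) R hR'
      exact ⟨h1, fun r hr => h2 r (by omega), h3, fun h => by
        obtain ⟨r, a, b, c⟩ := h4 h; exact ⟨r, by omega, b, c⟩⟩
    · obtain ⟨h1, h2, h3, h4⟩ := cyc_facts hD hj i (by omega) R' hR'
      rw [cycleApply_snoc]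
      have hl := h1.len
      have hg := fun p => getD_negSwap (cycleApply D R' (j + 1)) i j p (by omega) (by omega)
        (by omega)
      have h0 : R' = [] → cycleApply D R' (j + 1) = D := fun h => by rw [h]; rfl
      have hcol := h1.negSwap (r := i) (j := j) (by omega) hj (by omega)
      generalize applyRefl (cycleApply D R' (j + 1)) (i + 1, -((j + 1 : ℕ) : ℤ)) = E at *
      generalize cycleApply D R' (j + 1) = C at *
      refine ⟨hcol, fun r hr hrj => ?_, fun r hr => ?_, fun _ => ?_⟩
      · rw [hg, if_neg hrj, if_neg (by omega), h2 r (by omega) hrj]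
      · rw [hg, if_neg (by omega)]
        by_cases hri : r = i
        · subst hri
          have := h1.dist j r hj (by omega) (by omega)
          have := h2 r le_rfl (by omega)
          simp only [if_true, List.mem_append, List.mem_singleton, or_true, iff_true]
          omega
        · rw [if_neg hri, h3 r hr]
          simp [hri]
      · by_cases hR0 : R' = []
        · refine ⟨i, by omega, by simp, ?_⟩
          rw [hg, if_neg (by omega), if_pos rfl]
          rw [h0 hR0]
        · obtain ⟨r, a, b, c⟩ := h4 hR0
          exact ⟨r, by omega, by simp [b], by
            rw [hg, if_neg (by omega), if_neg (by omega), c]⟩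

/-! ### The statistic `N` as a sum over positions -/

lemma countP_sum (p : ℤ → Bool) : ∀ l : List ℤ,
    l.countP p = ∑ m ∈ Finset.range l.length, if p (l.getD m 0) then 1 else 0
  | [] => by simp
  | a :: l => by
    rw [List.countP_cons, countP_sum p l, List.length_cons, Finset.sum_range_succ']
    simp

lemma Nab_word (a b : ℤ) (l : List ℤ) (s e : ℕ) (he : e ≤ l.length) :
    Nab a b (word l (s + 1) e) = ∑ m ∈ Finset.Ico s e, bI a b (l.getD m 0) := by
  unfold Nab word
  rw [← List.countP_eq_length_filter, countP_sum, Finset.sum_Ico_eq_sum_range]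
  have hl : ((l.drop (s + 1 - 1)).take (e + 1 - (s + 1))).length = e - s := by
    simp; omega
  rw [hl]
  refine Finset.sum_congr rfl fun m hm => ?_
  have hm := Finset.mem_range.1 hm
  rw [getD_take _ (by omega)]
  simp [bI, List.getD_eq_getElem?_getD]

lemma allEntries_perm {n : ℕ} {u : List ℤ} (h : IsCol n n u) :
    (allEntries n).Perm (u ++ u.map (fun x => -x)) := by
  have hmem : ∀ a, a ∈ u → ∃ p, p < n ∧ u.getD p 0 = a := by
    intro a ha
    obtain ⟨p, hp, rfl⟩ := List.mem_iff_getElem.1 ha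
    exact ⟨p, by have := h.len; omega, by simp [List.getD_eq_getElem?_getD, hp]⟩
  have hmem' : ∀ p, p < n → u.getD p 0 ∈ u := by
    intro p hp
    have := h.len
    rw [List.getD_eq_getElem _ _ (by omega)]
    exact List.getElem_mem _
  rw [List.perm_ext_iff_of_nodup]
  · intro a
    have h1 : a ∈ allEntries n ↔ Ent n a := by
      unfold allEntries Ent
      simp only [List.mem_append, List.mem_map, List.mem_range]
      constructor
      · rintro (⟨r, hr, rfl⟩ | ⟨r, hr, rfl⟩) <;> omega
      · intro ha
        by_cases h0 : 0 < a
        · exact Or.inl ⟨a.natAbs - 1, by omega, by omega⟩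
        · exact Or.inr ⟨a.natAbs - 1, by omega, by omega⟩
    rw [h1, List.mem_append, List.mem_map]
    constructor
    · intro ha
      obtain ⟨p, hp, e⟩ := h.exists_entry ha
      rcases e with e | e
      · left; rw [e]; exact hmem' p hp
      · right; exact ⟨_, hmem' p hp, by omega⟩
    · rintro (ha | ⟨b, hb, rfl⟩)
      · obtain ⟨p, hp, rfl⟩ := hmem a ha
        exact h.ent p hp
      · obtain ⟨p, hp, rfl⟩ := hmem b hb
        exact (h.ent p hp).neg
  · unfold allEntries
    rw [List.nodup_append]
    refine ⟨List.nodup_range.map (fun a b e => by simp at e; omega),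
      List.nodup_range.map (fun a b e => by simp at e; omega), ?_⟩
    intro a ha b hb
    simp only [List.mem_map, List.mem_range] at ha hb
    obtain ⟨r, _, rfl⟩ := ha
    obtain ⟨s, _, rfl⟩ := hb
    omega
  · have hnd : u.Nodup := by
      rw [List.nodup_iff_injective_getElem]
      intro p q e
      by_contra hpq
      have := h.len
      have := (h.dist p q (by omega) (by omega) (fun e => hpq (Fin.ext e))).1
      rw [List.getD_eq_getElem _ _ p.2, List.getD_eq_getElem _ _ q.2] at this
      exact this e
    rw [List.nodup_append]
    refine ⟨hnd, hnd.map neg_injective, ?_⟩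
    intro a ha b hb
    simp only [List.mem_map] at hb
    obtain ⟨c, hc, rfl⟩ := hb
    obtain ⟨p, hp, rfl⟩ := hmem a ha
    obtain ⟨q, hq, rfl⟩ := hmem c hc
    by_cases hpq : p = q
    · subst hpq
      have := h.ent p hp
      unfold Ent at this
      omega
    · exact (h.dist p q hp hq hpq).2

lemma mem_take_iff {n : ℕ} {u : List ℤ} (h : IsCol n n u) {j m : ℕ} (hj : j < n) (hm : m < n) :
    (u.getD m 0 ∈ u.take (j + 1) ↔ m ≤ j) ∧ (-(u.getD m 0) ∉ u.take (j + 1)) := by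
  have hmem : ∀ a, a ∈ u.take (j + 1) ↔ ∃ p, p ≤ j ∧ u.getD p 0 = a := by
    intro a
    have := h.len
    rw [List.mem_iff_getElem]
    constructor
    · rintro ⟨p, hp, rfl⟩
      simp at hp
      exact ⟨p, by omega, by simp [List.getD_eq_getElem?_getD, hp]⟩
    · rintro ⟨p, hp, rfl⟩
      have hp' : p < u.length := by omega
      exact ⟨p, by simp; omega, by simp [List.getD_eq_getElem?_getD, hp']⟩
  constructor
  · rw [hmem]
    constructor
    · rintro ⟨p, hp, e⟩
      by_contra hmj
      exact (h.dist p m (by omega) hm (by omega)).1 e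
    · intro hmj; exact ⟨m, hmj, rfl⟩
  · rw [hmem]
    rintro ⟨p, hp, e⟩
    by_cases hpm : p = m
    · subst hpm
      have := h.ent p hm
      unfold Ent at this
      omega
    · exact (h.dist p m (by omega) hm hpm).2 e

/-- The statistic `N` of a single reflection, a count of values not occurring up to sign in the first
`j + 1` rows, as a count over the positions of the window. -/
lemma N1_eq {n : ℕ} {u : List ℤ} (h : IsCol n n u) {r j : ℕ} (hr : r < j) (hj : j < n) :
    N1 n u (r + 1) (j + 1) =
      costNeg n u r j (-(u.getD j 0)) (u.getD r 0) + sigmaAB (u.getD r 0) (u.getD j 0) := by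
  unfold N1
  simp only [Nat.add_sub_cancel]
  rw [Nab_word _ _ _ _ _ (by have := h.len; omega)]
  congr 1
  unfold costNeg
  have e1 : Finset.Ico (r + 1) j = Finset.Ioo r j := by ext; simp only [Finset.mem_Ico, Finset.mem_Ioo]; omega
  rw [e1]
  congr 1
  rw [← List.countP_eq_length_filter, (allEntries_perm h).countP_eq, List.countP_append,
    List.countP_map, countP_sum, countP_sum, h.len, ← Finset.sum_add_distrib]
  rw [Finset.range_eq_Ico, ← Finset.sum_Ico_consecutive _ (Nat.zero_le (j + 1)) (by omega : j + 1 ≤ n)]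
  rw [Finset.sum_eq_zero (s := Finset.Ico 0 (j + 1)), zero_add]
  · refine Finset.sum_congr rfl fun m hm => ?_
    have hm := Finset.mem_Ico.1 hm
    obtain ⟨f1, f2⟩ := mem_take_iff h hj (by omega : m < n)
    have f1 : u.getD m 0 ∉ u.take (j + 1) := fun hh => by have := f1.1 hh; omega
    congr 1
    · simp only [decide_eq_true_eq, bI, List.mem_map]
      congr 1
      apply propext
      constructor
      · rintro ⟨a, b, _⟩; exact ⟨a, b⟩
      · rintro ⟨a, b⟩
        refine ⟨a, b, f1, ?_⟩
        rintro ⟨x, hx, e⟩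
        exact f2 (by rw [← e, neg_neg]; exact hx)
    · simp only [Function.comp, decide_eq_true_eq, bI, List.mem_map]
      congr 1
      apply propext
      constructor
      · rintro ⟨a, b, _⟩; exact ⟨a, b⟩
      · rintro ⟨a, b⟩
        refine ⟨a, b, f2, ?_⟩
        rintro ⟨x, hx, e⟩
        exact f1 (by rw [← neg_injective e]; exact hx)
  · intro m hm
    have hm := Finset.mem_Ico.1 hm
    obtain ⟨f1, f2⟩ := mem_take_iff h hj (by omega : m < n)
    have f1 := f1.2 (by omega)
    rw [if_neg, if_neg]
    · rfl
    · simp only [Function.comp, decide_eq_true_eq, List.mem_map]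
      rintro ⟨_, _, _, hh⟩
      exact hh ⟨_, f1, rfl⟩
    · simp only [decide_eq_true_eq]
      rintro ⟨_, _, hh, _⟩
      exact hh f1

/-- `N1` only sees the first `j + 1` rows of a column. -/
lemma N1_take (n : ℕ) {u : List ℤ} {r j k : ℕ} (hr : r < j) (hj : j < k) (hk : k ≤ u.length) :
    N1 n (u.take k) (r + 1) (j + 1) = N1 n u (r + 1) (j + 1) := by
  unfold N1
  simp only [Nat.add_sub_cancel]
  rw [getD_take _ hj, getD_take _ (by omega), Nab_word _ _ _ _ _ (by simp; omega),
    Nab_word _ _ _ _ _ (by omega), List.take_take, min_eq_left (by omega)]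
  congr 2
  refine Finset.sum_congr rfl fun m hm => ?_
  have hm := Finset.mem_Ico.1 hm
  rw [getD_take _ (by omega)]

lemma rowL_succ (j i : ℕ) : rowL j (i + 1) = rowL j i ++ [(i + 1, -((j + 1 : ℕ) : ℤ))] := by
  unfold rowL
  rw [List.range_succ, List.map_append]; rfl

/-! ### Summation over the chain segment `(1,-j), …, (j-1,-j)` -/

section
variable {A : Type*} [CommRing A] (t : A)

/-- The indicator function of the windows whose first `k` rows form the column `D`. -/
def hT (k : ℕ) (D : List ℤ) : List ℤ → A := fun u => if u.take k = D then 1 else 0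

/-- The column `C` is obtained from `D` by the reflections `(r,-(j+1))`, `r ∈ R ⊆ {1, …, i}`, and
its rows above `j + 1` are weakly smaller. -/
def Good (i j : ℕ) (D C : List ℤ) (R : List ℕ) : Prop :=
  SR i R ∧ C = cycleApply D R (j + 1) ∧ ∀ r, r < j → sle (C.getD r 0) (D.getD r 0)

/-- The sum over the chains in `(1,-(j+1)), …, (i,-(j+1))` from a window with first `k` rows `D` to
`v`.  It is `t^N (1-t)^des` if `v` extends a column `D(r_1,-(j+1))⋯(r_p,-(j+1))` with weakly
smaller rows above `j + 1`, and `0` otherwise. -/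
lemma Up_row {n k j : ℕ} {D : List ℤ} (hD : IsCol n k D) (hj : j < k) (hk : k ≤ n) :
    ∀ i, i ≤ j → ∀ v, IsCol n n v →
      (∀ R, Good i j D (v.take k) R →
        Up t (rowL j i) (hT k D) v = t ^ cycleN n D R (j + 1) * (1 - t) ^ R.length) ∧
      ((∀ R, ¬ Good i j D (v.take k) R) → Up t (rowL j i) (hT k D) v = 0)
  | 0, _, v, hv => by
    constructor
    · rintro R ⟨hR, h1, _⟩
      rw [SR_zero hR] at h1 ⊢
      have h1 : v.take k = D := h1
      simp [rowL, Up_nil, hT, h1, cycleN]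
    · intro h
      have : v.take k ≠ D := fun e => h [] ⟨SR_nil 0, e, fun r _ => by rw [e]; exact Or.inr rfl⟩
      simp [rowL, Up_nil, hT, this]
  | i + 1, hi, v, hv => by
    have hjn : j < n := by omega
    have hij : i < j := by omega
    rw [rowL_succ, Up_snoc, up_negSwap t hv hij hjn]
    set v' := applyRefl v (i + 1, -((j + 1 : ℕ) : ℤ)) with hv'
    have hvc : IsCol n n v' := hv.negSwap (by omega) hjn (by omega)
    have hvl := hv.len
    have hg : ∀ p, v'.getD p 0 = if p = j then -(v.getD i 0) else if p = i then -(v.getD j 0)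
        else v.getD p 0 := fun p => getD_negSwap v i j p (by omega) (by omega) (by omega)
    have hback : applyRefl v' (i + 1, -((j + 1 : ℕ) : ℤ)) = v := negSwap_invol hvl hij hjn
    have htk : v.take k = applyRefl (v'.take k) (i + 1, -((j + 1 : ℕ) : ℤ)) := by
      rw [← take_negSwap (by omega) hj (by omega) (by rw [hvc.len]; exact hk), hback]
    have htk' : v'.take k = applyRefl (v.take k) (i + 1, -((j + 1 : ℕ) : ℤ)) :=
      take_negSwap (by omega) hj (by omega) (by rw [hvl]; exact hk)
    obtain ⟨ih1, ih2⟩ := Up_row hD hj hk i (by omega) v hv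
    obtain ⟨ih1', ih2'⟩ := Up_row hD hj hk i (by omega) v' hvc
    -- a column reached with `R ⊆ {1, …, i}` agrees with `D` in row `i + 1`
    have hrow : ∀ {u : List ℤ} {R}, Good i j D (u.take k) R → u.getD i 0 = D.getD i 0 := by
      rintro u R ⟨hR, h1, _⟩
      rw [← getD_take u (by omega : i < k), h1]
      exact (cyc_facts hD hj i (by omega) R hR).2.1 i le_rfl (by omega)
    have hvi : v'.getD i 0 = -(v.getD j 0) := by rw [hg, if_neg (by omega), if_pos rfl]
    have hvj : v'.getD j 0 = -(v.getD i 0) := by rw [hg, if_pos rfl]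
    have hne : v.getD i 0 ≠ -(v.getD j 0) := (hv.dist i j (by omega) hjn (by omega)).2
    have hN : costNeg n v i j (v.getD i 0) (-(v.getD j 0)) +
        sigmaAB (-(v.getD i 0)) (-(v.getD j 0)) = N1 n (v'.take k) (i + 1) (j + 1) := by
      rw [N1_take n hij hj (by rw [hvc.len]; exact hk), N1_eq hvc hij hjn, hvi, hvj, neg_neg,
        sigmaAB_comm]
      congr 1
      exact (costNeg_congr (fun p h1 h2 => by rw [hg, if_neg h2, if_neg h1]) hij).symm
    rw [hN]
    constructor
    · rintro R ⟨hR, h1, h2⟩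
      rcases hR.cases with hR' | ⟨R', rfl, hR'⟩
      · have hG : Good i j D (v.take k) R := ⟨hR', h1, h2⟩
        rw [ih1 R hG, ih2', mul_zero, ite_self, add_zero]
        intro R'' hG'
        have e1 := hrow hG
        have e2 := hrow hG'
        rw [hvi] at e2
        exact hne (e1.trans e2.symm)
      · rw [cycleApply_snoc] at h1
        obtain ⟨c1, c2, c3, c4⟩ := cyc_facts hD hj i (by omega) R' hR'
        have hC' : v'.take k = cycleApply D R' (j + 1) := by
          rw [htk', h1]
          exact negSwap_invol c1.len hij hj
        have hDi : -(v.getD j 0) = D.getD i 0 := by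
          rw [← hvi, ← getD_take v' (by omega : i < k), hC', c2 i le_rfl (by omega)]
        have hslt : slt (v.getD i 0) (-(v.getD j 0)) := by
          have := h2 i hij
          rw [getD_take _ (by omega : i < k)] at this
          rcases this with h | h
          · rw [hDi]; exact h
          · exact absurd (h.trans hDi.symm) hne
        rw [ih2, if_pos hslt, ih1' R' ⟨hR', hC', ?_⟩, zero_add, cycleN_snoc, ← hC', List.length_append,
          List.length_singleton, pow_add, pow_add]
        · ring
        · intro r hr
          rw [getD_take _ (by omega : r < k), hg, if_neg (by omega)]
          split_ifs with hri
          · subst hri; exact Or.inr hDi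
          · have := h2 r hr
            rwa [getD_take _ (by omega : r < k)] at this
        · intro R'' hG
          exact hne ((hrow hG).trans hDi.symm)
    · intro hno
      rw [ih2 (fun R hG => hno R ⟨hG.1.mono (by omega), hG.2⟩), zero_add]
      split_ifs with hslt
      · rw [ih2', mul_zero]
        intro R' hG
        refine hno (R' ++ [i + 1]) ⟨hG.1.snoc, ?_, fun r hr => ?_⟩
        · rw [cycleApply_snoc, ← hG.2.1]; exact htk
        · rw [getD_take _ (by omega : r < k)]
          by_cases hri : r = i
          · subst hri
            left
            rw [← hrow hG, hvi]; exact hslt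
          · have := hG.2.2 r hr
            rwa [getD_take _ (by omega : r < k), hg, if_neg (by omega), if_neg hri] at this
      · rfl

/-- In a good transition row `j + 1` weakly decreases as well. -/
lemma Good.row {n k j : ℕ} {D : List ℤ} (hD : IsCol n k D) (hj : j < k) :
    ∀ i, i ≤ j → ∀ C R, Good i j D C R → sle (C.getD j 0) (D.getD j 0)
  | 0, _, C, R, ⟨hR, h1, _⟩ => by rw [SR_zero hR] at h1; rw [h1]; exact Or.inr rfl
  | i + 1, hi, C, R, ⟨hR, h1, h2⟩ => by
    rcases hR.cases with hR' | ⟨R', rfl, hR'⟩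
    · exact Good.row hD hj i (by omega) C R ⟨hR', h1, h2⟩
    · obtain ⟨c1, c2, c3, c4⟩ := cyc_facts hD hj i (by omega) R' hR'
      rw [cycleApply_snoc] at h1
      have hl := c1.len
      have hg := fun p => getD_negSwap (cycleApply D R' (j + 1)) i j p (by omega) (by omega)
        (by omega)
      rw [← h1] at hg
      have hCi : C.getD i 0 = -((cycleApply D R' (j + 1)).getD j 0) := by
        rw [hg, if_neg (by omega), if_pos rfl]
      have hCj : C.getD j 0 = -((cycleApply D R' (j + 1)).getD i 0) := by
        rw [hg, if_pos rfl]
      have ih := Good.row hD hj i (by omega) (cycleApply D R' (j + 1)) R' ⟨hR', rfl, fun r hr => by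
        by_cases hri : r = i
        · subst hri; exact Or.inr (c2 r le_rfl (by omega))
        · have := h2 r hr
          rwa [hg, if_neg (by omega), if_neg hri] at this⟩
      have h3 := h2 i (by omega)
      have e1 := c1.ent i (by omega)
      have e2 := c1.ent j hj
      rw [← c2 i le_rfl (by omega), hCi] at h3
      rw [hCj]
      have e3 := hD.ent j hj
      have h4 : slt (-((cycleApply D R' (j + 1)).getD i 0)) ((cycleApply D R' (j + 1)).getD j 0) := by
        rcases h3 with h3 | h3
        · rw [slt_iff e2.neg e1, ky_neg e2] at h3
          rw [slt_iff e1.neg e2, ky_neg e1]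
          omega
        · exact absurd h3.symm (c1.dist i j (by omega) hj (by omega)).2
      rcases ih with ih | ih
      · exact Or.inl (slt_trans e1.neg e2 e3 h4 ih)
      · rw [ih] at h4; exact Or.inl h4

end

/-! ### The reflections of the segment `Γ_j(k)` -/

section
variable {A : Type*} [CommRing A] (t : A)

lemma Up_congr_inv {n : ℕ} (P : List ℤ → Prop) : ∀ {Γ : List (ℕ × ℤ)}
    (_ : ∀ β ∈ Γ, PosRefl n β) (_ : ∀ β ∈ Γ, ∀ u, IsCol n n u → P u → P (applyRefl u β))
    {g g' : List ℤ → A} (_ : ∀ u, IsCol n n u → P u → g u = g' u) {v : List ℤ}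
    (_ : IsCol n n v) (_ : P v), Up t Γ g v = Up t Γ g' v
  | [], _, _, _, _, hg, _, hv, hP => hg _ hv hP
  | β :: Γ, h1, h2, g, g', hg, v, hv, hP => by
    rw [Up_cons, Up_cons]
    refine Up_congr_inv P (fun b hb => h1 b (List.mem_cons_of_mem _ hb))
      (fun b hb => h2 b (List.mem_cons_of_mem _ hb)) (fun u hu hPu => ?_) hv hP
    unfold up
    rw [hg u hu hPu, hg _ (hu.applyRefl (h1 β List.mem_cons_self))
      (h2 β List.mem_cons_self u hu hPu)]

lemma Up_mul (c : A) (Γ : List (ℕ × ℤ)) (g : List ℤ → A) (v : List ℤ) :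
    Up t Γ (fun u => c * g u) v = c * Up t Γ g v := by
  have := Up_sum t ({()} : Finset Unit) (fun _ => c) Γ (fun _ => g) v
  simpa using this

lemma L1_mem {n j k : ℕ} (hjk : j < k) (hk : k ≤ n) {β : ℕ × ℤ} (h : β ∈ L1 n j k k) :
    PosRefl n β ∧ ∀ u, IsCol n n u → ∀ r, r < k → r ≠ j →
      (applyRefl u β).getD r 0 = u.getD r 0 := by
  unfold L1 L2 L3 at h
  simp only [List.mem_append, List.mem_map, List.mem_range, List.mem_singleton] at h
  rcases h with (⟨s, hs, rfl⟩ | rfl) | ⟨s, hs, rfl⟩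
  · refine ⟨Or.inl ⟨j, k + s, by omega, by omega, by push_cast; ring_nf⟩, fun u hu r hr hrj => ?_⟩
    have := hu.len
    rw [show k + 1 + s = (k + s) + 1 by ring,
      getD_negSwap _ _ _ _ (by omega) (by omega) (by omega), if_neg (by omega), if_neg hrj]
  · refine ⟨Or.inr (Or.inr ⟨j, by omega, rfl⟩), fun u hu r hr hrj => ?_⟩
    have := hu.len
    rw [getD_negOne _ _ _ (by omega), if_neg hrj]
  · refine ⟨Or.inr (Or.inl ⟨j, n - s - 1, by omega, by omega, ?_⟩), fun u hu r hr hrj => ?_⟩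
    · congr 2; omega
    · have := hu.len
      rw [show n - s = (n - s - 1) + 1 by omega, getD_swap _ _ _ _ (by omega) (by omega),
        if_neg (by omega), if_neg hrj]

lemma gammaJK_eq (n j k : ℕ) : gammaJK n (j + 1) k = rowL j j ++ L1 n j k k := by
  unfold gammaJK gammaPrime L1 L2 L3 rowL
  simp [List.append_assoc]

lemma gammaPrime_eq (j : ℕ) : gammaPrime (j + 1) = rowL j j := by
  unfold gammaPrime rowL
  simp

lemma gammaJK_pos {n j k : ℕ} (hjk : j < k) (hk : k ≤ n) :
    ∀ β ∈ gammaJK n (j + 1) k, PosRefl n β := by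
  intro β hβ
  rw [gammaJK_eq, List.mem_append] at hβ
  rcases hβ with h | h
  · exact rowL_pos (by omega) (by omega) β h
  · exact (L1_mem hjk hk h).1

/-! ### Summation over the chain segment `Γ_j(k)` -/

/-- Away from row `j + 1` the column `C` agrees with `D(r_1,-(j+1))⋯(r_p,-(j+1))`, and its rows
above `j + 1` are weakly smaller than those of `D`. -/
def Off (k j : ℕ) (D C : List ℤ) (R : List ℕ) : Prop :=
  SR j R ∧ (∀ r, r < j → sle (C.getD r 0) (D.getD r 0)) ∧
    ∀ r, r < k → r ≠ j → C.getD r 0 = (cycleApply D R (j + 1)).getD r 0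

/-- The sum over the chains in `Γ_{j+1}(k)` from a window with first `k` rows `D` to `v`.  The value
depends only on `D` and the first `k` rows of `v`. -/
lemma Up_gammaJK {n k j : ℕ} {D : List ℤ} (hD : IsCol n k D) (hj : j < k) (hk : k ≤ n)
    {v : List ℤ} (hv : IsCol n n v) :
    (∀ R, Off k j D (v.take k) R →
      ((v.take k).getD j 0 = (cycleApply D R (j + 1)).getD j 0 →
        Up t (gammaJK n (j + 1) k) (hT k D) v = t ^ cycleN n D R (j + 1) * (1 - t) ^ R.length) ∧
      (slt ((v.take k).getD j 0) ((cycleApply D R (j + 1)).getD j 0) →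
        Up t (gammaJK n (j + 1) k) (hT k D) v =
          t ^ (cycleN n D R (j + 1) + Nab ((v.take k).getD j 0)
            ((cycleApply D R (j + 1)).getD j 0) (word D (j + 1 + 1) k)) * (1 - t) ^ (R.length + 1)) ∧
      (¬ sle ((v.take k).getD j 0) ((cycleApply D R (j + 1)).getD j 0) →
        Up t (gammaJK n (j + 1) k) (hT k D) v = 0)) ∧
    ((∀ R, ¬ Off k j D (v.take k) R) → Up t (gammaJK n (j + 1) k) (hT k D) v = 0) := by
  rw [gammaJK_eq, Up_append]
  -- the rows `≠ j + 1` among the first `k` are not moved by the remaining reflections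
  set P : List ℤ → Prop := fun u => ∀ r, r < k → r ≠ j → u.getD r 0 = v.getD r 0 with hP
  have hPinv : ∀ β ∈ L1 n j k k, ∀ u, IsCol n n u → P u → P (applyRefl u β) :=
    fun β hβ u hu hPu r hr hrj => ((L1_mem hj hk hβ).2 u hu r hr hrj).trans (hPu r hr hrj)
  have hpos : ∀ β ∈ L1 n j k k, PosRefl n β := fun β hβ => (L1_mem hj hk hβ).1
  have hPv : P v := fun _ _ _ => rfl
  constructor
  · rintro R ⟨hR, h1, h2⟩
    obtain ⟨c1, c2, c3, c4⟩ := cyc_facts hD hj j le_rfl R hR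
    have hcl := c1.len
    have key : Up t (L1 n j k k) (Up t (rowL j j) (hT k D)) v =
        (t ^ cycleN n D R (j + 1) * (1 - t) ^ R.length) *
          Up t (L1 n j k k) (gAt j ((cycleApply D R (j + 1)).getD j 0)) v := by
      rw [← Up_mul]
      refine Up_congr_inv t P hpos hPinv (fun u hu hPu => ?_) hv hPv
      obtain ⟨r1, r2⟩ := Up_row t hD hj hk j le_rfl u hu
      have hul := hu.len
      have hoff : ∀ r, r < k → r ≠ j → (u.take k).getD r 0 = (cycleApply D R (j + 1)).getD r 0 :=
        fun r hr hrj => by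
          rw [getD_take _ hr, hPu r hr hrj, ← h2 r hr hrj, getD_take _ hr]
      unfold gAt
      split_ifs with hb
      · rw [mul_one]
        refine r1 R ⟨hR, ?_, fun r hr => ?_⟩
        · refine list_ext_getD (by simp; omega) fun p hp => ?_
          have hp : p < k := by simp at hp; omega
          by_cases hpj : p = j
          · subst hpj; rw [getD_take _ hp]; exact hb
          · exact hoff p hp hpj
        · rw [hoff r (by omega) (by omega), ← h2 r (by omega) (by omega)]; exact h1 r hr
      · rw [mul_zero]
        refine r2 fun R' hG => hb ?_
        have hRR : R' = R := by
          refine hG.1.ext hR fun r hr => ?_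
          rw [← (cyc_facts hD hj j le_rfl R' hG.1).2.2.1 r hr, ← c3 r hr, ← hG.2.1,
            hoff r (by omega) (by omega)]
        rw [hRR] at hG
        rw [← hG.2.1, getD_take _ hj]
    have hoffv : ∀ m, m < k → m ≠ j → v.getD m 0 = (cycleApply D R (j + 1)).getD m 0 :=
      fun m hm hmj => by rw [← h2 m hm hmj, getD_take _ hm]
    obtain ⟨u1, u2, u3⟩ := Up_L1 t hj (c1.ent j hj) k le_rfl hk v hv (fun m hm hmj => by
      rw [hoffv m hm hmj]
      exact c1.dist j m hj hm (fun e => hmj e.symm))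
    rw [key, getD_take _ hj]
    refine ⟨fun e => ?_, fun e => ?_, fun e => ?_⟩
    · rw [u1 e.symm, mul_one]
    · rw [u2 e (fun q h h' => by omega), Nab_word _ _ _ _ _ (by rw [hD.len])]
      have : ∑ m ∈ Finset.Ico (j + 1) k,
          bI (v.getD j 0) ((cycleApply D R (j + 1)).getD j 0) (v.getD m 0) =
          ∑ m ∈ Finset.Ico (j + 1) k,
          bI (v.getD j 0) ((cycleApply D R (j + 1)).getD j 0) (D.getD m 0) := by
        refine Finset.sum_congr rfl fun m hm => ?_
        have hm := Finset.mem_Ico.1 hm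
        rw [hoffv m hm.2 (by omega), c2 m (by omega) (by omega)]
      rw [this]
      ring
    · rw [u3 (fun h => e (Or.inr h.symm)) (fun h => e (Or.inl h.1)), mul_zero]
  · intro hno
    have : Up t (L1 n j k k) (Up t (rowL j j) (hT k D)) v =
        Up t (L1 n j k k) (fun u => (0 : A) * (fun _ => (0 : A)) u) v := by
      refine Up_congr_inv t P hpos hPinv (fun u hu hPu => ?_) hv hPv
      rw [zero_mul]
      refine (Up_row t hD hj hk j le_rfl u hu).2 fun R hG => hno R ⟨hG.1, fun r hr => ?_, ?_⟩
      · have := hG.2.2 r hr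
        rw [getD_take _ (by omega), hPu r (by omega) (by omega)] at this
        rwa [getD_take _ (by omega)]
      · intro r hr hrj
        rw [← hG.2.1, getD_take _ hr, getD_take _ hr, hPu r hr hrj]
    rw [this, Up_mul, zero_mul]

/-! ### The candidates for the statistics are unique -/

/-- The transition relation of condition (3) for a step in row `j + 1`. -/
def Tr (k j : ℕ) (D E : List ℤ) (R : List ℕ) : Prop :=
  SR j R ∧ j < k ∧
  (∀ r, r < k → r ≠ j → E.getD r 0 = (cycleApply D R (j + 1)).getD r 0) ∧
  (∀ r, r < k → r ≠ j → E.getD j 0 ≠ (cycleApply D R (j + 1)).getD r 0 ∧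
    E.getD j 0 ≠ -((cycleApply D R (j + 1)).getD r 0)) ∧
  sle (E.getD j 0) ((cycleApply D R (j + 1)).getD j 0)

/-- The pair `(N(D,E), des(D,E))` computed from the data of a transition. -/
def trVal (n k j : ℕ) (D E : List ℤ) (R : List ℕ) : ℕ × ℕ :=
  if E.getD j 0 = (cycleApply D R (j + 1)).getD j 0 then (cycleN n D R (j + 1), R.length)
  else (cycleN n D R (j + 1) + Nab (E.getD j 0) ((cycleApply D R (j + 1)).getD j 0)
    (word D (j + 1 + 1) k), R.length + 1)

lemma forall_shift {p : ℕ → Prop} {k j : ℕ} :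
    (∀ r, 1 ≤ r → r ≤ k → r ≠ j + 1 → p (r - 1)) ↔ ∀ r, r < k → r ≠ j → p r := by
  constructor
  · intro h r hr hrj
    simpa using h (r + 1) (by omega) (by omega) (by omega)
  · intro h r h1 h2 h3
    exact h (r - 1) (by omega) (by omega)

lemma Tr_iff {k j : ℕ} {D E : List ℤ} {R : List ℕ} :
    Tr k j D E R ↔ sortedR R (j + 1) k ∧ unprimedTrans D E R (j + 1) k := by
  unfold Tr unprimedTrans
  rw [sortedR_iff, ← forall_shift (p := fun r => E.getD r 0 = (cycleApply D R (j + 1)).getD r 0),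
    ← forall_shift (p := fun r => E.getD j 0 ≠ (cycleApply D R (j + 1)).getD r 0 ∧
    E.getD j 0 ≠ -((cycleApply D R (j + 1)).getD r 0))]
  simp only [Nat.add_sub_cancel]
  tauto

/-- A nontrivial transition changes row `j + 1`, no lower row, and the rows of `R`. -/
lemma Tr.changed {n k j : ℕ} {D E : List ℤ} {R : List ℕ} (hD : IsCol n k D) (h : Tr k j D E R) :
    (∀ r, r < j → (E.getD r 0 ≠ D.getD r 0 ↔ r + 1 ∈ R)) ∧
    (∀ r, r < k → j < r → E.getD r 0 = D.getD r 0) ∧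
    (E.getD j 0 = D.getD j 0 → R = [] ∧ E.getD j 0 = (cycleApply D R (j + 1)).getD j 0) := by
  obtain ⟨hR, hj, h1, h2, h3⟩ := h
  obtain ⟨c1, c2, c3, c4⟩ := cyc_facts hD hj j le_rfl R hR
  refine ⟨fun r hr => ?_, fun r hr hrj => ?_, fun e => ?_⟩
  · rw [h1 r (by omega) (by omega)]; exact c3 r hr
  · rw [h1 r hr (by omega)]; exact c2 r (by omega) (by omega)
  · have hR0 : R = [] := by
      by_contra hne
      obtain ⟨r, a, b, c⟩ := c4 hne
      apply (h2 r (by omega) (by omega)).2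
      rw [c, neg_neg, e]
    refine ⟨hR0, ?_⟩
    rw [hR0]; exact e

/-- The pair `(N(D,E), des(D,E))` does not depend on the choice of the row and of the reflections in a
transition from `D` to `E`. -/
lemma trVal_unique {n k j j' : ℕ} {D E : List ℤ} {R R' : List ℕ} (hD : IsCol n k D)
    (h : Tr k j D E R) (h' : Tr k j' D E R') : trVal n k j D E R = trVal n k j' D E R' := by
  obtain ⟨a1, a2, a3⟩ := h.changed hD
  obtain ⟨b1, b2, b3⟩ := h'.changed hD
  have key : ∀ {j j' : ℕ} {R R' : List ℕ}, Tr k j D E R → Tr k j' D E R' → j < j' →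
      E.getD j' 0 = D.getD j' 0 := fun {j j' R R'} h h' hlt =>
    (h.changed hD).2.1 j' h'.2.1 hlt
  have triv : ∀ {j : ℕ} {R : List ℕ}, Tr k j D E R → E.getD j 0 = D.getD j 0 →
      trVal n k j D E R = (0, 0) ∧ ∀ r, r < k → E.getD r 0 = D.getD r 0 := by
    intro j R h e
    obtain ⟨a1, a2, a3⟩ := h.changed hD
    obtain ⟨hR, e2⟩ := a3 e
    subst hR
    refine ⟨?_, fun r hr => ?_⟩
    · unfold trVal; rw [if_pos e2]; rfl
    · rcases lt_trichotomy r j with hlt | heq | hgt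
      · by_contra hh
        simpa using (a1 r hlt).1 hh
      · rw [heq]; exact e
      · exact a2 r hr hgt
  by_cases he : E.getD j 0 = D.getD j 0
  · obtain ⟨v1, v2⟩ := triv h he
    rw [v1, (triv h' (v2 j' h'.2.1)).1]
  · by_cases he' : E.getD j' 0 = D.getD j' 0
    · exact absurd ((triv h' he').2 j h.2.1) he
    · have hjj : j = j' := by
        rcases lt_trichotomy j j' with hlt | heq | hgt
        · exact absurd (key h h' hlt) he'
        · exact heq
        · exact absurd (key h' h hgt) he
      subst hjj
      have hRR : R = R' := h.1.ext h'.1 fun r hr => by rw [← a1 r hr, ← b1 r hr]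
      rw [hRR]

lemma NdesCand_eq {n k : ℕ} {D C : List ℤ} (hD : IsCol n k D) (hk : 0 < k) (hC : k ≤ C.length) :
    NdesCand n D C = {x | ∃ j R, Tr k j D (C.take k) R ∧ x = trVal n k j D (C.take k) R} := by
  have hl := hD.len
  ext x
  unfold NdesCand
  simp only [Set.mem_ofPred_eq, hl]
  have hcl : (C.take k).length = k := by simp [hC]
  have hTr : ∀ {j R}, SR j R → j < k → C.take k = cycleApply D R (j + 1) →
      Tr k j D (C.take k) R := by
    intro j R hR hj e
    obtain ⟨c1, -⟩ := cyc_facts hD hj j le_rfl R hR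
    rw [e]
    exact ⟨hR, hj, fun _ _ _ => rfl, fun r hr hrj => c1.dist j r hj hr (fun h => hrj h.symm),
      Or.inr rfl⟩
  constructor
  · rintro (⟨h1, rfl⟩ | ⟨j, R, hs, hne, h1, rfl⟩ | ⟨j, R, hs, h1, h2, h3, rfl⟩)
    · refine ⟨0, [], hTr (SR_nil 0) hk h1, ?_⟩
      unfold trVal
      rw [if_pos (by rw [h1]; rfl)]; rfl
    · obtain ⟨j, rfl⟩ : ∃ j', j = j' + 1 := ⟨j - 1, by have := hs.2.2.1; omega⟩
      obtain ⟨hR, hj⟩ := sortedR_iff.1 hs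
      refine ⟨j, R, hTr hR hj h1, ?_⟩
      unfold trVal
      rw [if_pos (by rw [h1])]
    · obtain ⟨j, rfl⟩ : ∃ j', j = j' + 1 := ⟨j - 1, by have := hs.2.2.1; omega⟩
      refine ⟨j, R, Tr_iff.2 ⟨hs, h1, h2, Or.inl h3⟩, ?_⟩
      unfold trVal
      rw [if_neg]
      · rfl
      · intro e
        simp only [Nat.add_sub_cancel] at h3
        rw [e] at h3
        exact slt_irrefl _ h3
  · rintro ⟨j, R, h, rfl⟩
    obtain ⟨hs, h1, h2, h3⟩ := Tr_iff.1 h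
    unfold trVal
    split_ifs with he
    · have hEq : C.take k = cycleApply D R (j + 1) := by
        have := (cyc_facts hD h.2.1 j le_rfl R h.1).1.len
        refine list_ext_getD (by omega) fun p hp => ?_
        by_cases hpj : p = j
        · rw [hpj]; exact he
        · exact h.2.2.1 p (by omega) hpj
      by_cases hR : R = []
      · left
        subst hR
        exact ⟨hEq, rfl⟩
      · right; left
        exact ⟨j + 1, R, hs, hR, hEq, rfl⟩
    · right; right
      refine ⟨j + 1, R, hs, h1, h2, ?_, rfl⟩
      rcases h3 with h3 | h3
      · exact h3
      · exact absurd h3 he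

lemma stat_eq {n k j : ℕ} {D C : List ℤ} {R : List ℕ} (hD : IsCol n k D) (hk : 0 < k)
    (hC : k ≤ C.length) (h : Tr k j D (C.take k) R) :
    Nstat n D C = (trVal n k j D (C.take k) R).1 ∧
      desStat n D C = (trVal n k j D (C.take k) R).2 := by
  have : NdesCand n D C = {trVal n k j D (C.take k) R} := by
    rw [NdesCand_eq hD hk hC]
    ext x
    simp only [Set.mem_ofPred_eq, Set.mem_singleton_iff]
    constructor
    · rintro ⟨j', R', h', rfl⟩; exact trVal_unique hD h' h
    · rintro rfl; exact ⟨j, R, h, rfl⟩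
  unfold Nstat desStat
  rw [this]
  set x := trVal n k j D (C.take k) R
  have e1 : {v | ∃ d, (v, d) ∈ ({x} : Set (ℕ × ℕ))} = {x.1} := by
    ext v
    simp only [Set.mem_singleton_iff, Set.mem_ofPred_eq]
    constructor
    · rintro ⟨d, hd⟩; rw [← hd]
    · rintro rfl; exact ⟨x.2, rfl⟩
  have e2 : {d | ∃ v, (v, d) ∈ ({x} : Set (ℕ × ℕ))} = {x.2} := by
    ext v
    simp only [Set.mem_singleton_iff, Set.mem_ofPred_eq]
    constructor
    · rintro ⟨d, hd⟩; rw [← hd]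
    · rintro rfl; exact ⟨x.1, rfl⟩
  rw [e1, e2]
  simp

/-! ### The weight of a step between adjacent columns -/

open Classical in
/-- The weight of a step from the column `D` of height `k` to the column `C`, when the
transition condition is `Rel`. -/
noncomputable def wt (n k : ℕ) (Rel : List ℤ → List ℤ → Prop) (D C : List ℤ) : A :=
  if (∀ r, r < k → sle (C.getD r 0) (D.getD r 0)) ∧ Rel D C then
    t ^ Nstat n D C * (1 - t) ^ desStat n D C else 0

/-- The primed transition condition for `C'_{i,j}`. -/
def RelP (k j : ℕ) (D C : List ℤ) : Prop := ∃ R, sortedR R j k ∧ C.take k = cycleApply D R j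

/-- The unprimed transition condition for `C_{i,j}`. -/
def RelU (k j : ℕ) (D C : List ℤ) : Prop :=
  ∃ R, sortedR R j k ∧ unprimedTrans D (C.take k) R j k

/-- The chains in `Γ'_{j+1}` that start at a window extending `D` and end at a window extending `C`
have total weight `t^{N(D,C)} (1-t)^{des(D,C)}`, if `D`, `C` can be adjacent in a filling, and `0`
otherwise. -/
lemma lump_P {n k j : ℕ} {D C v : List ℤ} (hD : IsCol n k D) (hj : j < k) (hk : k ≤ n)
    (hv : IsCol n n v) (hC : v.take k = C.take k) (hCl : k ≤ C.length) :
    Up t (gammaPrime (j + 1)) (hT k D) v = wt t n k (RelP k (j + 1)) D C := by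
  obtain ⟨r1, r2⟩ := Up_row t hD hj hk j le_rfl v hv
  rw [gammaPrime_eq]
  rw [hC] at r1 r2
  unfold wt
  split_ifs with h
  · obtain ⟨hrow, R, hs, e⟩ := h
    obtain ⟨hR, -⟩ := sortedR_iff.1 hs
    rw [r1 R ⟨hR, e, fun r hr => by rw [getD_take _ (by omega)]; exact hrow r (by omega)⟩]
    have c1 := (cyc_facts hD hj j le_rfl R hR).1
    obtain ⟨s1, s2⟩ := stat_eq (n := n) hD (by omega) hCl (j := j) (R := R) (by
      rw [e]
      exact ⟨hR, hj, fun _ _ _ => rfl, fun r hr hrj => c1.dist j r hj hr (fun h => hrj h.symm),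
        Or.inr rfl⟩)
    rw [s1, s2]
    unfold trVal
    rw [if_pos (by rw [e])]
  · refine r2 fun R hG => h ⟨fun r hr => ?_, R, sortedR_iff.2 ⟨hG.1, hj⟩, hG.2.1⟩
    rw [← getD_take C hr]
    rcases lt_trichotomy r j with hlt | heq | hgt
    · exact hG.2.2 r hlt
    · rw [heq]; exact Good.row hD hj j le_rfl _ R hG
    · right
      rw [hG.2.1]
      exact (cyc_facts hD hj j le_rfl R hG.1).2.1 r (by omega) (by omega)

/-- The analogue of `lump_P` for the chains in `Γ_{j+1}(k)`. -/
lemma lump_U {n k j : ℕ} {D C v : List ℤ} (hD : IsCol n k D) (hj : j < k) (hk : k ≤ n)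
    (hv : IsCol n n v) (hC : v.take k = C.take k) (hCl : k ≤ C.length) :
    Up t (gammaJK n (j + 1) k) (hT k D) v = wt t n k (RelU k (j + 1)) D C := by
  obtain ⟨r1, r2⟩ := Up_gammaJK t hD hj hk hv
  have hcol := hv.take hk
  rw [hC] at r1 r2 hcol
  unfold wt
  split_ifs with h
  · obtain ⟨hrow, R, hs⟩ := h
    have hTr := Tr_iff.2 hs
    have hOff : Off k j D (C.take k) R :=
      ⟨hTr.1, fun r hr => by rw [getD_take _ (by omega)]; exact hrow r (by omega), hTr.2.2.1⟩
    obtain ⟨u1, u2, -⟩ := r1 R hOff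
    obtain ⟨s1, s2⟩ := stat_eq (n := n) hD (by omega) hCl hTr
    rw [s1, s2]
    unfold trVal
    split_ifs with he
    · exact u1 he
    · rcases hTr.2.2.2.2 with h3 | h3
      · exact u2 h3
      · exact absurd h3 he
  · by_cases hex : ∃ R, Off k j D (C.take k) R
    · obtain ⟨R, hOff⟩ := hex
      refine (r1 R hOff).2.2 fun hsle => h ?_
      obtain ⟨c1, c2, -, -⟩ := cyc_facts hD hj j le_rfl R hOff.1
      refine ⟨fun r hr => ?_, R, Tr_iff.1 ⟨hOff.1, hj, hOff.2.2, fun r hr hrj => ?_, hsle⟩⟩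
      · rw [← getD_take C hr]
        rcases lt_trichotomy r j with hlt | heq | hgt
        · exact hOff.2.1 r hlt
        · subst heq
          have hG : Good r r D (cycleApply D R (r + 1)) R := ⟨hOff.1, rfl, fun q hq => by
            rw [← hOff.2.2 q (by omega) (by omega)]; exact hOff.2.1 q hq⟩
          have h4 := Good.row hD hj r le_rfl _ R hG
          rcases hsle with h5 | h5
          · rcases h4 with h4 | h4
            · exact Or.inl (slt_trans (hcol.ent r hr) (c1.ent r hr) (hD.ent r hr) h5 h4)
            · rw [← h4]; exact Or.inl h5
          · rw [h5]; exact h4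
        · right
          rw [hOff.2.2 r hr (by omega)]
          exact c2 r (by omega) (by omega)
      · rw [← hOff.2.2 r hr hrj]
        exact hcol.dist j r hj hr (fun h => hrj h.symm)
    · push Not at hex
      exact r2 hex

end

/-! ### Compression: from windows to columns -/

open Classical in
/-- The finite set of columns of height `k` with entries in `{±1, …, ±n}`, no two of which agree
up to sign. -/
noncomputable def Col (n k : ℕ) : Finset (List ℤ) :=
  ((Fintype.piFinset (fun _ : Fin k => Finset.Icc (-(n : ℤ)) n)).image List.ofFn).filter (IsCol n k)

lemma mem_Col {n k : ℕ} {C : List ℤ} : C ∈ Col n k ↔ IsCol n k C := by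
  classical
  unfold Col
  rw [Finset.mem_filter, and_iff_right_iff_imp]
  intro h
  rw [Finset.mem_image]
  refine ⟨fun i => C.getD i 0, ?_, ?_⟩
  · rw [Fintype.mem_piFinset]
    intro i
    have := h.ent i i.2
    unfold Ent at this
    rw [Finset.mem_Icc]
    omega
  · refine list_ext_getD (by simp [h.len]) fun p hp => ?_
    have hp : p < k := by simpa using hp
    rw [List.getD_eq_getElem _ _ (by simpa using hp)]
    simp

section
variable {A : Type*} [CommRing A] (t : A) {ι : Type*} (k : ι → ℕ) (seg : ι → List (ℕ × ℤ))
  (rel : ι → List ℤ → List ℤ → Prop) (c : ι → List ℤ → A)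

/-- The sum over all chains starting at a window, organized along a list of labels: the label `l`
contributes the factor `c l` and the chain segment `seg l`. -/
noncomputable def Lsum : List ι → List ℤ → A
  | [], _ => 1
  | [l], w => c l (w.take (k l)) * t ^ lplus w
  | l :: l' :: ls, w => c l (w.take (k l)) * Dn t (seg l) (Lsum (l' :: ls)) w

/-- All lists of columns whose heights are prescribed by a list of labels. -/
noncomputable def ColLists (n : ℕ) : List ι → Finset (List (List ℤ))
  | [] => {[]}
  | l :: ls => (Col n (k l) ×ˢ ColLists n ls).image (fun p => p.1 :: p.2)

/-- The weight of a list of columns. -/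
noncomputable def Wcol (n : ℕ) : List ι → List (List ℤ) → A
  | [l], [D] => c l D * t ^ lplus D
  | l :: l' :: ls, D :: C :: Cs => c l D * (wt t n (k l) (rel l) D C * Wcol n (l' :: ls) (C :: Cs))
  | _, _ => 0

lemma sum_ColLists_cons (n : ℕ) (l : ι) (ls : List ι) (f : List (List ℤ) → A) :
    ∑ Cs ∈ ColLists k n (l :: ls), f Cs =
      ∑ D ∈ Col n (k l), ∑ Cs ∈ ColLists k n ls, f (D :: Cs) := by
  rw [ColLists, Finset.sum_image, Finset.sum_product]
  rintro ⟨a, b⟩ _ ⟨a', b'⟩ _ h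
  simpa using h

lemma sum_hT {n k : ℕ} (hk : k ≤ n) {v : List ℤ} (hv : IsCol n n v) (f : List ℤ → A) :
    ∑ C ∈ Col n k, hT k C v * f C = f (v.take k) := by
  rw [Finset.sum_eq_single (v.take k)]
  · simp [hT]
  · intro b _ hb
    simp [hT, Ne.symm hb]
  · intro h
    exact absurd (mem_Col.2 (hv.take hk)) h

/-- Summing over all windows with prescribed first rows amounts to summing over the columns that
follow. -/
lemma compress {n : ℕ} : ∀ (l : ι) (ls : List ι)
    (_ : ∀ l' ∈ l :: ls, k l' ≤ n ∧ (∀ β ∈ seg l', PosRefl n β) ∧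
      ∀ D C v, IsCol n (k l') D → IsCol n n v → v.take (k l') = C.take (k l') →
        k l' ≤ C.length → Up t (seg l') (hT (k l') D) v = wt t n (k l') (rel l') D C)
    (_ : (l :: ls).IsChain (fun a b => k a ≤ k b)) (_ : k ((l :: ls).getLast (by simp)) = n)
    (D : List ℤ) (_ : IsCol n (k l) D),
    ∑ u ∈ allWindows n, hT (k l) D u * Lsum t k seg c (l :: ls) u =
      ∑ Cs ∈ ColLists k n ls, Wcol t k rel c n (l :: ls) (D :: Cs)
  | l, [], hl, _, hlast, D, hD => by
    have hkn : k l = n := hlast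
    rw [hkn] at hD
    simp only [ColLists, Finset.sum_singleton, Lsum, Wcol]
    rw [Finset.sum_eq_single D]
    · have : D.take (k l) = D := List.take_of_length_le (by rw [hD.len, hkn])
      simp [hT, this]
    · intro u hu hne
      have hu := mem_allWindows.1 hu
      have : u.take (k l) = u := List.take_of_length_le (by rw [hu.len, hkn])
      simp [hT, this, hne]
    · intro h; exact absurd (mem_allWindows.2 hD) h
  | l, l' :: ls, hl, hch, hlast, D, hD => by
    obtain ⟨hkn, hpos, hlump⟩ := hl l List.mem_cons_self
    have hkn' := (hl l' (by simp)).1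
    have hle : k l ≤ k l' := by
      rw [List.isChain_cons_cons] at hch; exact hch.1
    have e1 : ∀ u, hT (k l) D u * Lsum t k seg c (l :: l' :: ls) u =
        c l D * (hT (k l) D u * Dn t (seg l) (Lsum t k seg c (l' :: ls)) u) := by
      intro u
      rw [Lsum, hT]
      split_ifs with h
      · rw [h]; ring
      · ring
    simp only [e1]
    rw [← Finset.mul_sum, Dn_Up t hpos]
    have e2 : ∀ v ∈ allWindows n, Up t (seg l) (hT (k l) D) v * Lsum t k seg c (l' :: ls) v =
        ∑ C ∈ Col n (k l'), wt t n (k l) (rel l) D C *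
          (hT (k l') C v * Lsum t k seg c (l' :: ls) v) := by
      intro v hv
      have hv := mem_allWindows.1 hv
      have h3 : ∀ C, wt t n (k l) (rel l) D C * (hT (k l') C v * Lsum t k seg c (l' :: ls) v) =
          hT (k l') C v * (wt t n (k l) (rel l) D C * Lsum t k seg c (l' :: ls) v) :=
        fun C => by ring
      simp only [h3]
      rw [sum_hT hkn' hv (fun C => wt t n (k l) (rel l) D C * Lsum t k seg c (l' :: ls) v)]
      rw [hlump D (v.take (k l')) v hD hv (by rw [List.take_take, min_eq_left hle])
        (by simp [hv.len]; omega)]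
    rw [Finset.sum_congr rfl e2, Finset.sum_comm, sum_ColLists_cons]
    simp only [Wcol]
    simp only [← Finset.mul_sum]
    congr 1
    refine Finset.sum_congr rfl fun C hC => ?_
    congr 1
    refine compress l' ls (fun a ha => hl a (List.mem_cons_of_mem _ ha)) ?_ ?_ C (mem_Col.1 hC)
    · rw [List.isChain_cons_cons] at hch; exact hch.2
    · rw [← hlast]; simp

/-- If each chain segment satisfies a lumping property as in `lump_P` and `lump_U`, the sum over all
chains of windows collapses to a sum over lists of columns. -/
lemma compress_total {n : ℕ} (l : ι) (ls : List ι)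
    (hl : ∀ l' ∈ l :: ls, k l' ≤ n ∧ (∀ β ∈ seg l', PosRefl n β) ∧
      ∀ D C v, IsCol n (k l') D → IsCol n n v → v.take (k l') = C.take (k l') →
        k l' ≤ C.length → Up t (seg l') (hT (k l') D) v = wt t n (k l') (rel l') D C)
    (hch : (l :: ls).IsChain (fun a b => k a ≤ k b))
    (hlast : k ((l :: ls).getLast (by simp)) = n) :
    ∑ u ∈ allWindows n, Lsum t k seg c (l :: ls) u =
      ∑ Cs ∈ ColLists k n (l :: ls), Wcol t k rel c n (l :: ls) Cs := by
  rw [sum_ColLists_cons]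
  have hkn := (hl l List.mem_cons_self).1
  have e : ∀ u ∈ allWindows n, Lsum t k seg c (l :: ls) u =
      ∑ D ∈ Col n (k l), hT (k l) D u * Lsum t k seg c (l :: ls) u := fun u hu =>
    (sum_hT hkn (mem_allWindows.1 hu) (fun _ => Lsum t k seg c (l :: ls) u)).symm
  rw [Finset.sum_congr rfl e, Finset.sum_comm]
  exact Finset.sum_congr rfl fun D hD => compress t k seg rel c l ls hl hch hlast D (mem_Col.1 hD)

end

/-! ### Weights and the affine reflections -/

/-- The coordinate `ε_r` (0-based) of `ε_a`, where `ε_{-i} = -ε_i`. -/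
def chi (r : ℕ) (a : ℤ) : ℚ :=
  (if a = (r : ℤ) + 1 then 1 else 0) - (if a = -((r : ℤ) + 1) then 1 else 0)

lemma chi_neg (r : ℕ) (a : ℤ) : chi r (-a) = -chi r a := by
  unfold chi
  have e1 : (-a = (r : ℤ) + 1) ↔ (a = -((r : ℤ) + 1)) := by omega
  have e2 : (-a = -((r : ℤ) + 1)) ↔ (a = (r : ℤ) + 1) := by omega
  simp only [e1, e2]
  ring

/-- The linear action of a window on rational weights. -/
def wq (n : ℕ) (w : List ℤ) (v : Fin n → ℚ) : Fin n → ℚ := fun r =>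
  ∑ i : Fin n, v i * chi r (w.getD i 0)

/-- The pairing `⟨v, β^∨⟩` of a rational weight with a coroot. -/
def pair (n : ℕ) (v : Fin n → ℚ) (β : ℕ × ℤ) : ℚ := ∑ i : Fin n, v i * (corootVec n β i : ℚ)

lemma wAct_cast (n : ℕ) (w : List ℤ) (v : Fin n → ℤ) :
    (fun r : Fin n => ((wAct n w v r : ℤ) : ℚ)) = wq n w (fun i => (v i : ℚ)) := by
  funext r
  unfold wAct wq chi
  push_cast
  refine Finset.sum_congr rfl fun i _ => ?_
  split_ifs <;> ring

lemma ip_cast (n : ℕ) (v : Fin n → ℤ) (β : ℕ × ℤ) :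
    ((ip n v (corootVec n β) : ℤ) : ℚ) = pair n (fun i => (v i : ℚ)) β := by
  unfold ip pair; push_cast; rfl

lemma wq_add (n : ℕ) (w : List ℤ) (u v : Fin n → ℚ) : wq n w (u + v) = wq n w u + wq n w v := by
  funext r
  simp [wq, add_mul, Finset.sum_add_distrib]

lemma wq_smul (n : ℕ) (w : List ℤ) (c : ℚ) (v : Fin n → ℚ) : wq n w (c • v) = c • wq n w v := by
  funext r
  simp [wq, mul_assoc, Finset.mul_sum]

lemma wq_zero (n : ℕ) (w : List ℤ) : wq n w 0 = 0 := by
  funext r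
  simp [wq]

lemma pair_add (n : ℕ) (u v : Fin n → ℚ) (β : ℕ × ℤ) :
    pair n (u + v) β = pair n u β + pair n v β := by
  simp [pair, add_mul, Finset.sum_add_distrib]

lemma pair_smul (n : ℕ) (c : ℚ) (v : Fin n → ℚ) (β : ℕ × ℤ) :
    pair n (c • v) β = c * pair n v β := by
  simp [pair, mul_assoc, Finset.mul_sum]

/-- The root of a reflection as a rational vector. -/
def rootQ (n : ℕ) (β : ℕ × ℤ) : Fin n → ℚ := fun i => (rootVec n β i : ℚ)

lemma rootQ_negSwap {n r j : ℕ} (hr : r < j) (hj : j < n) (i : Fin n) :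
    rootQ n (r + 1, -((j + 1 : ℕ) : ℤ)) i =
      (if i = ⟨r, hr.trans hj⟩ then 1 else 0) + (if i = ⟨j, hj⟩ then 1 else 0) := by
  unfold rootQ rootVec
  simp only [Fin.ext_iff]
  split_ifs <;> first | omega | norm_num

lemma rootQ_swap {n r j : ℕ} (hr : r < j) (hj : j < n) (i : Fin n) :
    rootQ n (r + 1, ((j + 1 : ℕ) : ℤ)) i =
      (if i = ⟨r, hr.trans hj⟩ then 1 else 0) - (if i = ⟨j, hj⟩ then 1 else 0) := by
  unfold rootQ rootVec
  simp only [Fin.ext_iff]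
  split_ifs <;> first | omega | norm_num

lemma rootQ_negOne {n j : ℕ} (hj : j < n) (i : Fin n) :
    rootQ n (j + 1, -((j + 1 : ℕ) : ℤ)) i = if i = ⟨j, hj⟩ then 2 else 0 := by
  unfold rootQ rootVec
  simp only [Fin.ext_iff]
  split_ifs <;> first | omega | norm_num

lemma pair_negSwap {n r j : ℕ} (hr : r < j) (hj : j < n) (v : Fin n → ℚ) :
    pair n v (r + 1, -((j + 1 : ℕ) : ℤ)) = v ⟨r, hr.trans hj⟩ + v ⟨j, hj⟩ := by
  unfold pair corootVec
  rw [if_neg (by dsimp only; omega)]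
  have := rootQ_negSwap hr hj
  unfold rootQ at this
  simp only [this, mul_add, Finset.sum_add_distrib, mul_ite, mul_one, mul_zero]
  simp

lemma pair_swap {n r j : ℕ} (hr : r < j) (hj : j < n) (v : Fin n → ℚ) :
    pair n v (r + 1, ((j + 1 : ℕ) : ℤ)) = v ⟨r, hr.trans hj⟩ - v ⟨j, hj⟩ := by
  unfold pair corootVec
  rw [if_neg (by dsimp only; omega)]
  have := rootQ_swap hr hj
  unfold rootQ at this
  simp only [this, mul_sub, Finset.sum_sub_distrib, mul_ite, mul_one, mul_zero]
  simp

lemma pair_negOne {n j : ℕ} (hj : j < n) (v : Fin n → ℚ) :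
    pair n v (j + 1, -((j + 1 : ℕ) : ℤ)) = v ⟨j, hj⟩ := by
  unfold pair corootVec
  rw [if_pos (by simp)]
  have : ∀ i : Fin n, (((if ((i : ℕ) + 1 : ℤ) = ((j + 1 : ℕ) : ℤ) then 1 else 0 : ℤ)) : ℚ) =
      if i = ⟨j, hj⟩ then 1 else 0 := by
    intro i
    simp only [Fin.ext_iff]
    split_ifs <;> first | omega | norm_num
  simp only [this, mul_ite, mul_one, mul_zero]
  simp

/-- The right action of a reflection on windows is compatible with its linear action on weights. -/
lemma wq_applyRefl {n : ℕ} {w : List ℤ} (hw : w.length = n) {β : ℕ × ℤ} (hβ : PosRefl n β)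
    (v : Fin n → ℚ) :
    wq n (applyRefl w β) v = wq n w v - pair n v β • wq n w (rootQ n β) := by
  funext s
  simp only [Pi.sub_apply, Pi.smul_apply, smul_eq_mul]
  rcases hβ with ⟨r, j, h1, h2, rfl⟩ | ⟨r, j, h1, h2, rfl⟩ | ⟨j, h1, rfl⟩
  · rw [pair_negSwap h1 h2]
    unfold wq
    simp only [rootQ_negSwap h1 h2, getD_negSwap w r j _ (by omega) (by omega) (by omega)]
    have e : ∀ i : Fin n, v i * chi s (if (i : ℕ) = j then -(w.getD r 0) else
        if (i : ℕ) = r then -(w.getD j 0) else w.getD i 0) = v i * chi s (w.getD i 0)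
        - (if i = ⟨r, h1.trans h2⟩ then v ⟨r, h1.trans h2⟩ * (chi s (w.getD r 0) + chi s (w.getD j 0)) else 0)
        - (if i = ⟨j, h2⟩ then v ⟨j, h2⟩ * (chi s (w.getD r 0) + chi s (w.getD j 0)) else 0) := by
      intro i
      simp only [Fin.ext_iff]
      by_cases ha : (i : ℕ) = j
      · have : i = ⟨j, h2⟩ := Fin.ext ha
        rw [if_pos ha, if_pos ha, if_neg (by omega), chi_neg, this]; ring
      · by_cases hb : (i : ℕ) = r
        · have : i = ⟨r, h1.trans h2⟩ := Fin.ext hb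
          rw [if_neg ha, if_pos hb, if_neg ha, if_pos hb, chi_neg, this]; ring
        · simp [ha, hb]
    simp only [e, Finset.sum_sub_distrib, add_mul, ite_mul, one_mul, zero_mul,
      Finset.sum_add_distrib]
    simp
    ring
  · rw [pair_swap h1 h2]
    unfold wq
    simp only [rootQ_swap h1 h2, getD_swap w r j _ (by omega) (by omega)]
    have e : ∀ i : Fin n, v i * chi s (if (i : ℕ) = j then (w.getD r 0) else
        if (i : ℕ) = r then (w.getD j 0) else w.getD i 0) = v i * chi s (w.getD i 0)
        - (if i = ⟨r, h1.trans h2⟩ then v ⟨r, h1.trans h2⟩ * (chi s (w.getD r 0) - chi s (w.getD j 0)) else 0)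
        + (if i = ⟨j, h2⟩ then v ⟨j, h2⟩ * (chi s (w.getD r 0) - chi s (w.getD j 0)) else 0) := by
      intro i
      simp only [Fin.ext_iff]
      by_cases ha : (i : ℕ) = j
      · have : i = ⟨j, h2⟩ := Fin.ext ha
        rw [if_pos ha, if_pos ha, if_neg (by omega), this]; ring
      · by_cases hb : (i : ℕ) = r
        · have : i = ⟨r, h1.trans h2⟩ := Fin.ext hb
          rw [if_neg ha, if_pos hb, if_neg ha, if_pos hb, this]; ring
        · simp [ha, hb]
    simp only [e, Finset.sum_sub_distrib, sub_mul, ite_mul, one_mul, zero_mul,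
      Finset.sum_add_distrib]
    simp
    ring
  · rw [pair_negOne h1]
    unfold wq
    simp only [rootQ_negOne h1, getD_negOne w j _ (by omega)]
    have e : ∀ i : Fin n, v i * chi s (if (i : ℕ) = j then -(w.getD j 0) else w.getD i 0) =
        v i * chi s (w.getD i 0)
        - (if i = ⟨j, h1⟩ then v ⟨j, h1⟩ * (2 * chi s (w.getD j 0)) else 0) := by
      intro i
      simp only [Fin.ext_iff]
      by_cases ha : (i : ℕ) = j
      · have : i = ⟨j, h1⟩ := Fin.ext ha
        rw [if_pos ha, if_pos ha, chi_neg, this]; ring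
      · simp [ha]
    simp only [e, Finset.sum_sub_distrib, ite_mul, zero_mul]
    simp

/-- The action of `w` after an affine reflection `v ↦ s_β v + cβ` in terms of the action of `w s_β`. -/
lemma wq_affRefl {n : ℕ} {w : List ℤ} (hw : w.length = n) {β : ℕ × ℤ} (hβ : PosRefl n β)
    (c : ℤ) (v : Fin n → ℤ) :
    wq n w (fun i => (affRefl n β c v i : ℚ)) =
      (c : ℚ) • wq n w (rootQ n β) + wq n (applyRefl w β) (fun i => (v i : ℚ)) := by
  have e : (fun i => (affRefl n β c v i : ℚ)) =
      (fun i => (v i : ℚ)) + (-(pair n (fun i => (v i : ℚ)) β - c)) • rootQ n β := by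
    funext i
    simp only [affRefl, rootQ, ← ip_cast, Pi.add_apply, Pi.smul_apply, smul_eq_mul]
    push_cast
    ring
  rw [e, wq_add, wq_smul, wq_applyRefl hw hβ]
  module

/-! ### The left-hand side as an iterated sum along the chain -/

/-- The coefficient-and-exponent ring of the generating functions. -/
abbrev AR (n : ℕ) := AddMonoidAlgebra (Polynomial ℤ) (Fin n → ℚ)

/-- The variable `t`. -/
noncomputable def tt (n : ℕ) : AR n := AddMonoidAlgebra.single 0 Polynomial.X

/-- The monomial `x^v`. -/
noncomputable def xx {n : ℕ} (v : Fin n → ℚ) : AR n := AddMonoidAlgebra.single v 1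

lemma xx_add {n : ℕ} (u v : Fin n → ℚ) : xx (u + v) = xx u * xx v := by
  unfold xx; rw [AddMonoidAlgebra.single_mul_single, one_mul]

lemma xx_zero {n : ℕ} : xx (0 : Fin n → ℚ) = 1 := rfl

lemma single_eq {n : ℕ} (v : Fin n → ℚ) (a b : ℕ) :
    (AddMonoidAlgebra.single v (Polynomial.X ^ a * (1 - Polynomial.X) ^ b) : AR n) =
      xx v * (tt n ^ a * (1 - tt n) ^ b) := by
  have h : (1 - tt n : AR n) = AddMonoidAlgebra.single 0 (1 - Polynomial.X) := by
    unfold tt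
    rw [AddMonoidAlgebra.single_sub]; rfl
  rw [h]
  unfold xx tt
  rw [AddMonoidAlgebra.single_pow, AddMonoidAlgebra.single_pow,
    AddMonoidAlgebra.single_mul_single, AddMonoidAlgebra.single_mul_single]
  simp

/-- The term of a sequence `L` of annotated reflections (reflection, level) in the alcove walk
formula, with starting window `w`; zero unless the sequence is admissible. -/
noncomputable def aterm (n : ℕ) (lv : Fin n → ℤ) (w : List ℤ) (L : List ((ℕ × ℤ) × ℤ)) : AR n :=
  if decChain w (L.map Prod.fst) = true then
    xx (wq n w (fun i => ((L.foldr (fun a v => affRefl n a.1 a.2 v) lv i : ℤ) : ℚ))) *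
      (tt n ^ ((len w + len (applyAll w (L.map Prod.fst)) - L.length) / 2) *
        (1 - tt n) ^ L.length)
  else 0

lemma decChain_len : ∀ (L : List (ℕ × ℤ)) (w : List ℤ), decChain w L = true →
    len (applyAll w L) + L.length ≤ len w
  | [], w, _ => by simp [applyAll]
  | β :: L, w, h => by
    simp only [decChain, Bool.and_eq_true, decide_eq_true_eq] at h
    have := decChain_len L _ h.2
    simp only [applyAll, List.foldl_cons, List.length_cons] at *
    omega

/-- The term of an admissible sequence factors off its first reflection. -/
lemma aterm_cons {n : ℕ} (lv : Fin n → ℤ) {w : List ℤ} (hw : IsCol n n w) {β : ℕ × ℤ}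
    (hβ : PosRefl n β) (c : ℤ) (L : List ((ℕ × ℤ) × ℤ)) :
    aterm n lv w ((β, c) :: L) =
      if len (applyRefl w β) < len w then
        tt n ^ ((len w - len (applyRefl w β) - 1) / 2) * (1 - tt n) *
          (xx ((c : ℚ) • wq n w (rootQ n β)) * aterm n lv (applyRefl w β) L)
      else 0 := by
  unfold aterm
  simp only [List.map_cons, decChain, Bool.and_eq_true, decide_eq_true_eq, List.foldr_cons,
    List.length_cons]
  by_cases h1 : len (applyRefl w β) < len w
  · by_cases h2 : decChain (applyRefl w β) (L.map Prod.fst) = true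
    · rw [if_pos ⟨h1, h2⟩, if_pos h1, if_pos h2, wq_affRefl hw.len hβ, xx_add]
      have h3 := decChain_len _ _ h2
      have e : applyAll w (β :: L.map Prod.fst) =
        applyAll (applyRefl w β) (L.map Prod.fst) := rfl
      rw [e]
      obtain ⟨d, hd⟩ := len_applyRefl_odd hw hβ
      rw [List.length_map] at h3
      have : (len w + len (applyAll (applyRefl w β) (L.map Prod.fst)) - (L.length + 1)) / 2 =
          (len w - len (applyRefl w β) - 1) / 2 +
          (len (applyRefl w β) + len (applyAll (applyRefl w β) (L.map Prod.fst)) - L.length) / 2 := by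
        omega
      rw [this, pow_add, pow_succ (1 - tt n)]
      ring
    · rw [if_neg (fun h => h2 h.2), if_pos h1, if_neg h2]; simp
  · rw [if_neg (fun h => h1 h.1), if_neg h1]

/-- The sum of `aterm` over all subsequences of an annotated chain. -/
noncomputable def Dh (n : ℕ) (lv : Fin n → ℤ) : List ((ℕ × ℤ) × ℤ) → List ℤ → AR n
  | [], w => xx (wq n w (fun i => (lv i : ℚ))) * tt n ^ len w
  | (β, c) :: Γ, w => Dh n lv Γ w +
      if len (applyRefl w β) < len w then
        tt n ^ ((len w - len (applyRefl w β) - 1) / 2) * (1 - tt n) *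
          (xx ((c : ℚ) • wq n w (rootQ n β)) * Dh n lv Γ (applyRefl w β))
      else 0

/-- A chain with each member labelled by its level, given the part `pre` of the chain that
precedes it. -/
def annot : List (ℕ × ℤ) → List (ℕ × ℤ) → List ((ℕ × ℤ) × ℤ)
  | _, [] => []
  | pre, β :: Γ => (β, ((pre.count β + 1 : ℕ) : ℤ)) :: annot (pre ++ [β]) Γ

lemma annot_append : ∀ (pre Γ₁ Γ₂ : List (ℕ × ℤ)),
    annot pre (Γ₁ ++ Γ₂) = annot pre Γ₁ ++ annot (pre ++ Γ₁) Γ₂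
  | pre, [], Γ₂ => by simp [annot]
  | pre, β :: Γ₁, Γ₂ => by
    simp only [List.cons_append, annot]
    rw [annot_append (pre ++ [β]) Γ₁ Γ₂]
    simp

/-- In a part of the chain without repetitions, all levels are determined by the preceding part. -/
lemma annot_nodup : ∀ (pre Γ : List (ℕ × ℤ)), Γ.Nodup →
    annot pre Γ = Γ.map (fun β => (β, ((pre.count β + 1 : ℕ) : ℤ)))
  | pre, [], _ => by simp [annot]
  | pre, β :: Γ, h => by
    rw [List.nodup_cons] at h
    simp only [annot, List.map_cons]
    rw [annot_nodup _ Γ h.2]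
    congr 1
    refine List.map_congr_left fun γ hγ => ?_
    have : γ ≠ β := fun e => h.1 (e ▸ hγ)
    rw [List.count_append, List.count_singleton]
    simp [Ne.symm this]

/-- The member at position `j` of a chain together with its level. -/
def annotAt (Γ : List (ℕ × ℤ)) (j : ℕ) : (ℕ × ℤ) × ℤ := (Γ.getD j (0, 0), ((lCount Γ j : ℕ) : ℤ))

lemma sum_powerset_Dh {n : ℕ} (lv : Fin n → ℤ) (Γ : List (ℕ × ℤ)) (hΓ : ∀ β ∈ Γ, PosRefl n β) :
    ∀ (d a : ℕ), a + d = Γ.length → ∀ w, IsCol n n w →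
    ∑ J ∈ (Finset.Ico a Γ.length).powerset,
      aterm n lv w ((J.sort (· ≤ ·)).map (annotAt Γ)) = Dh n lv (annot (Γ.take a) (Γ.drop a)) w
  | 0, a, h, w, hw => by
    have : a = Γ.length := by omega
    subst this
    simp [annot, Dh, aterm, decChain, applyAll]
    left
    congr 1
    omega
  | d + 1, a, h, w, hw => by
    have ha : a < Γ.length := by omega
    have hβ : PosRefl n Γ[a] := hΓ _ (List.getElem_mem ha)
    rw [← Finset.insert_Ico_add_one_left_eq_Ico ha, Finset.sum_powerset_insert (by simp)]
    rw [sum_powerset_Dh lv Γ hΓ d (a + 1) (by omega) w hw]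
    have e1 : Γ.drop a = Γ[a] :: Γ.drop (a + 1) := List.drop_eq_getElem_cons ha
    have e2 : Γ.take (a + 1) = Γ.take a ++ [Γ[a]] := by simp
    have e3 : annotAt Γ a = (Γ[a], (((Γ.take a).count Γ[a] + 1 : ℕ) : ℤ)) := by
      unfold annotAt lCount
      rw [List.getD_eq_getElem _ _ ha, e2, List.count_append]
      simp
    rw [e1, annot, Dh, ← e2]
    congr 1
    have e4 : ∀ J ∈ (Finset.Ico (a + 1) Γ.length).powerset,
        aterm n lv w (((insert a J).sort (· ≤ ·)).map (annotAt Γ)) =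
        aterm n lv w ((Γ[a], (((Γ.take a).count Γ[a] + 1 : ℕ) : ℤ)) ::
          (J.sort (· ≤ ·)).map (annotAt Γ)) := by
      intro J hJ
      rw [Finset.mem_powerset] at hJ
      rw [Finset.sort_insert, List.map_cons, e3]
      · intro b hb
        have := Finset.mem_Ico.1 (hJ hb); omega
      · intro hb
        have := Finset.mem_Ico.1 (hJ hb); omega
    rw [Finset.sum_congr rfl e4]
    simp only [aterm_cons lv hw hβ]
    split_ifs with hlt
    · rw [← Finset.mul_sum, ← Finset.mul_sum,
        sum_powerset_Dh lv Γ hΓ d (a + 1) (by omega) _ (hw.applyRefl hβ)]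
    · simp

/-- A stretch of the chain whose levels are all given by pairing with one weight `ν` becomes an
unweighted stretch after conjugation by `x^{wν}`. -/
lemma Dh_stretch {n : ℕ} (lv : Fin n → ℤ) (ν : Fin n → ℚ) (Γ : List ((ℕ × ℤ) × ℤ)) :
    ∀ (B : List ((ℕ × ℤ) × ℤ)), (∀ a ∈ B, PosRefl n a.1 ∧ (a.2 : ℚ) = pair n ν a.1) →
    ∀ w, IsCol n n w →
    xx (-wq n w ν) * Dh n lv (B ++ Γ) w =
      Dn (tt n) (B.map Prod.fst) (fun u => xx (-wq n u ν) * Dh n lv Γ u) w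
  | [], _, w, _ => by simp [Dn_nil]
  | (β, c) :: B, hB, w, hw => by
    obtain ⟨hβ, hc⟩ := hB (β, c) List.mem_cons_self
    have ih := Dh_stretch lv ν Γ B (fun a ha => hB a (List.mem_cons_of_mem _ ha))
    simp only [List.cons_append, Dh, List.map_cons, Dn_cons]
    unfold dn
    rw [← ih w hw, ← ih _ (hw.applyRefl hβ), mul_add]
    congr 1
    split_ifs with h
    · dsimp only at hc
      have e : -wq n (applyRefl w β) ν = (c : ℚ) • wq n w (rootQ n β) + -wq n w ν := by
        rw [wq_applyRefl hw.len hβ, hc]; module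
      rw [e, xx_add]
      ring
    · simp

/-! ### The levels of the `λ`-chain -/

/-- The first half `Γ'_2 ⋯ Γ'_k` of `Γ(k)`. -/
def B1 (k : ℕ) : List (ℕ × ℤ) := (List.range (k - 1)).flatMap (fun r => gammaPrime (r + 2))

/-- The second half `Γ_1(k) ⋯ Γ_k(k)` of `Γ(k)`. -/
def B2 (n k : ℕ) : List (ℕ × ℤ) := (List.range k).flatMap (fun r => gammaJK n (r + 1) k)

lemma gammaChain_eq (n k : ℕ) : gammaChain n k = B1 k ++ B2 n k := by
  unfold gammaChain B1 B2
  rw [List.flatMap_def, List.flatMap_def]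

lemma mem_B1 {k : ℕ} {β : ℕ × ℤ} :
    β ∈ B1 k ↔ ∃ r j, r < j ∧ j < k ∧ β = (r + 1, -((j + 1 : ℕ) : ℤ)) := by
  unfold B1 gammaPrime
  simp only [List.mem_flatMap, List.mem_range, List.mem_map]
  constructor
  · rintro ⟨s, hs, r, hr, rfl⟩
    exact ⟨r, s + 1, by omega, by omega, rfl⟩
  · rintro ⟨r, j, h1, h2, rfl⟩
    exact ⟨j - 1, by omega, r, by omega, by rw [show j - 1 + 2 = j + 1 by omega]⟩

lemma mem_gammaJK {n s k : ℕ} {β : ℕ × ℤ} : β ∈ gammaJK n (s + 1) k ↔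
    (∃ r, r < s ∧ β = (r + 1, -((s + 1 : ℕ) : ℤ))) ∨
    (∃ r, r < n - k ∧ β = (s + 1, -((k + 1 + r : ℕ) : ℤ))) ∨ β = (s + 1, -((s + 1 : ℕ) : ℤ)) ∨
    (∃ r, r < n - k ∧ β = (s + 1, ((n - r : ℕ) : ℤ))) := by
  unfold gammaJK gammaPrime
  simp only [List.mem_append, List.mem_range, List.mem_map, List.mem_singleton, or_assoc,
    Nat.add_sub_cancel, eq_comm (a := β)]

lemma mem_B2 {n k : ℕ} {β : ℕ × ℤ} : β ∈ B2 n k ↔ ∃ s, s < k ∧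
    ((∃ r, r < s ∧ β = (r + 1, -((s + 1 : ℕ) : ℤ))) ∨
    (∃ r, r < n - k ∧ β = (s + 1, -((k + 1 + r : ℕ) : ℤ))) ∨ β = (s + 1, -((s + 1 : ℕ) : ℤ)) ∨
    (∃ r, r < n - k ∧ β = (s + 1, ((n - r : ℕ) : ℤ)))) := by
  unfold B2
  simp only [List.mem_flatMap, List.mem_range, mem_gammaJK]

lemma nodup_B1 (k : ℕ) : (B1 k).Nodup := by
  unfold B1
  rw [List.nodup_flatMap]
  refine ⟨fun r _ => ?_, ?_⟩
  · unfold gammaPrime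
    refine List.nodup_range.map fun a b h => ?_
    simp only [Prod.mk.injEq] at h
    omega
  · refine List.nodup_range.imp fun {a b} hab => ?_
    intro β h1 h2
    unfold gammaPrime at h1 h2
    simp only [List.mem_map, List.mem_range] at h1 h2
    obtain ⟨r, _, rfl⟩ := h1
    obtain ⟨r', _, h⟩ := h2
    simp only [Prod.mk.injEq] at h
    omega

lemma nodup_gammaJK {n s k : ℕ} (hs : s < k) (hk : k ≤ n) : (gammaJK n (s + 1) k).Nodup := by
  unfold gammaJK gammaPrime
  refine List.Nodup.append (List.Nodup.append (List.Nodup.append ?_ ?_ ?_) ?_ ?_) ?_ ?_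
  · refine List.nodup_range.map fun a b h => ?_
    simp only [Prod.mk.injEq] at h
    omega
  · refine List.nodup_range.map fun a b h => ?_
    simp only [Prod.mk.injEq] at h
    omega
  · intro β h1 h2
    simp only [List.mem_map, List.mem_range] at h1 h2
    obtain ⟨r, _, rfl⟩ := h1
    obtain ⟨r', _, h⟩ := h2
    simp only [Prod.mk.injEq] at h
    omega
  · exact List.nodup_singleton _
  · intro β h1 h2
    simp only [List.mem_append, List.mem_map, List.mem_range, List.mem_singleton] at h1 h2
    subst h2
    rcases h1 with ⟨r, h, h'⟩ | ⟨r, h, h'⟩ <;>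
    · simp only [Prod.mk.injEq] at h'
      omega
  · rw [List.nodup_map_iff_inj_on List.nodup_range]
    intro a ha b hb h
    simp only [Prod.mk.injEq, List.mem_range] at h ha hb
    omega
  · intro β h1 h2
    simp only [List.mem_append, List.mem_map, List.mem_range, List.mem_singleton] at h1 h2
    obtain ⟨r', h2, rfl⟩ := h2
    rcases h1 with (⟨r, h, h'⟩ | ⟨r, h, h'⟩) | h' <;>
    · simp only [Prod.mk.injEq] at h'
      omega

lemma nodup_B2 {n k : ℕ} (hk : k ≤ n) : (B2 n k).Nodup := by
  unfold B2
  rw [List.nodup_flatMap]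
  refine ⟨fun r hr => nodup_gammaJK (List.mem_range.1 hr) hk, ?_⟩
  rw [List.pairwise_iff_getElem]
  intro i j hi hj hij β h1 h2
  simp only [List.length_range] at hi hj
  simp only [List.getElem_range, mem_gammaJK] at h1 h2
  rcases h1 with ⟨r, h1, rfl⟩ | ⟨r, h1, rfl⟩ | rfl | ⟨r, h1, rfl⟩ <;>
  rcases h2 with ⟨r', h2, h⟩ | ⟨r', h2, h⟩ | h | ⟨r', h2, h⟩ <;>
  · simp only [Prod.mk.injEq] at h
    omega

/-- The fundamental weight `ω_k`. -/
def om (n k : ℕ) : Fin n → ℚ := fun r => if (r : ℕ) < k then 1 else 0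

lemma B1_pos {n k : ℕ} (hk : k ≤ n) : ∀ β ∈ B1 k, PosRefl n β := by
  intro β h
  obtain ⟨r, j, h1, h2, rfl⟩ := mem_B1.1 h
  exact Or.inl ⟨r, j, h1, by omega, rfl⟩

lemma B2_pos {n k : ℕ} (hk : k ≤ n) : ∀ β ∈ B2 n k, PosRefl n β := by
  intro β h
  unfold B2 at h
  rw [List.mem_flatMap] at h
  obtain ⟨s, hs, h⟩ := h
  exact gammaJK_pos (List.mem_range.1 hs) hk β h

/-- The roots in the first half of `Γ(k)` have pairing `2` with `ω_k`, hence their level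
relative to the beginning of `Γ(k)`, which is `1`, equals `⟨ω_k, β^∨⟩ / 2`. -/
lemma level1 {n k : ℕ} (hk : k ≤ n) {β : ℕ × ℤ} (h : β ∈ B1 k) : pair n (om n k) β = 2 := by
  obtain ⟨r, j, h1, h2, rfl⟩ := mem_B1.1 h
  rw [pair_negSwap h1 (by omega)]
  unfold om
  rw [if_pos (by dsimp only; omega), if_pos h2]
  norm_num

lemma count_nodup {l : List (ℕ × ℤ)} (h : l.Nodup) (β : ℕ × ℤ) [Decidable (β ∈ l)] :
    l.count β = if β ∈ l then 1 else 0 := by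
  split_ifs with h1
  · exact List.count_eq_one_of_mem h h1
  · exact List.count_eq_zero_of_not_mem h1

lemma B1_negSwap {k r j : ℕ} (h : r < j) : (r + 1, -((j + 1 : ℕ) : ℤ)) ∈ B1 k ↔ j < k := by
  rw [mem_B1]
  constructor
  · rintro ⟨r', j', h1, h2, h⟩
    simp only [Prod.mk.injEq] at h
    omega
  · intro hj
    exact ⟨r, j, h, hj, rfl⟩

lemma B1_swap {k r j : ℕ} : (r + 1, ((j + 1 : ℕ) : ℤ)) ∉ B1 k := by
  rw [mem_B1]
  rintro ⟨r', j', h1, h2, h⟩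
  simp only [Prod.mk.injEq] at h
  omega

lemma B1_negOne {k j : ℕ} : (j + 1, -((j + 1 : ℕ) : ℤ)) ∉ B1 k := by
  rw [mem_B1]
  rintro ⟨r', j', h1, h2, h⟩
  simp only [Prod.mk.injEq] at h
  omega

lemma B2_negSwap {n k r j : ℕ} (hk : k ≤ n) (h : r < j) (hj : j < n) :
    (r + 1, -((j + 1 : ℕ) : ℤ)) ∈ B2 n k ↔ r < k := by
  rw [mem_B2]
  constructor
  · rintro ⟨s, hs, ⟨r', h1, h⟩ | ⟨r', h1, h⟩ | h | ⟨r', h1, h⟩⟩ <;>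
    · simp only [Prod.mk.injEq] at h
      omega
  · intro hr
    by_cases hjk : j < k
    · exact ⟨j, hjk, Or.inl ⟨r, h, rfl⟩⟩
    · exact ⟨r, hr, Or.inr (Or.inl ⟨j - k, by omega, by rw [show k + 1 + (j - k) = j + 1 by omega]⟩)⟩

lemma B2_swap {n k r j : ℕ} (hk : k ≤ n) (h : r < j) (hj : j < n) :
    (r + 1, ((j + 1 : ℕ) : ℤ)) ∈ B2 n k ↔ r < k ∧ k ≤ j := by
  rw [mem_B2]
  constructor
  · rintro ⟨s, hs, ⟨r', h1, h⟩ | ⟨r', h1, h⟩ | h | ⟨r', h1, h⟩⟩ <;>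
    · simp only [Prod.mk.injEq] at h
      omega
  · rintro ⟨hr, hjk⟩
    exact ⟨r, hr, Or.inr (Or.inr (Or.inr ⟨n - 1 - j, by omega,
      by rw [show n - (n - 1 - j) = j + 1 by omega]⟩))⟩

lemma B2_negOne {n k j : ℕ} : (j + 1, -((j + 1 : ℕ) : ℤ)) ∈ B2 n k ↔ j < k := by
  rw [mem_B2]
  constructor
  · rintro ⟨s, hs, ⟨r', h1, h⟩ | ⟨r', h1, h⟩ | h | ⟨r', h1, h⟩⟩ <;>
    · simp only [Prod.mk.injEq] at h
      omega
  · intro hjk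
    exact ⟨j, hjk, Or.inr (Or.inr (Or.inl rfl))⟩

/-- Every positive root `β` occurs `⟨ω_k, β^∨⟩` times in `Γ(k)`. -/
lemma level3 {n k : ℕ} (hk : k ≤ n) {β : ℕ × ℤ} (h : PosRefl n β) :
    (((B1 k).count β + (B2 n k).count β : ℕ) : ℚ) = pair n (om n k) β := by
  classical
  rw [count_nodup (nodup_B1 k), count_nodup (nodup_B2 hk)]
  rcases h with ⟨r, j, h1, h2, rfl⟩ | ⟨r, j, h1, h2, rfl⟩ | ⟨j, h1, rfl⟩
  · rw [pair_negSwap h1 h2]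
    simp only [B1_negSwap h1, B2_negSwap hk h1 h2, om]
    push_cast
    ring
  · rw [pair_swap h1 h2]
    simp only [B1_swap, B2_swap hk h1 h2, om, if_false]
    by_cases ha : r < k
    · by_cases hb : j < k
      · rw [if_neg (by omega), if_pos ha, if_pos hb]; norm_num
      · rw [if_pos (by omega), if_pos ha, if_neg hb]; norm_num
    · rw [if_neg (by omega), if_neg ha, if_neg (by omega)]; norm_num
  · rw [pair_negOne h1]
    simp only [B1_negOne, B2_negOne, om, if_false]
    push_cast
    ring

/-- In the second half of `Γ(k)`, the level of `β` relative to the beginning of `Γ(k)` is `⟨ω_k, β^∨⟩`. -/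
lemma level2 {n k : ℕ} (hk : k ≤ n) {β : ℕ × ℤ} (h : β ∈ B2 n k) :
    (((B1 k).count β + 1 : ℕ) : ℚ) = pair n (om n k) β := by
  rw [← level3 hk (B2_pos hk β h), List.count_eq_one_of_mem (nodup_B2 hk) h]

/-- One block `Γ(k)` of the chain.  After conjugation by the monomial `x^{wν}`, where `ν` is the sum of
the fundamental weights of the preceding blocks, the levels of the affine reflections disappear and
only the factors `x^{w ω_k / 2}` before each half of the block remain. -/
lemma block_step {n k : ℕ} (hk : k ≤ n) (lv : Fin n → ℤ) (ν : Fin n → ℚ) (pre Γ : List (ℕ × ℤ))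
    (hpre : ∀ β, PosRefl n β → (pre.count β : ℚ) = pair n ν β) {w : List ℤ} (hw : IsCol n n w) :
    xx (-wq n w ν) * Dh n lv (annot pre (gammaChain n k ++ Γ)) w =
      xx ((1 / 2 : ℚ) • wq n w (om n k)) * Dn (tt n) (B1 k) (fun u =>
        xx ((1 / 2 : ℚ) • wq n u (om n k)) * Dn (tt n) (B2 n k) (fun v =>
          xx (-wq n v (ν + om n k)) * Dh n lv (annot (pre ++ gammaChain n k) Γ) v) u) w := by
  have hfst : ∀ (f : ℕ × ℤ → ℤ) (l : List (ℕ × ℤ)),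
      (l.map (fun β => (β, f β))).map Prod.fst = l := by
    intro f l; rw [List.map_map]; exact List.map_id _
  rw [gammaChain_eq, List.append_assoc, annot_append, annot_nodup _ _ (nodup_B1 k), annot_append,
    annot_nodup _ _ (nodup_B2 hk)]
  have e1 : xx (-wq n w ν) = xx ((1 / 2 : ℚ) • wq n w (om n k)) *
      xx (-wq n w (ν + (1 / 2 : ℚ) • om n k)) := by
    rw [← xx_add, wq_add, wq_smul]; congr 1; module
  rw [e1, mul_assoc, Dh_stretch lv _ _ _ _ w hw]
  · rw [hfst]
    congr 1
    refine Dn_congr _ (B1_pos hk) (fun u hu => ?_) hw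
    have e2 : xx (-wq n u (ν + (1 / 2 : ℚ) • om n k)) = xx ((1 / 2 : ℚ) • wq n u (om n k)) *
        xx (-wq n u (ν + om n k)) := by
      rw [← xx_add, wq_add, wq_smul, wq_add]; congr 1; module
    rw [e2, mul_assoc, Dh_stretch lv _ _ _ _ u hu, hfst, List.append_assoc]
    intro a ha
    rw [List.mem_map] at ha
    obtain ⟨β, hβ, rfl⟩ := ha
    refine ⟨B2_pos hk β hβ, ?_⟩
    rw [pair_add, ← hpre β (B2_pos hk β hβ), ← level2 hk hβ, List.count_append]
    push_cast
    ring
  · intro a ha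
    rw [List.mem_map] at ha
    obtain ⟨β, hβ, rfl⟩ := ha
    refine ⟨B1_pos hk β hβ, ?_⟩
    rw [pair_add, ← hpre β (B1_pos hk β hβ), pair_smul, level1 hk hβ]
    push_cast
    ring

/-- The final part `Γ^i Γ^{i-1} ⋯ Γ^1` of the `λ`-chain, for a sequence `κ` of column heights. -/
def Gam (n : ℕ) (κ : ℕ → ℕ) : ℕ → List (ℕ × ℤ)
  | 0 => []
  | i + 1 => gammaChain n (κ (i + 1)) ++ Gam n κ i

/-- The normalized sum over chains in `Γ^i ⋯ Γ^1`. -/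
noncomputable def EE (n : ℕ) (κ : ℕ → ℕ) : ℕ → List ℤ → AR n
  | 0, w => tt n ^ len w
  | i + 1, w => xx ((1 / 2 : ℚ) • wq n w (om n (κ (i + 1)))) *
      Dn (tt n) (B1 (κ (i + 1))) (fun u => xx ((1 / 2 : ℚ) • wq n u (om n (κ (i + 1)))) *
        Dn (tt n) (B2 n (κ (i + 1))) (EE n κ i) u) w

/-- Iteration of `block_step` along the chain. -/
lemma Dh_eq_EE {n : ℕ} {κ : ℕ → ℕ} (hκ : ∀ i, κ i ≤ n) (lv : Fin n → ℤ) :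
    ∀ (i : ℕ) (ν : Fin n → ℚ) (pre : List (ℕ × ℤ)),
    (∀ β, PosRefl n β → (pre.count β : ℚ) = pair n ν β) →
    (ν + ∑ s ∈ Finset.range i, om n (κ (s + 1)) = fun r => (lv r : ℚ)) →
    ∀ w, IsCol n n w → xx (-wq n w ν) * Dh n lv (annot pre (Gam n κ i)) w = EE n κ i w
  | 0, ν, pre, _, hν, w, _ => by
    simp only [Finset.range_zero, Finset.sum_empty, add_zero] at hν
    simp only [Gam, annot, Dh, EE, ← hν]
    rw [← mul_assoc, ← xx_add, neg_add_cancel, xx_zero, one_mul]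
  | i + 1, ν, pre, hpre, hν, w, hw => by
    rw [Gam, block_step (hκ _) lv ν pre _ hpre hw, EE]
    congr 1
    refine Dn_congr _ (B1_pos (hκ _)) (fun u hu => ?_) hw
    congr 1
    refine Dn_congr _ (B2_pos (hκ _)) (fun v hv => ?_) hu
    refine Dh_eq_EE hκ lv i _ _ ?_ ?_ v hv
    · intro β hβ
      rw [List.count_append, pair_add, ← hpre β hβ, ← level3 (hκ (i + 1)) hβ, gammaChain_eq,
        List.count_append]
      push_cast
      ring
    · rw [← hν, Finset.sum_range_succ]
      abel

lemma Gam_eq (n : ℕ) (κ : ℕ → ℕ) : ∀ L,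
    ((List.range L).map (fun r => gammaChain n (κ (L - r)))).flatten = Gam n κ L
  | 0 => rfl
  | L + 1 => by
    rw [List.range_succ_eq_map, List.map_cons, List.flatten_cons, List.map_map, Gam, ← Gam_eq n κ L]
    simp [Function.comp_def]

lemma Gam_pos {n : ℕ} {κ : ℕ → ℕ} (hκ : ∀ i, κ i ≤ n) : ∀ L, ∀ β ∈ Gam n κ L, PosRefl n β
  | 0, β, h => by simp [Gam] at h
  | L + 1, β, h => by
    rw [Gam, gammaChain_eq, List.mem_append, List.mem_append] at h
    rcases h with (h | h) | h
    · exact B1_pos (hκ _) β h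
    · exact B2_pos (hκ _) β h
    · exact Gam_pos hκ L β h

/-! ### Column heights of a strict partition -/

lemma conj_le (n : ℕ) (lam : Fin n → ℕ) (i : ℕ) : conj n lam i ≤ n := by
  unfold conj
  exact (Finset.card_le_univ _).trans (by simp)

lemma conj_anti (n : ℕ) (lam : Fin n → ℕ) {i j : ℕ} (h : i ≤ j) : conj n lam j ≤ conj n lam i := by
  unfold conj
  refine Finset.card_le_card fun x hx => ?_
  simp only [Finset.mem_filter, Finset.mem_univ, true_and] at hx ⊢
  omega

lemma conj_one {n : ℕ} {lam : Fin n → ℕ} (hpos : ∀ i, 0 < lam i) : conj n lam 1 = n := by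
  unfold conj
  rw [Finset.filter_true_of_mem (fun i _ => Nat.succ_le_of_lt (hpos i))]
  simp

lemma conj_pos {n : ℕ} {lam : Fin n → ℕ} (hn : 0 < n) {i : ℕ} (hi : i ≤ lamOne n lam) :
    1 ≤ conj n lam i := by
  have : Nonempty (Fin n) := ⟨⟨0, hn⟩⟩
  obtain ⟨j, _, hj⟩ := Finset.exists_mem_eq_sup Finset.univ Finset.univ_nonempty lam
  unfold conj
  rw [Nat.one_le_iff_ne_zero, Finset.card_ne_zero]
  refine ⟨j, ?_⟩
  simp only [Finset.mem_filter, Finset.mem_univ, true_and]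
  unfold lamOne at hi
  omega

lemma lamOne_pos {n : ℕ} {lam : Fin n → ℕ} (hn : 0 < n) (hpos : ∀ i, 0 < lam i) :
    1 ≤ lamOne n lam :=
  (hpos ⟨0, hn⟩).trans_le (Finset.le_sup (f := lam) (Finset.mem_univ _))

lemma lt_conj_iff {n : ℕ} {lam : Fin n → ℕ} (hs : ∀ i j : Fin n, i < j → lam j < lam i)
    (r : Fin n) (i : ℕ) : (r : ℕ) < conj n lam i ↔ i ≤ lam r := by
  unfold conj
  constructor
  · intro h
    by_contra hc
    have : (Finset.univ.filter (fun j : Fin n => i ≤ lam j)) ⊆ Finset.Iio r := by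
      intro j hj
      simp only [Finset.mem_filter, Finset.mem_univ, true_and] at hj
      rw [Finset.mem_Iio]
      by_contra hjr
      rcases lt_or_eq_of_le (not_lt.1 hjr) with h1 | h1
      · have := hs r j h1; omega
      · subst h1; omega
    have := Finset.card_le_card this
    rw [Fin.card_Iio] at this
    omega
  · intro h
    have : Finset.Iic r ⊆ (Finset.univ.filter (fun j : Fin n => i ≤ lam j)) := by
      intro j hj
      rw [Finset.mem_Iic] at hj
      simp only [Finset.mem_filter, Finset.mem_univ, true_and]
      rcases lt_or_eq_of_le hj with h1 | h1
      · have := hs j r h1; omega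
      · subst h1; omega
    have := Finset.card_le_card this
    rw [Fin.card_Iic] at this
    omega

/-- `λ` is the sum of the fundamental weights of its columns. -/
lemma sum_om {n : ℕ} {lam : Fin n → ℕ} (hs : ∀ i j : Fin n, i < j → lam j < lam i) :
    ∑ s ∈ Finset.range (lamOne n lam), om n (conj n lam (s + 1)) =
      fun r => ((lamVec n lam r : ℤ) : ℚ) := by
  funext r
  rw [Finset.sum_apply]
  simp only [om, lt_conj_iff hs]
  rw [Finset.sum_boole]
  have : (Finset.range (lamOne n lam)).filter (fun s => s + 1 ≤ lam r) = Finset.range (lam r) := by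
    ext s
    have := Finset.le_sup (f := lam) (Finset.mem_univ r)
    simp only [Finset.mem_filter, Finset.mem_range]
    unfold lamOne
    omega
  rw [this]
  simp [lamVec]

/-- The left-hand side for a fixed starting window. -/
lemma sum_aterm {n : ℕ} {lam : Fin n → ℕ} (hs : ∀ i j : Fin n, i < j → lam j < lam i)
    {w : List ℤ} (hw : IsCol n n w) :
    ∑ J ∈ (Finset.range (lambdaChain n lam).length).powerset,
      aterm n (lamVec n lam) w ((J.sort (· ≤ ·)).map (annotAt (lambdaChain n lam))) =
      EE n (conj n lam) (lamOne n lam) w := by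
  have e : lambdaChain n lam = Gam n (conj n lam) (lamOne n lam) := Gam_eq n (conj n lam) _
  rw [Finset.range_eq_Ico, sum_powerset_Dh (lamVec n lam) (lambdaChain n lam)
    (by rw [e]; exact Gam_pos (conj_le n lam) _) _ 0 (zero_add _) w hw]
  have := Dh_eq_EE (conj_le n lam) (lamVec n lam) (lamOne n lam) 0 [] (by simp [pair])
    (by rw [zero_add, sum_om hs]) w hw
  rw [wq_zero, neg_zero, xx_zero, one_mul, ← e] at this
  simpa using this

/-! ### Labels of the columns of the doubled shape -/

/-- Labels of columns: `(i, true, k)` stands for `C'_{i,k}` and `(i, false, j)` for `C_{i,j}`. -/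
abbrev Lab := ℕ × Bool × ℕ

/-- The labels of `C'_{i,2}, …, C'_{i,λ'_i}`. -/
def blockP (κ : ℕ → ℕ) (i : ℕ) : List Lab := (List.range (κ i - 1)).map (fun s => (i, true, s + 2))

/-- The labels of `C_{i,1}, …, C_{i,λ'_i}`. -/
def blockU (κ : ℕ → ℕ) (i : ℕ) : List Lab := (List.range (κ i)).map (fun s => (i, false, s + 1))

/-- The labels of all columns of `C^i ⋯ C^1` except for the last one. -/
def QL (κ : ℕ → ℕ) : ℕ → List Lab
  | 0 => []
  | 1 => blockP κ 1
  | i + 2 => blockP κ (i + 2) ++ (blockU κ (i + 2) ++ QL κ (i + 1))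

/-- The labels of all columns of `C^i ⋯ C^1`. -/
def PL (κ : ℕ → ℕ) (i : ℕ) : List Lab := QL κ i ++ [(1, false, 1)]

/-- The height of the column with a given label. -/
def kk (κ : ℕ → ℕ) (l : Lab) : ℕ := κ l.1

/-- The segment of the `λ`-chain between a column and its right neighbour. -/
def segL (n : ℕ) (κ : ℕ → ℕ) (l : Lab) : List (ℕ × ℤ) :=
  if l.2.1 then gammaPrime l.2.2 else gammaJK n l.2.2 (κ l.1)

/-- The relation between a column and its right neighbour required in a filling. -/
def relL (κ : ℕ → ℕ) (l : Lab) : List ℤ → List ℤ → Prop :=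
  if l.2.1 then RelP (κ l.1) l.2.2 else RelU (κ l.1) l.2.2

/-- The signed content of a column. -/
def ctv (n : ℕ) (D : List ℤ) : Fin n → ℚ := fun r => (D.map (chi r)).sum

/-- Half the number of times a column enters the compressed filling. -/
def mult (κ : ℕ → ℕ) (l : Lab) : ℚ :=
  if l.2.1 then (if l.2.2 = 2 then 1 / 2 else 0)
  else if l.2.2 = 1 then (if 2 ≤ κ l.1 then 1 / 2 else 1) else 0

/-- The contribution of a column to the monomial of the content. -/
noncomputable def cc (n : ℕ) (κ : ℕ → ℕ) (l : Lab) (D : List ℤ) : AR n :=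
  xx (mult κ l • ctv n D)

lemma map_sum_getD (f : ℤ → ℚ) : ∀ l : List ℤ,
    (l.map f).sum = ∑ p ∈ Finset.range l.length, f (l.getD p 0)
  | [] => by simp
  | a :: l => by
    rw [List.map_cons, List.sum_cons, map_sum_getD f l, List.length_cons, Finset.sum_range_succ']
    simp [add_comm]

lemma wq_om {n k : ℕ} (hk : k ≤ n) {w : List ℤ} (hw : w.length = n) :
    wq n w (om n k) = ctv n (w.take k) := by
  funext r
  unfold wq om ctv
  rw [map_sum_getD, List.length_take, hw, min_eq_left hk]
  have e : ∀ p ∈ Finset.range k, chi r ((w.take k).getD p 0) = chi r (w.getD p 0) := by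
    intro p hp
    rw [getD_take _ (Finset.mem_range.1 hp)]
  rw [Finset.sum_congr rfl e, Fin.sum_univ_eq_sum_range
    (fun i => (if i < k then (1 : ℚ) else 0) * chi r (w.getD i 0))]
  simp only [ite_mul, one_mul, zero_mul]
  rw [← Finset.sum_filter]
  congr 1
  ext p
  simp only [Finset.mem_filter, Finset.mem_range]
  omega

section
variable {n : ℕ} {κ : ℕ → ℕ}

/-- Labels whose columns do not enter the content contribute only their chain segments. -/
lemma Lsum_append : ∀ (ls1 ls2 : List Lab), ls2 ≠ [] →
    (∀ l ∈ ls1, mult κ l = 0) →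
    Lsum (tt n) (kk κ) (segL n κ) (cc n κ) (ls1 ++ ls2) =
      Dn (tt n) (ls1.flatMap (segL n κ)) (Lsum (tt n) (kk κ) (segL n κ) (cc n κ) ls2)
  | [], ls2, _, _ => by simp [Dn_nil]
  | l :: ls1, ls2, hne, h => by
    have ih := Lsum_append ls1 ls2 hne (fun a ha => h a (List.mem_cons_of_mem _ ha))
    funext w
    obtain ⟨b, bs, hb⟩ : ∃ b bs, ls1 ++ ls2 = b :: bs := by
      cases hc : ls1 ++ ls2 with
      | nil => simp [hne] at hc
      | cons b bs => exact ⟨b, bs, rfl⟩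
    rw [List.cons_append, hb, Lsum, ← hb, ih, List.flatMap_cons, Dn_append]
    rw [cc, h l List.mem_cons_self, zero_smul, xx_zero, one_mul]

lemma Lsum_cons_append (l : Lab) (ls1 ls2 : List Lab) (hne : ls2 ≠ [])
    (h : ∀ l ∈ ls1, mult κ l = 0) (w : List ℤ) :
    Lsum (tt n) (kk κ) (segL n κ) (cc n κ) (l :: ls1 ++ ls2) w =
      cc n κ l (w.take (kk κ l)) * Dn (tt n) ((l :: ls1).flatMap (segL n κ))
        (Lsum (tt n) (kk κ) (segL n κ) (cc n κ) ls2) w := by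
  obtain ⟨b, bs, hb⟩ : ∃ b bs, ls1 ++ ls2 = b :: bs := by
    cases hc : ls1 ++ ls2 with
    | nil => simp [hne] at hc
    | cons b bs => exact ⟨b, bs, rfl⟩
  rw [List.cons_append, hb, Lsum, ← hb, Lsum_append ls1 ls2 hne h, List.flatMap_cons, Dn_append]

lemma flatMap_blockP (i : ℕ) : (blockP κ i).flatMap (segL n κ) = B1 (κ i) := by
  unfold blockP B1
  rw [List.flatMap_map]
  rfl

lemma flatMap_blockU (i : ℕ) : (blockU κ i).flatMap (segL n κ) = B2 n (κ i) := by
  unfold blockU B2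
  rw [List.flatMap_map]
  rfl

lemma Lsum_blockP (i : ℕ) (hi : 2 ≤ κ i) (ls : List Lab) (hne : ls ≠ []) (w : List ℤ) :
    Lsum (tt n) (kk κ) (segL n κ) (cc n κ) (blockP κ i ++ ls) w =
      xx ((1 / 2 : ℚ) • ctv n (w.take (κ i))) * Dn (tt n) (B1 (κ i))
        (Lsum (tt n) (kk κ) (segL n κ) (cc n κ) ls) w := by
  rw [← flatMap_blockP]
  have e : blockP κ i = (i, true, 2) ::
      (List.range (κ i - 2)).map (fun s => (i, true, s + 3)) := by
    unfold blockP
    rw [show κ i - 1 = (κ i - 2) + 1 by omega, List.range_succ_eq_map, List.map_cons, List.map_map]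
    rfl
  rw [e, Lsum_cons_append _ _ _ hne]
  · rfl
  · intro l hl
    simp only [List.mem_map] at hl
    obtain ⟨s, _, rfl⟩ := hl
    simp [mult]

lemma Lsum_blockU (i : ℕ) (hi : 1 ≤ κ i) (ls : List Lab) (hne : ls ≠ []) (w : List ℤ) :
    Lsum (tt n) (kk κ) (segL n κ) (cc n κ) (blockU κ i ++ ls) w =
      xx ((if 2 ≤ κ i then 1 / 2 else 1 : ℚ) • ctv n (w.take (κ i))) * Dn (tt n) (B2 n (κ i))
        (Lsum (tt n) (kk κ) (segL n κ) (cc n κ) ls) w := by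
  rw [← flatMap_blockU]
  have e : blockU κ i = (i, false, 1) ::
      (List.range (κ i - 1)).map (fun s => (i, false, s + 2)) := by
    unfold blockU
    obtain ⟨m, hm⟩ : ∃ m, κ i = m + 1 := ⟨κ i - 1, by omega⟩
    rw [hm, List.range_succ_eq_map, List.map_cons, List.map_map]
    rfl
  rw [e, Lsum_cons_append _ _ _ hne]
  · rfl
  · intro l hl
    simp only [List.mem_map] at hl
    obtain ⟨s, _, rfl⟩ := hl
    simp [mult]

lemma B2_top (n : ℕ) : B2 n n = rowsL n := by
  unfold B2 rowsL
  congr 1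
  funext r
  unfold gammaJK gammaPrime rowL
  simp [List.range_succ]

/-- The normalized chain sum as a sum along the labels of the columns of the doubled shape.  The last
block `Γ_1(n) ⋯ Γ_n(n)` is summed by `Dn_phi`, which is why only `C_{1,1}` remains of it. -/
lemma EE_eq_Lsum (hκ : ∀ i, κ i ≤ n) (h1 : κ 1 = n) (hn : 2 ≤ n) : ∀ (i : ℕ),
    (∀ j ≤ i + 1, 1 ≤ κ j) → ∀ w, IsCol n n w →
    EE n κ (i + 1) w = Lsum (tt n) (kk κ) (segL n κ) (cc n κ) (PL κ (i + 1)) w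
  | 0, _, w, hw => by
    rw [EE, PL, zero_add, QL, Lsum_blockP 1 (by omega) _ (by simp), wq_om (hκ _) hw.len]
    refine congrArg₂ (· * ·) rfl ?_
    refine Dn_congr _ (B1_pos (hκ _)) (fun u hu => ?_) hw
    rw [wq_om (hκ _) hu.len, h1, B2_top]
    have : Dn (tt n) (rowsL n) (EE n κ 0) u = tt n ^ lplus u := Dn_phi (tt n) hu
    rw [this]
    simp [Lsum, cc, mult, kk, h1, hn]
  | i + 1, hp, w, hw => by
    have ih := EE_eq_Lsum hκ h1 hn i (fun j hj => hp j (by omega))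
    have hP : PL κ (i + 1) ≠ [] := by simp [PL]
    have hk : 1 ≤ κ (i + 2) := hp _ le_rfl
    have e : PL κ (i + 1 + 1) = blockP κ (i + 2) ++ (blockU κ (i + 2) ++ PL κ (i + 1)) := by
      simp [PL, QL]
    rw [e, EE]
    by_cases h2 : 2 ≤ κ (i + 2)
    · rw [Lsum_blockP _ h2 _ (by simp [hP]), wq_om (hκ _) hw.len]
      refine congrArg₂ (· * ·) rfl ?_
      refine Dn_congr _ (B1_pos (hκ _)) (fun u hu => ?_) hw
      rw [Lsum_blockU _ hk _ hP, if_pos h2, wq_om (hκ _) hu.len]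
      refine congrArg₂ (· * ·) rfl ?_
      exact Dn_congr _ (B2_pos (hκ _)) ih hu
    · have hk1 : κ (i + 2) = 1 := by omega
      have e2 : blockP κ (i + 2) = [] := by simp [blockP, hk1]
      rw [e2, List.nil_append, Lsum_blockU _ hk _ hP, if_neg h2, wq_om (hκ _) hw.len]
      have e3 : B1 (κ (i + 1 + 1)) = [] := by simp [B1, hk1]
      rw [e3, Dn_nil, wq_om (hκ _) hw.len, ← mul_assoc, ← xx_add, ← add_smul]
      rw [show (1 / 2 + 1 / 2 : ℚ) = 1 by norm_num]
      refine congrArg₂ (· * ·) rfl ?_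
      exact Dn_congr _ (B2_pos (hκ _)) ih hw

end

/-! ### The weight of a list of columns as a single monomial -/

section
variable {A : Type*} [CommRing A] (t : A) {ι : Type*} (k : ι → ℕ)
  (rel : ι → List ℤ → List ℤ → Prop) (c : ι → List ℤ → A)

/-- The row and transition conditions on a column `D` with label `a` and its right neighbour `C`. -/
def PP (a : ι) (D C : List ℤ) : Prop :=
  (∀ r, r < k a → sle (C.getD r 0) (D.getD r 0)) ∧ rel a D C

open Classical in
lemma Wcol_map (n : ℕ) (g : ι → List ℤ) : ∀ (l : ι) (ls : List ι),
    Wcol t k rel c n (l :: ls) ((l :: ls).map g) =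
      if (l :: ls).IsChain (fun a b => PP k rel a (g a) (g b)) then
        ((l :: ls).map (fun a => c a (g a))).prod *
          (t ^ (adjSumN (Nstat n) ((l :: ls).map g) + lplus (((l :: ls).map g).getLastD [])) *
            (1 - t) ^ adjSumN (desStat n) ((l :: ls).map g))
      else 0
  | l, [] => by simp [Wcol, adjSumN]
  | l, l' :: ls => by
    have ih := Wcol_map n g l' ls
    rw [List.map_cons] at ih
    rw [List.map_cons, List.map_cons, Wcol, ih, wt]
    have hc : (l :: l' :: ls).IsChain (fun a b => PP k rel a (g a) (g b)) ↔
        PP k rel l (g l) (g l') ∧ (l' :: ls).IsChain (fun a b => PP k rel a (g a) (g b)) :=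
      List.isChain_cons_cons
    by_cases h1 : PP k rel l (g l) (g l')
    · have h1' := h1
      unfold PP at h1'
      rw [if_pos h1']
      by_cases h2 : (l' :: ls).IsChain (fun a b => PP k rel a (g a) (g b))
      · rw [if_pos h2, if_pos (hc.2 ⟨h1, h2⟩)]
        rw [List.map_cons (l := l' :: ls), List.prod_cons, adjSumN, adjSumN, List.getLastD_cons,
          List.getLastD_cons, List.getLastD_cons]
        ring
      · rw [if_neg h2, if_neg (fun h => h2 (hc.1 h).2)]
        simp
    · have h1' := h1
      unfold PP at h1'
      rw [if_neg h1', if_neg (fun h => h1 (hc.1 h).1)]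
      simp

lemma mem_ColLists (n : ℕ) : ∀ (ls : List ι) (Cs : List (List ℤ)),
    Cs ∈ ColLists k n ls ↔ List.Forall₂ (fun l C => IsCol n (k l) C) ls Cs
  | [], Cs => by simp [ColLists]
  | l :: ls, Cs => by
    rw [ColLists, Finset.mem_image]
    constructor
    · rintro ⟨⟨D, Ds⟩, h, rfl⟩
      rw [Finset.mem_product] at h
      exact List.Forall₂.cons (mem_Col.1 h.1) ((mem_ColLists n ls Ds).1 h.2)
    · intro h
      cases h with
      | cons h1 h2 =>
        exact ⟨(_, _), Finset.mem_product.2 ⟨mem_Col.2 h1, (mem_ColLists n ls _).2 h2⟩, rfl⟩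

lemma map_mem_ColLists (n : ℕ) (ls : List ι) (g : ι → List ℤ) :
    ls.map g ∈ ColLists k n ls ↔ ∀ l ∈ ls, IsCol n (k l) (g l) := by
  rw [mem_ColLists, List.forall₂_map_right_iff, List.forall₂_same]

lemma exists_map_of_nodup [DecidableEq ι] : ∀ (ls : List ι) (Cs : List (List ℤ)), ls.Nodup →
    Cs.length = ls.length → ∃ g : ι → List ℤ, ls.map g = Cs
  | [], [], _, _ => ⟨fun _ => [], rfl⟩
  | l :: ls, C :: Cs, h, hl => by
    obtain ⟨g, hg⟩ := exists_map_of_nodup ls Cs (List.nodup_cons.1 h).2 (by simpa using hl)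
    refine ⟨fun x => if x = l then C else g x, ?_⟩
    rw [List.map_cons, if_pos rfl, ← hg]
    congr 1
    refine List.map_congr_left fun x hx => if_neg ?_
    rintro rfl
    exact (List.nodup_cons.1 h).1 hx
  | [], _ :: _, _, hl => by simp at hl
  | _ :: _, [], _, hl => by simp at hl

/-- Along a list in which every member determines its successor, a chain condition is a condition
on each member but the last. -/
lemma isChain_iff_next (next : ι → ι) (R : ι → ι → Prop) : ∀ (Q : List ι) (z : ι),
    (Q ++ [z]).IsChain (fun a b => b = next a) →
    ((Q ++ [z]).IsChain R ↔ ∀ a ∈ Q, R a (next a))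
  | [], z, _ => by simp
  | [a], z, h => by
    simp at h
    simp [h]
  | a :: b :: Q, z, h => by
    rw [List.cons_append, List.cons_append, List.isChain_cons_cons] at h
    have ih := isChain_iff_next next R (b :: Q) z (by simpa using h.2)
    rw [List.cons_append, List.cons_append, List.isChain_cons_cons, ← List.cons_append, ih]
    rw [List.forall_mem_cons (a := a), ← h.1]

end

/-! ### The order of the columns -/

/-- The label of the right neighbour of a column. -/
def nextL (κ : ℕ → ℕ) : Lab → Lab
  | (i, true, k) => if k < κ i then (i, true, k + 1) else (i, false, 1)
  | (i, false, j) => if j < κ i then (i, false, j + 1)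
      else if 2 ≤ κ (i - 1) then (i - 1, true, 2) else (i - 1, false, 1)

section
variable {κ : ℕ → ℕ}

lemma mem_QL : ∀ (L : ℕ) (i : ℕ) (b : Bool) (k : ℕ), (i, b, k) ∈ QL κ L ↔
    (b = true ∧ 1 ≤ i ∧ i ≤ L ∧ 2 ≤ k ∧ k ≤ κ i) ∨ (b = false ∧ 2 ≤ i ∧ i ≤ L ∧ 1 ≤ k ∧ k ≤ κ i)
  | 0, i, b, k => by
    simp only [QL, List.not_mem_nil, false_iff]
    omega
  | 1, i, b, k => by
    simp only [QL, blockP, List.mem_map, List.mem_range, Prod.mk.injEq]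
    constructor
    · rintro ⟨s, hs, rfl, rfl, rfl⟩
      left; refine ⟨rfl, ?_⟩; omega
    · rintro (⟨rfl, h⟩ | h)
      · have : i = 1 := by omega
        subst this
        exact ⟨k - 2, by omega, rfl, rfl, by omega⟩
      · omega
  | L + 2, i, b, k => by
    rw [QL, List.mem_append, List.mem_append, mem_QL (L + 1)]
    simp only [blockP, blockU, List.mem_map, List.mem_range, Prod.mk.injEq]
    constructor
    · rintro (⟨s, hs, rfl, rfl, rfl⟩ | ⟨s, hs, rfl, rfl, rfl⟩ | h | h)
      · left; refine ⟨rfl, ?_⟩; omega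
      · right; refine ⟨rfl, ?_⟩; omega
      · left; refine ⟨h.1, ?_⟩; omega
      · right; refine ⟨h.1, ?_⟩; omega
    · rintro (⟨rfl, h⟩ | ⟨rfl, h⟩)
      · by_cases hi : i = L + 2
        · subst hi
          left
          exact ⟨k - 2, by omega, rfl, rfl, by omega⟩
        · right; right; left; refine ⟨rfl, ?_⟩; omega
      · by_cases hi : i = L + 2
        · subst hi
          right; left
          exact ⟨k - 1, by omega, rfl, rfl, by omega⟩
        · right; right; right; refine ⟨rfl, ?_⟩; omega

lemma nodup_QL : ∀ L : ℕ, (QL κ L).Nodup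
  | 0 => List.nodup_nil
  | 1 => by
    rw [QL, blockP]
    exact List.nodup_range.map (fun a b h => by simpa using h)
  | L + 2 => by
    rw [QL]
    refine List.Nodup.append (List.nodup_range.map (fun a b h => by simpa using h))
      (List.Nodup.append (List.nodup_range.map (fun a b h => by simpa using h))
        (nodup_QL (L + 1)) ?_) ?_
    · intro x hx hy
      simp only [blockU, List.mem_map] at hx
      obtain ⟨s, -, rfl⟩ := hx
      rw [mem_QL] at hy
      omega
    · intro x hx hy
      simp only [blockP, List.mem_map] at hx
      obtain ⟨s, -, rfl⟩ := hx
      rw [List.mem_append, mem_QL] at hy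
      simp [blockU] at hy

lemma nodup_PL (L : ℕ) : (PL κ L).Nodup := by
  rw [PL]
  refine List.Nodup.append (nodup_QL L) (by simp) ?_
  intro x hx hy
  simp only [List.mem_singleton] at hy
  subst hy
  rw [mem_QL] at hx
  simp at hx

lemma mem_PL_true (L i k : ℕ) : (i, true, k) ∈ PL κ L ↔ (i, true, k) ∈ QL κ L := by
  simp [PL]

lemma mem_PL_false (L i j : ℕ) :
    (i, false, j) ∈ PL κ L ↔ (i, false, j) ∈ QL κ L ∨ (i = 1 ∧ j = 1) := by
  simp [PL]

lemma chain_blockP (i : ℕ) (ls : List Lab) (h : ls.IsChain (fun a b => b = nextL κ a))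
    (hd : ls.head? = some (i, false, 1)) :
    (blockP κ i ++ ls).IsChain (fun a b => b = nextL κ a) := by
  rw [List.isChain_append]
  refine ⟨?_, h, ?_⟩
  · rw [blockP, List.isChain_map, List.isChain_range]
    intro m hm
    simp only [nextL]
    rw [if_pos (by omega)]
  · intro x hx y hy
    rw [hd] at hy
    obtain rfl : (i, false, 1) = y := by simpa using hy
    rw [blockP, List.getLast?_map, List.getLast?_range] at hx
    by_cases hk : κ i - 1 = 0
    · simp [hk] at hx
    · rw [if_neg hk] at hx
      obtain rfl : (i, true, κ i - 1 - 1 + 2) = x := by simpa using hx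
      simp only [nextL]
      rw [if_neg (by omega)]

lemma head_blockP (i : ℕ) (ls : List Lab) (hd : ls.head? = some (i, false, 1)) :
    (blockP κ i ++ ls).head? = some (if 2 ≤ κ i then (i, true, 2) else (i, false, 1)) := by
  rw [List.head?_append, blockP, List.head?_map, List.head?_range, hd]
  by_cases h : 2 ≤ κ i
  · rw [if_pos h, if_neg (by omega)]; rfl
  · rw [if_neg h, if_pos (by omega)]; rfl

/-- Consecutive labels in `PL` are neighbours, and `PL` begins with the leftmost column. -/
lemma chain_PL : ∀ L : ℕ, (∀ j ≤ L + 1, 1 ≤ κ j) →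
    (PL κ (L + 1)).IsChain (fun a b => b = nextL κ a) ∧
    (PL κ (L + 1)).head? =
      some (if 2 ≤ κ (L + 1) then (L + 1, true, 2) else (L + 1, false, 1))
  | 0, _ => by
    rw [PL, zero_add, QL]
    exact ⟨chain_blockP 1 _ (by simp) (by simp), head_blockP 1 _ (by simp)⟩
  | L + 1, hp => by
    obtain ⟨ih1, ih2⟩ := chain_PL L (fun j hj => hp j (by omega))
    have e : PL κ (L + 1 + 1) = blockP κ (L + 2) ++ (blockU κ (L + 2) ++ PL κ (L + 1)) := by
      simp [PL, QL]
    have hk : 1 ≤ κ (L + 2) := hp _ le_rfl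
    have hU : (blockU κ (L + 2) ++ PL κ (L + 1)).head? = some (L + 2, false, 1) := by
      rw [List.head?_append, blockU, List.head?_map, List.head?_range, if_neg (by omega)]
      rfl
    rw [e]
    refine ⟨chain_blockP _ _ ?_ hU, head_blockP _ _ hU⟩
    rw [List.isChain_append]
    refine ⟨?_, ih1, ?_⟩
    · rw [blockU, List.isChain_map, List.isChain_range]
      intro m hm
      simp only [nextL]
      rw [if_pos (by omega)]
    · intro x hx y hy
      rw [ih2] at hy
      rw [blockU, List.getLast?_map, List.getLast?_range, if_neg (by omega)] at hx
      obtain rfl : (L + 2, false, κ (L + 2) - 1 + 1) = x := by simpa using hx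
      have hy' : (if 2 ≤ κ (L + 1) then (L + 1, true, 2) else (L + 1, false, 1)) = y := by
        simpa using hy
      rw [← hy']
      simp only [nextL]
      rw [if_neg (show ¬ κ (L + 2) - 1 + 1 < κ (L + 2) by omega)]
      rfl

lemma kk_nextL (hκ : ∀ i j, i ≤ j → κ j ≤ κ i) (a : Lab) : kk κ a ≤ kk κ (nextL κ a) := by
  obtain ⟨i, b, k⟩ := a
  have := hκ (i - 1) i (by omega)
  cases b <;> simp only [nextL, kk] <;> split_ifs <;> simp [this]

/-- The right neighbour of a column other than the last one is a column. -/
lemma nextL_mem (L : ℕ) (hp : ∀ j ≤ L + 1, 1 ≤ κ j) {a : Lab} (ha : a ∈ QL κ (L + 1)) :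
    nextL κ a ∈ PL κ (L + 1) := by
  obtain ⟨i, b, k⟩ := a
  rw [mem_QL] at ha
  have h1 := hp i
  have h2 := hp (i - 1)
  cases b
  · simp only [Bool.false_eq_true, false_and, true_and, false_or] at ha
    simp only [nextL]
    split_ifs
    · rw [mem_PL_false, mem_QL]; simp; omega
    · rw [mem_PL_true, mem_QL]; simp; omega
    · rw [mem_PL_false, mem_QL]; simp; omega
  · simp only [true_and, Bool.true_eq_false, false_and, or_false] at ha
    simp only [nextL]
    split_ifs
    · rw [mem_PL_true, mem_QL]; simp; omega
    · rw [mem_PL_false, mem_QL]; simp; omega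

end

/-- The sum over all windows of the chain sums is the sum over all lists of columns. -/
lemma sum_Lsum {n : ℕ} {κ : ℕ → ℕ} (hκ : ∀ i, κ i ≤ n) (hanti : ∀ i j, i ≤ j → κ j ≤ κ i)
    (h1 : κ 1 = n) (hn : 2 ≤ n) (L : ℕ) (hp : ∀ j ≤ L + 1, 1 ≤ κ j) :
    ∑ u ∈ allWindows n, Lsum (tt n) (kk κ) (segL n κ) (cc n κ) (PL κ (L + 1)) u =
      ∑ Cs ∈ ColLists (kk κ) n (PL κ (L + 1)),
        Wcol (tt n) (kk κ) (relL κ) (cc n κ) n (PL κ (L + 1)) Cs := by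
  have hch : (PL κ (L + 1)).IsChain (fun a b => kk κ a ≤ kk κ b) :=
    (chain_PL L hp).1.imp (fun a b h => by rw [h]; exact kk_nextL hanti a)
  have hlast : (PL κ (L + 1)).getLast? = some (1, false, 1) := by simp [PL]
  have hmem : ∀ l ∈ PL κ (L + 1), 1 ≤ l.2.2 ∧ l.2.2 ≤ κ l.1 := by
    rintro ⟨i, b, k⟩ h
    cases b
    · rw [mem_PL_false, mem_QL] at h
      simp only [Bool.false_eq_true, false_and, true_and, false_or] at h
      rcases h with h | ⟨rfl, rfl⟩
      · dsimp only; omega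
      · dsimp only; omega
    · rw [mem_PL_true, mem_QL] at h
      simp only [true_and, Bool.true_eq_false, false_and, or_false] at h
      dsimp only; omega
  cases hP : PL κ (L + 1) with
  | nil => simp [PL] at hP
  | cons l ls =>
    rw [hP] at hch hlast hmem
    refine compress_total (tt n) (kk κ) (segL n κ) (relL κ) (cc n κ) l ls ?_ hch ?_
    · rintro ⟨i, b, k⟩ h
      obtain ⟨hk1, hk2⟩ := hmem _ h
      obtain ⟨j, rfl⟩ : ∃ j, k = j + 1 := ⟨k - 1, by dsimp only at hk1; omega⟩
      have hj : j < κ i := hk2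
      refine ⟨hκ i, ?_, ?_⟩
      · cases b
        · exact gammaJK_pos hj (hκ i)
        · intro β hβ
          have hβ : β ∈ gammaPrime (j + 1) := hβ
          rw [gammaPrime_eq] at hβ
          exact rowL_pos (by omega) (lt_of_lt_of_le hj (hκ i)) β hβ
      · intro D C v hD hv hC hCl
        cases b
        · exact lump_U (tt n) hD hj (hκ i) hv hC hCl
        · exact lump_P (tt n) hD hj (hκ i) hv hC hCl
    · rw [List.getLast?_eq_getLast_of_ne_nil (by simp)] at hlast
      rw [Option.some.inj hlast]
      exact h1

/-! ### Fillings as families of columns -/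

/-- The column of a filling with a given label. -/
def col (F : Filling) : Lab → List ℤ
  | (i, true, k) => F.Cp i k
  | (i, false, j) => F.Cu i j

/-- The filling with prescribed columns. -/
def ofCol (g : Lab → List ℤ) : Filling := ⟨fun i k => g (i, true, k), fun i j => g (i, false, j)⟩

lemma col_ofCol (g : Lab → List ℤ) : col (ofCol g) = g := by
  funext l
  obtain ⟨i, b, k⟩ := l
  cases b <;> rfl

lemma CpNxt_eq (n : ℕ) (lam : Fin n → ℕ) (F : Filling) (i k : ℕ) :
    CpNxt n lam F i k = col F (nextL (conj n lam) (i, true, k)) := by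
  unfold CpNxt
  simp only [nextL]
  split_ifs <;> rfl

lemma CuNxt_eq (n : ℕ) (lam : Fin n → ℕ) (F : Filling) (i j : ℕ) :
    CuNxt n lam F i j = col F (nextL (conj n lam) (i, false, j)) := by
  unfold CuNxt
  simp only [nextL]
  split_ifs <;> rfl

lemma validP_iff (n : ℕ) (lam : Fin n → ℕ) (i k : ℕ) :
    validP n lam i k ↔ (i, true, k) ∈ PL (conj n lam) (lamOne n lam) := by
  rw [mem_PL_true, mem_QL]
  simp [validP]

lemma validU_iff {n : ℕ} (hn : 2 ≤ n) {lam : Fin n → ℕ} (hpos : ∀ i, 0 < lam i) (i j : ℕ) :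
    validU n lam i j ↔ (i, false, j) ∈ PL (conj n lam) (lamOne n lam) := by
  rw [mem_PL_false, mem_QL]
  have h1 := conj_one hpos
  have h2 := lamOne_pos (by omega) hpos
  simp only [validU, Bool.false_eq_true, false_and, true_and, false_or]
  constructor
  · intro h
    by_cases hi : i = 1
    · exact Or.inr ⟨hi, h.2.2.2.2 hi⟩
    · left; omega
  · rintro (h | ⟨rfl, rfl⟩)
    · omega
    · omega

lemma validU_iff' (n : ℕ) (lam : Fin n → ℕ) (i j : ℕ) :
    (2 ≤ i ∧ validU n lam i j) ↔ (i, false, j) ∈ QL (conj n lam) (lamOne n lam) := by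
  rw [mem_QL]
  simp only [validU, Bool.false_eq_true, false_and, true_and, false_or]
  omega

lemma isCol_iff {n k : ℕ} {c : List ℤ} : IsCol n k c ↔ c.length = k ∧
    (∀ a ∈ c, 1 ≤ a.natAbs ∧ a.natAbs ≤ n) ∧ colDistinct c := by
  constructor
  · intro h
    refine ⟨h.len, ?_, ?_⟩
    · intro a ha
      obtain ⟨p, hp, rfl⟩ := List.mem_iff_getElem.1 ha
      have := h.ent p (h.len ▸ hp)
      rwa [List.getD_eq_getElem _ _ hp] at this
    · intro p q hpq hq
      have := h.len
      exact h.dist p q (by omega) (by omega) (by omega)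
  · rintro ⟨h1, h2, h3⟩
    refine ⟨h1, ?_, ?_⟩
    · intro p hp
      have hp' : p < c.length := by omega
      rw [List.getD_eq_getElem _ _ hp']
      exact h2 _ (List.getElem_mem hp')
    · intro p q hp hq hpq
      rcases lt_or_gt_of_ne hpq with h | h
      · exact h3 p q h (by omega)
      · have := h3 q p h (by omega)
        exact ⟨this.1.symm, fun e => this.2 (by rw [e, neg_neg])⟩

lemma forall_pred (k : ℕ) (P : ℕ → Prop) :
    (∀ r, 1 ≤ r → r ≤ k → P (r - 1)) ↔ ∀ r, r < k → P r := by
  constructor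
  · intro h r hr
    exact h (r + 1) (by omega) (by omega)
  · intro h r h1 h2
    exact h (r - 1) (by omega)

/-- Membership in `F(λ)`: every column is a column of the right height, and every column but the
last is related to its right neighbour. -/
lemma mem_FSet {n : ℕ} (hn : 2 ≤ n) {lam : Fin n → ℕ} (hpos : ∀ i, 0 < lam i) (F : Filling) :
    F ∈ FSet n lam ↔
      (∀ l, l ∉ PL (conj n lam) (lamOne n lam) → col F l = []) ∧
      (∀ l ∈ PL (conj n lam) (lamOne n lam), IsCol n (kk (conj n lam) l) (col F l)) ∧
      ∀ l ∈ QL (conj n lam) (lamOne n lam), PP (kk (conj n lam)) (relL (conj n lam)) l (col F l)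
        (col F (nextL (conj n lam) l)) := by
  have hL := lamOne_pos (by omega) hpos
  obtain ⟨L, hL'⟩ : ∃ L, lamOne n lam = L + 1 := ⟨lamOne n lam - 1, by omega⟩
  have hp : ∀ j ≤ L + 1, 1 ≤ conj n lam j := fun j hj => conj_pos (by omega) (by omega)
  have hnx : ∀ i k, validP n lam i k →
      (∀ l ∈ PL (conj n lam) (lamOne n lam), IsCol n (kk (conj n lam) l) (col F l)) →
      (CpNxt n lam F i k).take (conj n lam i) = CpNxt n lam F i k := by
    intro i k h hc
    rw [validP_iff, mem_PL_true, hL'] at h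
    have h2 := nextL_mem L hp h
    rw [← hL'] at h2
    have h3 := (hc _ h2).len
    rw [CpNxt_eq]
    refine List.take_of_length_le ?_
    rw [h3]
    simp only [nextL, kk]
    split_ifs <;> exact le_rfl
  unfold FSet
  rw [Set.mem_ofPred_eq]
  constructor
  · rintro ⟨a1, a2, a3, a4, a5, a6, a7, a8, a9, a10⟩
    have hc : ∀ l ∈ PL (conj n lam) (lamOne n lam), IsCol n (kk (conj n lam) l) (col F l) := by
      rintro ⟨i, b, k⟩ h
      rw [isCol_iff]
      cases b
      · rw [← validU_iff hn hpos] at h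
        exact ⟨(a2 i k).1 h, a4 i k h, a8 i k h⟩
      · rw [← validP_iff] at h
        exact ⟨(a1 i k).1 h, a3 i k h, a7 i k h⟩
    refine ⟨?_, hc, ?_⟩
    · rintro ⟨i, b, k⟩ h
      cases b
      · rw [← validU_iff hn hpos] at h
        exact (a2 i k).2 h
      · rw [← validP_iff] at h
        exact (a1 i k).2 h
    · rintro ⟨i, b, k⟩ h
      cases b
      · rw [← validU_iff'] at h
        rw [← CuNxt_eq]
        exact ⟨(forall_pred _ (fun r => sle ((CuNxt n lam F i k).getD r 0)
          ((F.Cu i k).getD r 0))).1 (a6 i k h.1 h.2), a10 i k h.1 h.2⟩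
      · rw [← mem_PL_true, ← validP_iff] at h
        rw [← CpNxt_eq]
        refine ⟨(forall_pred _ (fun r => sle ((CpNxt n lam F i k).getD r 0)
          ((F.Cp i k).getD r 0))).1 (a5 i k h), ?_⟩
        obtain ⟨R, hR1, hR2⟩ := a9 i k h
        exact ⟨R, hR1, (hnx i k h hc).trans hR2⟩
  · rintro ⟨b1, hc, b3⟩
    have cP : ∀ i k, validP n lam i k → IsCol n (conj n lam i) (F.Cp i k) := fun i k h =>
      hc (i, true, k) ((validP_iff n lam i k).1 h)
    have cU : ∀ i k, validU n lam i k → IsCol n (conj n lam i) (F.Cu i k) := fun i k h =>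
      hc (i, false, k) ((validU_iff hn hpos i k).1 h)
    have rP : ∀ i k, validP n lam i k → PP (kk (conj n lam)) (relL (conj n lam)) (i, true, k)
        (F.Cp i k) (CpNxt n lam F i k) := fun i k h => by
      rw [CpNxt_eq]
      exact b3 (i, true, k) ((mem_PL_true _ _ _).1 ((validP_iff n lam i k).1 h))
    have rU : ∀ i k, 2 ≤ i → validU n lam i k → PP (kk (conj n lam)) (relL (conj n lam))
        (i, false, k) (F.Cu i k) (CuNxt n lam F i k) := fun i k hi h => by
      rw [CuNxt_eq]
      exact b3 (i, false, k) ((validU_iff' n lam i k).1 ⟨hi, h⟩)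
    refine ⟨fun i k => ⟨fun h => (cP i k h).len, fun h => b1 (i, true, k) ?_⟩,
      fun i k => ⟨fun h => (cU i k h).len, fun h => b1 (i, false, k) ?_⟩,
      fun i k h => (isCol_iff.1 (cP i k h)).2.1, fun i k h => (isCol_iff.1 (cU i k h)).2.1,
      fun i k h => ?_, fun i k hi h => ?_,
      fun i k h => (isCol_iff.1 (cP i k h)).2.2, fun i k h => (isCol_iff.1 (cU i k h)).2.2,
      fun i k h => ?_, fun i k hi h => (rU i k hi h).2⟩
    · rwa [← validP_iff]
    · rwa [← validU_iff hn hpos]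
    · exact (forall_pred _ (fun r => sle ((CpNxt n lam F i k).getD r 0)
          ((F.Cp i k).getD r 0))).2 (rP i k h).1
    · exact (forall_pred _ (fun r => sle ((CuNxt n lam F i k).getD r 0)
          ((F.Cu i k).getD r 0))).2 (rU i k hi h).1
    · obtain ⟨R, hR1, hR2⟩ := (rP i k h).2
      exact ⟨R, hR1, (hnx i k h hc).symm.trans hR2⟩

/-! ### The statistics of a filling in terms of its list of columns -/

/-- The concatenation `f(L) f(L-1) ⋯ f(1)`. -/
def revCat {α : Type*} (f : ℕ → List α) : ℕ → List α
  | 0 => []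
  | L + 1 => f (L + 1) ++ revCat f L

lemma revCat_eq {α : Type*} (f : ℕ → List α) : ∀ L,
    ((List.range L).map (fun r => f (L - r))).flatten = revCat f L
  | 0 => rfl
  | L + 1 => by
    rw [List.range_succ_eq_map, List.map_cons, List.flatten_cons, List.map_map, revCat,
      ← revCat_eq f L]
    simp [Function.comp_def]

lemma revCat_cols (κ : ℕ → ℕ) (F : Filling) : ∀ L,
    revCat (fun i => (List.range (κ i - 1)).map (fun s => F.Cp i (s + 2)) ++
      (if i = 1 then [F.Cu 1 1] else (List.range (κ i)).map (fun s => F.Cu i (s + 1)))) (L + 1) =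
      (PL κ (L + 1)).map (col F)
  | 0 => by
    simp [revCat, PL, QL, blockP, col, Function.comp_def]
  | L + 1 => by
    rw [revCat, revCat_cols κ F L]
    simp [PL, QL, blockP, blockU, col, Function.comp_def]

lemma colList_eq {n : ℕ} (lam : Fin n → ℕ) (F : Filling) {L : ℕ} (hL : lamOne n lam = L + 1) :
    colList n lam F = (PL (conj n lam) (L + 1)).map (col F) := by
  rw [← revCat_cols, ← hL]
  exact revCat_eq (fun i => (List.range (conj n lam i - 1)).map (fun s => F.Cp i (s + 2)) ++
      (if i = 1 then [F.Cu 1 1] else (List.range (conj n lam i)).map (fun s => F.Cu i (s + 1)))) _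

lemma map_chi_sum (r : ℕ) : ∀ D : List ℤ, (D.map (chi r)).sum =
    (D.count ((r + 1 : ℕ) : ℤ) : ℚ) - (D.count (-((r + 1 : ℕ) : ℤ)) : ℚ)
  | [] => by simp
  | a :: D => by
    rw [List.map_cons, List.sum_cons, map_chi_sum r D, List.count_cons, List.count_cons, chi]
    simp only [beq_iff_eq]
    push_cast
    split_ifs <;> simp <;> ring

lemma ctv_append (n : ℕ) (D E : List ℤ) : ctv n (D ++ E) = ctv n D + ctv n E := by
  funext r
  simp [ctv]

lemma ctCols_eq (n : ℕ) (cols : List (List ℤ)) :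
    ctCols n cols = (1 / 2 : ℚ) • ctv n cols.flatten := by
  funext r
  unfold ctCols
  rw [← map_chi_sum]
  simp [ctv]
  ring

section
variable {n : ℕ} (κ : ℕ → ℕ) (F : Filling)

lemma sum_blockP (i : ℕ) : ((blockP κ i).map (fun l => mult κ l • ctv n (col F l))).sum =
    if 2 ≤ κ i then (1 / 2 : ℚ) • ctv n (F.Cp i 2) else 0 := by
  by_cases h : 2 ≤ κ i
  · rw [if_pos h, blockP, show κ i - 1 = (κ i - 2) + 1 by omega, List.range_succ_eq_map]
    rw [List.map_map, List.map_cons, List.sum_cons, List.map_map]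
    rw [List.sum_eq_zero]
    · simp [mult, col]
    · simp only [List.mem_map]
      rintro x ⟨s, -, rfl⟩
      simp [mult]
  · rw [if_neg h, blockP, show κ i - 1 = 0 by omega]
    rfl

lemma sum_blockU (i : ℕ) (h : 1 ≤ κ i) :
    ((blockU κ i).map (fun l => mult κ l • ctv n (col F l))).sum =
      (if 2 ≤ κ i then 1 / 2 else 1 : ℚ) • ctv n (F.Cu i 1) := by
  obtain ⟨m, hm⟩ : ∃ m, κ i = m + 1 := ⟨κ i - 1, by omega⟩
  rw [blockU, hm, List.range_succ_eq_map]
  rw [List.map_map, List.map_cons, List.sum_cons, List.map_map]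
  rw [List.sum_eq_zero]
  · simp [mult, col, hm]
  · simp only [List.mem_map]
    rintro x ⟨s, -, rfl⟩
    simp [mult]

lemma ct_revCat (hn : 2 ≤ n) (h1 : κ 1 = n) : ∀ L, (∀ j ≤ L + 1, 1 ≤ κ j) →
    (1 / 2 : ℚ) • ctv n (revCat (fun i => [if 2 ≤ κ i then F.Cp i 2 else F.Cu i 1, F.Cu i 1])
      (L + 1)).flatten = ((PL κ (L + 1)).map (fun l => mult κ l • ctv n (col F l))).sum
  | 0, hp => by
    rw [PL, QL, List.map_append, List.sum_append, sum_blockP, if_pos (by omega)]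
    simp [revCat, h1, hn, ctv_append, mult, col]
  | L + 1, hp => by
    have e : PL κ (L + 1 + 1) = blockP κ (L + 2) ++ (blockU κ (L + 2) ++ PL κ (L + 1)) := by
      simp [PL, QL]
    rw [e, List.map_append, List.sum_append, List.map_append, List.sum_append, sum_blockP,
      sum_blockU κ F _ (hp _ le_rfl), ← ct_revCat hn h1 L (fun j hj => hp j (by omega)),
      revCat, List.flatten_append, ctv_append, smul_add, ← add_assoc]
    congr 1
    simp only [List.flatten_cons, List.flatten_nil, List.append_nil, ctv_append]
    split_ifs
    · rw [smul_add]
    · rw [zero_add, one_smul, ← two_smul ℚ, smul_smul]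
      norm_num

end

lemma ctQ_eq {n : ℕ} (hn : 2 ≤ n) {lam : Fin n → ℕ} (hpos : ∀ i, 0 < lam i) (F : Filling) {L : ℕ}
    (hL : lamOne n lam = L + 1) : ctQ n lam F = ((PL (conj n lam) (L + 1)).map
      (fun l => mult (conj n lam) l • ctv n (col F l))).sum := by
  rw [← ct_revCat _ F hn (conj_one hpos) L (fun j hj => conj_pos (by omega) (by omega)), ctQ,
    ctCols_eq, ← hL]
  congr 3
  exact revCat_eq (fun i => [if 2 ≤ conj n lam i then F.Cp i 2 else F.Cu i 1, F.Cu i 1]) _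

lemma xx_sum {n : ℕ} (f : Lab → Fin n → ℚ) : ∀ ls : List Lab,
    xx ((ls.map f).sum) = (ls.map (fun l => xx (f l))).prod
  | [] => xx_zero
  | l :: ls => by
    rw [List.map_cons, List.sum_cons, xx_add, xx_sum f ls, List.map_cons, List.prod_cons]

/-- The sum over the lists of columns is the sum over the fillings in `F(λ)`. -/
lemma sum_cols_eq {n : ℕ} (hn : 2 ≤ n) {lam : Fin n → ℕ} (hpos : ∀ i, 0 < lam i) {L : ℕ}
    (hL : lamOne n lam = L + 1) :
    ∑ Cs ∈ ColLists (kk (conj n lam)) n (PL (conj n lam) (L + 1)),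
        Wcol (tt n) (kk (conj n lam)) (relL (conj n lam)) (cc n (conj n lam)) n
          (PL (conj n lam) (L + 1)) Cs =
      ∑ᶠ (F : Filling) (_ : F ∈ FSet n lam),
        (AddMonoidAlgebra.single (ctQ n lam F)
          ((Polynomial.X : Polynomial ℤ) ^ Nsigma n lam F *
            (1 - Polynomial.X) ^ desSigma n lam F) : AR n) := by
  classical
  set κ := conj n lam with hκ
  have hp : ∀ j ≤ L + 1, 1 ≤ κ j := fun j hj => conj_pos (by omega) (by omega)
  have hmem : ∀ F : Filling, F ∈ FSet n lam ↔ (∀ l, l ∉ PL κ (L + 1) → col F l = []) ∧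
      (∀ l ∈ PL κ (L + 1), IsCol n (kk κ l) (col F l)) ∧
      ∀ l ∈ QL κ (L + 1), PP (kk κ) (relL κ) l (col F l) (col F (nextL κ l)) := by
    intro F
    rw [mem_FSet hn hpos, hL]
  have hW : ∀ g : Lab → List ℤ, Wcol (tt n) (kk κ) (relL κ) (cc n κ) n (PL κ (L + 1))
      ((PL κ (L + 1)).map g) =
      if (∀ l ∈ QL κ (L + 1), PP (kk κ) (relL κ) l (g l) (g (nextL κ l))) then
        ((PL κ (L + 1)).map (fun a => cc n κ a (g a))).prod *
          (tt n ^ (adjSumN (Nstat n) ((PL κ (L + 1)).map g) +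
            lplus (((PL κ (L + 1)).map g).getLastD [])) *
            (1 - tt n) ^ adjSumN (desStat n) ((PL κ (L + 1)).map g)) else 0 := by
    intro g
    have hc := isChain_iff_next (nextL κ) (fun a b => PP (kk κ) (relL κ) a (g a) (g b))
      (QL κ (L + 1)) (1, false, 1) (chain_PL L hp).1
    rw [← PL] at hc
    cases hP : PL κ (L + 1) with
    | nil => simp [PL] at hP
    | cons l ls =>
      rw [hP] at hc
      rw [Wcol_map]
      by_cases h : (l :: ls).IsChain (fun a b => PP (kk κ) (relL κ) a (g a) (g b))
      · rw [if_pos h, if_pos (hc.1 h)]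
      · rw [if_neg h, if_neg (fun h' => h (hc.2 h'))]
  rw [← finsum_mem_coe_finset]
  have hinj : Set.InjOn (fun F => (PL κ (L + 1)).map (col F)) (FSet n lam) := by
    intro F hF G hG h
    rw [hmem] at hF hG
    have h' : ∀ l ∈ PL κ (L + 1), col F l = col G l := List.map_inj_left.1 h
    have h2 : ∀ l, col F l = col G l := by
      intro l
      by_cases hl : l ∈ PL κ (L + 1)
      · exact h' l hl
      · rw [hF.1 l hl, hG.1 l hl]
    obtain ⟨Fp, Fu⟩ := F
    obtain ⟨Gp, Gu⟩ := G
    congr 1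
    · funext i k; exact h2 (i, true, k)
    · funext i k; exact h2 (i, false, k)
  have himg : ∑ᶠ Cs ∈ (↑(ColLists (kk κ) n (PL κ (L + 1))) : Set (List (List ℤ))),
      Wcol (tt n) (kk κ) (relL κ) (cc n κ) n (PL κ (L + 1)) Cs =
      ∑ᶠ Cs ∈ (fun F => (PL κ (L + 1)).map (col F)) '' FSet n lam,
      Wcol (tt n) (kk κ) (relL κ) (cc n κ) n (PL κ (L + 1)) Cs := by
    refine finsum_mem_inter_support_eq' _ _ _ fun Cs hCs => ?_
    rw [Function.mem_support] at hCs
    constructor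
    · intro h
      have h := Finset.mem_coe.1 h
      obtain ⟨g, rfl⟩ := exists_map_of_nodup (PL κ (L + 1)) Cs (nodup_PL _)
        ((mem_ColLists _ _ _ _).1 h).length_eq.symm
      rw [map_mem_ColLists] at h
      have hg : (PL κ (L + 1)).map
          (col (ofCol (fun l => if l ∈ PL κ (L + 1) then g l else []))) =
          (PL κ (L + 1)).map g := by
        rw [col_ofCol]
        exact List.map_congr_left fun l hl => if_pos hl
      refine ⟨ofCol (fun l => if l ∈ PL κ (L + 1) then g l else []), ?_, hg⟩
      rw [← hg, hW] at hCs
      rw [hmem]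
      refine ⟨?_, ?_, ?_⟩
      · intro l hl
        rw [col_ofCol, if_neg hl]
      · intro l hl
        rw [col_ofCol, if_pos hl]
        exact h l hl
      · by_contra hne
        rw [if_neg hne] at hCs
        exact hCs rfl
    · rintro ⟨F, hF, rfl⟩
      refine Finset.mem_coe.2 ((map_mem_ColLists _ _ _ _).2 ((hmem F).1 hF).2.1)
  rw [himg, finsum_mem_image hinj]
  refine finsum_mem_congr rfl fun F hF => ?_
  rw [hW, if_pos ((hmem F).1 hF).2.2, single_eq, ctQ_eq hn hpos F hL, xx_sum, Nsigma, desSigma,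
    colList_eq lam F hL]
  rfl

/-! ### The two sides of the identity -/

/-- The term of a pair `(w,T)` of the left-hand side, extended by zero to the pairs that are not
admissible. -/
lemma term_eq {n : ℕ} (lam : Fin n → ℕ) (w : List ℤ) (J : Finset ℕ) :
    aterm n (lamVec n lam) w ((J.sort (· ≤ ·)).map (annotAt (lambdaChain n lam))) =
      if decChain w (selChain (lambdaChain n lam) J) = true then
        (AddMonoidAlgebra.single
        (fun r : Fin n =>
          ((wAct n w (muJ n (lambdaChain n lam) (lamVec n lam) J) r : ℤ) : ℚ))
        ((Polynomial.X : Polynomial ℤ) ^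
            ((len w + len (applyAll w (selChain (lambdaChain n lam) J)) - J.card) / 2) *
          (1 - Polynomial.X) ^ J.card) : AR n) else 0 := by
  have e1 : ((J.sort (· ≤ ·)).map (annotAt (lambdaChain n lam))).map Prod.fst =
      selChain (lambdaChain n lam) J := by
    rw [List.map_map]
    rfl
  have e2 : ((J.sort (· ≤ ·)).map (annotAt (lambdaChain n lam))).length = J.card := by
    rw [List.length_map, Finset.length_sort]
  rw [aterm, e1, e2, single_eq, wAct_cast, List.foldr_map]
  rfl

/-- The left-hand side, summed over the finite set of all pairs. -/
lemma lhs_eq {n : ℕ} (lam : Fin n → ℕ) :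
    (∑ᶠ (p : List ℤ × Finset ℕ) (_ : p ∈ ASet n lam),
      (AddMonoidAlgebra.single
        (fun r : Fin n =>
          ((wAct n p.1 (muJ n (lambdaChain n lam) (lamVec n lam) p.2) r : ℤ) : ℚ))
        ((Polynomial.X : Polynomial ℤ) ^
            ((len p.1 + len (applyAll p.1 (selChain (lambdaChain n lam) p.2)) - p.2.card) / 2) *
          (1 - Polynomial.X) ^ p.2.card) : AR n)) =
    ∑ w ∈ allWindows n, ∑ J ∈ (Finset.range (lambdaChain n lam).length).powerset,
      aterm n (lamVec n lam) w ((J.sort (· ≤ ·)).map (annotAt (lambdaChain n lam))) := by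
  classical
  rw [← Finset.sum_product']
  simp only [term_eq]
  rw [← Finset.sum_filter (s := allWindows n ×ˢ (Finset.range (lambdaChain n lam).length).powerset)
    (p := fun p => decChain p.1 (selChain (lambdaChain n lam) p.2) = true)]
  rw [← finsum_mem_coe_finset]
  refine finsum_mem_congr ?_ fun _ _ => rfl
  ext p
  simp [ASet, and_assoc]

/-- Theorem 2.1: the tableau formula for the Hall–Littlewood
polynomial `P_λ(x;t)` of type `C_n`, obtained by compressing Ram's version of
Schwer's formula.  Both sides are elements of `ℤ[t][x_1^{±1},...,x_n^{±1}]`,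
realized as the group algebra of `ℚ^n` over `ℤ[t]`. -/
theorem hall_littlewood_tableau_formula_typeC
    (n : ℕ) (hn : 2 ≤ n) (lam : Fin n → ℕ)
    (hstrict : ∀ i j : Fin n, i < j → lam j < lam i) (hpos : ∀ i, 0 < lam i) :
    (∑ᶠ (p : List ℤ × Finset ℕ) (_ : p ∈ ASet n lam),
      (AddMonoidAlgebra.single
        (fun r : Fin n =>
          ((wAct n p.1 (muJ n (lambdaChain n lam) (lamVec n lam) p.2) r : ℤ) : ℚ))
        ((Polynomial.X : Polynomial ℤ) ^
            ((len p.1 + len (applyAll p.1 (selChain (lambdaChain n lam) p.2)) - p.2.card) / 2) *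
          (1 - Polynomial.X) ^ p.2.card) :
        AddMonoidAlgebra (Polynomial ℤ) (Fin n → ℚ)))
    = ∑ᶠ (F : Filling) (_ : F ∈ FSet n lam),
        AddMonoidAlgebra.single (ctQ n lam F)
          ((Polynomial.X : Polynomial ℤ) ^ Nsigma n lam F *
            (1 - Polynomial.X) ^ desSigma n lam F) := by
  have hL0 := lamOne_pos (by omega) hpos
  obtain ⟨L, hL⟩ : ∃ L, lamOne n lam = L + 1 := ⟨lamOne n lam - 1, by omega⟩
  have hp : ∀ j ≤ L + 1, 1 ≤ conj n lam j := fun j hj => conj_pos (by omega) (by omega)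
  have hw : ∀ w ∈ allWindows n, ∑ J ∈ (Finset.range (lambdaChain n lam).length).powerset,
      aterm n (lamVec n lam) w ((J.sort (· ≤ ·)).map (annotAt (lambdaChain n lam))) =
      Lsum (tt n) (kk (conj n lam)) (segL n (conj n lam)) (cc n (conj n lam))
        (PL (conj n lam) (L + 1)) w := by
    intro w hw
    rw [mem_allWindows] at hw
    rw [sum_aterm hstrict hw, hL, EE_eq_Lsum (conj_le n lam) (conj_one hpos) hn L hp w hw]
  refine (lhs_eq lam).trans ?_
  rw [Finset.sum_congr rfl hw, sum_Lsum (conj_le n lam) (fun i j h => conj_anti n lam h)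
    (conj_one hpos) hn L hp]
  exact sum_cols_eq hn hpos hL

end HL
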